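/- arXiv:2408.01306 — 7 statements merged into one kernel-verified Lean document; each statement's English description precedes it below -/
import Mathlib

section
/- Assume the abc conjecture: for every ε > 0 there exists a constant C_ε > 0 such that for all triples (x, y, z) of pairwise coprime positive integers with x + y = z, one has z < C_ε · rad(x·y·z)^{1+ε}, where rad(n) denotes the product of the distinct primes dividing n. Let l be a non-zero integer and let 0 < ε < 2/5. Then there exists a constant c > 0 depending only on ε and l such that for all positive integers 1 ≤ a < b, if a²(a²+l) divides b²(b²+l), then b ≥ c · a^{8/7 − ε}. -/
/-!
The hypothesis is used through an explicit factorization. Let `a₁ = gcd(a, b)`, `a = a₁a₂`,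
`b = a₁w`, and (for `a` large, so that `a² + l > 0`) `m₂ = gcd(a² + l, b² + l)`,
`a² + l = m₁m₂`. Since `a₂` is coprime to `w` and `m₁` is coprime to `(b² + l)/m₂`, the
divisibility `a²(a² + l) ∣ b²(b² + l)` forces `m₁ ∣ w²` and `b² + l = a₂²q·m₂` for some `q`
(`exists_factorization`). The identity `b²(a² + l) - a²(b² + l) = l(b² - a²)` then becomes
`m₂(w²m₁ - a₂⁴q) = l(w² - a₂²)`.

The two terms of `T = w²m₁ - a₂⁴q ≠ 0` have a greatest common divisor dividing `l`, and the
radical of `w²m₁ · a₂⁴q · T` is at most `w·a₂·q·|T|`, with `|T| ≤ |l|w²/m₂`. The abc conjecture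
therefore gives `a₂⁴q ≪ (a₂q·w³/m₂)^(1+η)`, that is `a³m₂ ≪ b^(3+6η)` (`abc_step`).
On the other hand `a₁²m₁ ∣ b²` and `a₂²m₁ ∣ a² + b² + l`, so `a·m₁ ≪ b²` (`mul_m_le`).
Multiplying, `a⁴(a² + l) ≪ b^(5+6η)`, and `η = 1/24` gives `a⁶ ≪ b^(21/4)`, which is
`b ≫ a^(8/7)`.
-/

/-- The squarefree kernel (radical) of a natural number: the product of the
distinct primes dividing `n`. -/
def rad (n : ℕ) : ℕ := ∏ p ∈ n.primeFactors, p

/-- The abc conjecture: for every `ε > 0` there is `C_ε > 0` such that for all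
pairwise coprime positive integers `x + y = z`, one has `z < C_ε · rad(xyz)^{1+ε}`. -/
def ABCConjecture : Prop :=
  ∀ ε : ℝ, 0 < ε → ∃ C : ℝ, 0 < C ∧
    ∀ x y z : ℕ, 0 < x → 0 < y → 0 < z →
      Nat.Coprime x y → Nat.Coprime y z → Nat.Coprime x z → x + y = z →
        (z : ℝ) < C * (rad (x * y * z) : ℝ) ^ ((1 : ℝ) + ε)

/-- A positive integer divisible by every prime factor of `n` bounds `rad n`. -/
lemma rad_le_of_prime_dvd {n M : ℕ} (hM : 0 < M)
    (h : ∀ p : ℕ, p.Prime → p ∣ n → p ∣ M) : rad n ≤ M := by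
  have hsub : n.primeFactors ⊆ M.primeFactors := by
    intro p hp
    exact Nat.mem_primeFactors.2 ⟨Nat.prime_of_mem_primeFactors hp,
      h p (Nat.prime_of_mem_primeFactors hp) (Nat.dvd_of_mem_primeFactors hp), hM.ne'⟩
  unfold rad
  exact Nat.le_of_dvd hM
    ((Finset.prod_dvd_prod_of_subset _ _ _ hsub).trans (Nat.prod_primeFactors_dvd M))

/-- The abc inequality for a difference of coprime numbers, in either order. -/
lemma abc_diff (habc : ABCConjecture) {ε : ℝ} (hε : 0 < ε) :
    ∃ C : ℝ, 0 < C ∧ ∀ X Y : ℕ, 0 < X → 0 < Y → Nat.Coprime X Y → X ≠ Y →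
      (Y : ℝ) < C * (rad (X * Y * ((X : ℤ) - Y).natAbs) : ℝ) ^ (1 + ε) := by
  obtain ⟨C, hC, h⟩ := habc ε hε
  refine ⟨C, hC, fun X Y hX hY hXY hne => ?_⟩
  rcases lt_or_gt_of_ne hne with hlt | hlt
  · obtain ⟨d, rfl⟩ := Nat.exists_eq_add_of_lt hlt
    have hd : ((X : ℤ) - ((X + d + 1 : ℕ) : ℤ)).natAbs = d + 1 := by
      push_cast; omega
    have hc : Nat.Coprime X (d + 1) := by
      rw [add_assoc] at hXY; simpa using hXY
    have := h X (d + 1) (X + d + 1) hX (by omega) (by omega) hc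
      (by rw [add_assoc]; simpa using hc.symm) hXY (by omega)
    rw [hd, mul_right_comm]
    exact this
  · obtain ⟨d, rfl⟩ := Nat.exists_eq_add_of_lt hlt
    have hd : (((Y + d + 1 : ℕ) : ℤ) - (Y : ℤ)).natAbs = d + 1 := by
      push_cast; omega
    have hc : Nat.Coprime Y (d + 1) := by
      rw [add_assoc] at hXY; simpa using hXY.symm
    have := h Y (d + 1) (Y + d + 1) hY (by omega) (by omega) hc
      (by rw [add_assoc]; simpa using hc.symm) hXY.symm (by omega)
    rw [hd, show (Y + d + 1) * Y * (d + 1) = Y * (d + 1) * (Y + d + 1) by ring]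
    refine lt_of_le_of_lt ?_ this
    exact_mod_cast (by omega : Y ≤ Y + d + 1)

/-- The factorization behind `a²A ∣ b²B`: here `a₁ = gcd(a, b)` and `m₂ = gcd(A, B)`, and
coprimality pushes the remaining factors of `a²A` into `(b/a₁)²` and `B/m₂`. -/
lemma exists_factorization {a b A B : ℕ} (ha : 0 < a) (hA : 0 < A)
    (h : a ^ 2 * A ∣ b ^ 2 * B) :
    ∃ a₁ a₂ w m₁ m₂ q : ℕ, a = a₁ * a₂ ∧ b = a₁ * w ∧ A = m₁ * m₂ ∧
      B = a₂ ^ 2 * q * m₂ ∧ m₁ ∣ w ^ 2 ∧ Nat.Coprime a₂ w ∧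
      Nat.Coprime m₁ (a₂ ^ 2 * q) := by
  obtain ⟨a₂, w, hcop, ha', hb'⟩ := Nat.exists_coprime a b
  obtain ⟨m₁, n, hmn, hA', hB'⟩ := Nat.exists_coprime A B
  have hg : 0 < a.gcd b := Nat.gcd_pos_of_pos_left _ ha
  have hm : 0 < A.gcd B := Nat.gcd_pos_of_pos_left _ hA
  generalize a.gcd b = a₁ at *
  generalize A.gcd B = m₂ at *
  subst ha' hb' hA' hB'
  have h2 : a₂ ^ 2 * m₁ ∣ w ^ 2 * n := by
    apply Nat.dvd_of_mul_dvd_mul_left (show 0 < a₁ ^ 2 * m₂ by positivity)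
    convert h using 1 <;> ring
  have hw : m₁ ∣ w ^ 2 := hmn.dvd_of_dvd_mul_right ((Dvd.intro_left _ rfl).trans h2)
  have hn : a₂ ^ 2 ∣ n :=
    (Nat.Coprime.pow 2 2 hcop).dvd_of_dvd_mul_left ((Dvd.intro _ rfl).trans h2)
  obtain ⟨q, rfl⟩ := hn
  exact ⟨a₁, a₂, w, m₁, m₂, q, by ring, by ring, rfl, rfl, hw, hcop, hmn⟩

/-- Upper bound for the part `m₁` of `a² + l` that is coprime to `b² + l`: both `a₁²m₁` and
`a₂²m₁` are `O(b²)`, since they divide `b²` and `a² + b² + l` respectively. -/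
lemma mul_m_le {l L : ℤ} {a₁ a₂ w m₁ m₂ q : ℕ} (hL : L = |l| + 2)
    (hb : 0 < a₁ * w) (hab : a₁ * a₂ < a₁ * w)
    (hA : ((m₁ * m₂ : ℕ) : ℤ) = ((a₁ * a₂ : ℕ) : ℤ) ^ 2 + l)
    (hB : ((a₂ ^ 2 * q * m₂ : ℕ) : ℤ) = ((a₁ * w : ℕ) : ℤ) ^ 2 + l)
    (hw : m₁ ∣ w ^ 2) (hc : Nat.Coprime a₂ w) (hApos : 0 < m₁ * m₂) :
    ((a₁ * a₂ * m₁ : ℕ) : ℤ) ≤ L * ((a₁ * w : ℕ) : ℤ) ^ 2 := by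
  have hlabs := le_abs_self l
  have hl0 := abs_nonneg l
  have hb1 : (1 : ℤ) ≤ ((a₁ * w : ℕ) : ℤ) := by exact_mod_cast hb
  have hab' : ((a₁ * a₂ : ℕ) : ℤ) < ((a₁ * w : ℕ) : ℤ) := by exact_mod_cast hab
  have ha0 : (0 : ℤ) ≤ ((a₁ * a₂ : ℕ) : ℤ) := by positivity
  have h1 : a₁ ^ 2 * m₁ ≤ (a₁ * w) ^ 2 := by
    rw [mul_pow]
    exact Nat.le_of_dvd (by rw [← mul_pow]; positivity) (mul_dvd_mul_left _ hw)
  have h2 : a₂ ^ 2 * m₁ ≤ (a₁ * a₂) ^ 2 + a₂ ^ 2 * q * m₂ := by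
    apply Nat.le_of_dvd
    · have : ((((a₁ * a₂) ^ 2 + a₂ ^ 2 * q * m₂ : ℕ)) : ℤ)
          = ((m₁ * m₂ : ℕ) : ℤ) + ((a₁ * w : ℕ) : ℤ) ^ 2 := by
        rw [hA, Nat.cast_add, hB]; push_cast; ring
      have h3 : (0 : ℤ) < ((m₁ * m₂ : ℕ) : ℤ) := by exact_mod_cast hApos
      have : (0 : ℤ) < ((((a₁ * a₂) ^ 2 + a₂ ^ 2 * q * m₂ : ℕ)) : ℤ) := by
        rw [this]; positivity
      exact_mod_cast this
    · have hcm : Nat.Coprime (a₂ ^ 2) m₁ :=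
        Nat.Coprime.coprime_dvd_right hw (Nat.Coprime.pow 2 2 hc)
      apply hcm.mul_dvd_of_dvd_of_dvd
      · exact dvd_add (by rw [mul_pow]; exact Dvd.intro_left _ rfl)
          (by rw [mul_assoc]; exact Dvd.intro _ rfl)
      · have : (a₁ * a₂) ^ 2 + a₂ ^ 2 * q * m₂ = m₁ * m₂ + a₁ ^ 2 * w ^ 2 := by
          zify; push_cast at hA hB; rw [hA, hB]; ring
        rw [this]
        exact dvd_add (Dvd.intro _ rfl) (hw.mul_left _)
  have h1' : (a₁ : ℤ) ^ 2 * m₁ ≤ ((a₁ * w : ℕ) : ℤ) ^ 2 := by exact_mod_cast h1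
  have h2' : (a₂ : ℤ) ^ 2 * m₁ ≤ ((a₁ * a₂ : ℕ) : ℤ) ^ 2 + (((a₁ * w : ℕ) : ℤ) ^ 2 + l) := by
    rw [← hB]; exact_mod_cast h2
  have h3 : 2 * ((a₁ : ℤ) * a₂ * m₁) ≤ (a₁ : ℤ) ^ 2 * m₁ + (a₂ : ℤ) ^ 2 * m₁ := by
    have := mul_nonneg (sq_nonneg ((a₁ : ℤ) - a₂)) (Int.natCast_nonneg m₁)
    linarith
  have h4 : ((a₁ * a₂ * m₁ : ℕ) : ℤ) = (a₁ : ℤ) * a₂ * m₁ := by push_cast; ring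
  rw [h4]
  generalize ((a₁ * w : ℕ) : ℤ) = β at *
  generalize ((a₁ * a₂ : ℕ) : ℤ) = α at *
  have h5 : α ^ 2 ≤ β ^ 2 := by nlinarith
  have h6 : |l| ≤ |l| * β ^ 2 := le_mul_of_one_le_right hl0 (one_le_pow₀ hb1)
  subst hL
  nlinarith

/-- The abc conjecture applied to `w²m₁ - a₂⁴q = T`, where `m₂T = l(w² - a₂²)`, after division
by the greatest common divisor of the terms, which divides `l`. -/
lemma abc_step (habc : ABCConjecture) (l : ℤ) (hl : l ≠ 0) :
    ∃ K : ℝ, 0 < K ∧ ∀ a₁ a₂ w m₁ m₂ q : ℕ, 0 < a₁ * a₂ → a₁ * a₂ < a₁ * w →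
      0 < m₁ * m₂ →
      ((m₁ * m₂ : ℕ) : ℤ) = ((a₁ * a₂ : ℕ) : ℤ) ^ 2 + l →
      ((a₂ ^ 2 * q * m₂ : ℕ) : ℤ) = ((a₁ * w : ℕ) : ℤ) ^ 2 + l →
      m₁ ∣ w ^ 2 → Nat.Coprime a₂ w → Nat.Coprime m₁ (a₂ ^ 2 * q) →
      ((a₁ * a₂ : ℕ) : ℝ) ^ 3 * m₂ ≤
        K * ((a₁ * w : ℕ) : ℝ) ^ 3 * ((a₁ * w : ℕ) : ℝ) ^ ((1 : ℝ) / 4) := by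
  obtain ⟨C, hC, habc'⟩ := abc_diff habc (ε := 1 / 24) (by norm_num)
  set L : ℝ := |(l : ℝ)| + 2 with hLdef
  have hlabs0 : 0 ≤ |(l : ℝ)| := abs_nonneg _
  have hL1 : 1 ≤ L := by linarith
  refine ⟨L ^ 2 * C * L ^ 2, by positivity, ?_⟩
  intro a₁ a₂ w m₁ m₂ q hapos hab hApos hA hB hw hc hc'
  have ha₁ : 0 < a₁ := Nat.pos_of_mul_pos_right hapos
  have ha₂ : 0 < a₂ := Nat.pos_of_mul_pos_left hapos
  have hm₁ : 0 < m₁ := Nat.pos_of_mul_pos_right hApos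
  have hm₂ : 0 < m₂ := Nat.pos_of_mul_pos_left hApos
  have haw : a₂ < w := lt_of_mul_lt_mul_left hab (Nat.zero_le _)
  have hw0 : 0 < w := by omega
  have hBpos : 0 < a₂ ^ 2 * q * m₂ := by
    have h1 : ((a₁ * a₂ : ℕ) : ℤ) < ((a₁ * w : ℕ) : ℤ) := by exact_mod_cast hab
    have h2 : (0 : ℤ) < ((m₁ * m₂ : ℕ) : ℤ) := by exact_mod_cast hApos
    have h3 : (0 : ℤ) ≤ ((a₁ * a₂ : ℕ) : ℤ) := by positivity
    have : (0 : ℤ) < ((a₂ ^ 2 * q * m₂ : ℕ) : ℤ) := by rw [hB]; nlinarith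
    exact_mod_cast this
  have hq : 0 < q := by
    rcases Nat.eq_zero_or_pos q with h | h
    · simp [h] at hBpos
    · exact h
  set U : ℕ := w ^ 2 * m₁ with hU
  set V : ℕ := a₂ ^ 4 * q with hV
  have hU0 : 0 < U := by positivity
  have hV0 : 0 < V := by positivity
  have hT : (m₂ : ℤ) * ((U : ℤ) - V) = l * ((w : ℤ) ^ 2 - a₂ ^ 2) := by
    push_cast [hU, hV] at hA hB ⊢
    linear_combination (w : ℤ) ^ 2 * hA - (a₂ : ℤ) ^ 2 * hB
  have hwa : (0 : ℤ) < (w : ℤ) ^ 2 - a₂ ^ 2 := by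
    have : (a₂ : ℤ) < w := by exact_mod_cast haw
    nlinarith
  have hT0 : (U : ℤ) - V ≠ 0 := by
    intro h0
    rw [h0, mul_zero] at hT
    exact (mul_ne_zero hl hwa.ne') hT.symm
  obtain ⟨X, Y, hXY, hX, hY⟩ := Nat.exists_coprime U V
  have hg0 : 0 < U.gcd V := Nat.gcd_pos_of_pos_left _ hU0
  have hgl : ((U.gcd V : ℕ) : ℤ) ∣ l := by
    have hcm : Nat.Coprime a₂ m₁ :=
      Nat.Coprime.coprime_dvd_right hw (Nat.Coprime.pow_right 2 hc)
    have h1 : Nat.Coprime U (a₂ ^ 4) :=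
      Nat.Coprime.pow_right 4 (Nat.Coprime.mul_left (Nat.Coprime.pow_left 2 hc.symm) hcm.symm)
    have hgq : U.gcd V ∣ q :=
      (Nat.Coprime.coprime_dvd_left (Nat.gcd_dvd_left U V) h1).dvd_of_dvd_mul_left
        (Nat.gcd_dvd_right U V)
    have hgm : Nat.Coprime (U.gcd V) m₁ :=
      (Nat.Coprime.coprime_dvd_right (hgq.mul_left (a₂ ^ 2)) hc').symm
    have hgw : U.gcd V ∣ w ^ 2 := hgm.dvd_of_dvd_mul_right (Nat.gcd_dvd_left U V)
    have h2 : ((U.gcd V : ℕ) : ℤ) ∣ ((a₂ ^ 2 * q * m₂ : ℕ) : ℤ) :=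
      Int.natCast_dvd_natCast.2 ((hgq.mul_left _).mul_right _)
    have h3 : ((U.gcd V : ℕ) : ℤ) ∣ ((a₁ * w : ℕ) : ℤ) ^ 2 := by
      rw [← Nat.cast_pow, mul_pow]
      exact Int.natCast_dvd_natCast.2 (hgw.mul_left _)
    rw [hB] at h2
    exact (dvd_add_right h3).1 h2
  have hgL : ((U.gcd V : ℕ) : ℝ) ≤ L := by
    have h1 := Int.le_of_dvd (abs_pos.2 hl) ((dvd_abs _ _).2 hgl)
    have h2 : ((U.gcd V : ℕ) : ℝ) ≤ |(l : ℝ)| := by exact_mod_cast h1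
    linarith
  generalize U.gcd V = g at *
  have hX0 : 0 < X := Nat.pos_of_ne_zero (by rintro rfl; omega)
  have hY0 : 0 < Y := Nat.pos_of_ne_zero (by rintro rfl; omega)
  have hTg : (U : ℤ) - V = ((X : ℤ) - Y) * g := by
    rw [hX, hY]; push_cast; ring
  have hne : X ≠ Y := by
    rintro rfl
    apply hT0; rw [hTg]; ring
  have key := habc' X Y hX0 hY0 hXY hne
  set τ : ℕ := ((U : ℤ) - V).natAbs with hτ
  have hτ0 : 0 < τ := Int.natAbs_pos.2 hT0
  -- The exponents in `w²m₁` and `a₂⁴` disappear in the radical.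
  have hrad : rad (X * Y * ((X : ℤ) - Y).natAbs) ≤ w * a₂ * q * τ := by
    apply rad_le_of_prime_dvd (by positivity)
    intro p hp hpd
    rcases hp.dvd_mul.1 hpd with h | h
    · rcases hp.dvd_mul.1 h with h | h
      · have : p ∣ w ^ 2 * m₁ := by rw [← hU, hX]; exact h.mul_right _
        have hpw : p ∣ w := by
          rcases hp.dvd_mul.1 this with h | h
          · exact hp.dvd_of_dvd_pow h
          · exact hp.dvd_of_dvd_pow (h.trans hw)
        exact ((hpw.mul_right _).mul_right _).mul_right _
      · have : p ∣ a₂ ^ 4 * q := by rw [← hV, hY]; exact h.mul_right _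
        rcases hp.dvd_mul.1 this with h | h
        · exact (((hp.dvd_of_dvd_pow h).mul_left _).mul_right _).mul_right _
        · exact (h.mul_left _).mul_right _
    · have : τ = ((X : ℤ) - Y).natAbs * g := by
        rw [hτ, hTg, Int.natAbs_mul, Int.natAbs_natCast]
      rw [this]
      exact (h.mul_right _).mul_left _
  have hτm : (m₂ : ℝ) * τ ≤ L * (w : ℝ) ^ 2 := by
    have h1 : (m₂ : ℤ) * τ = |l| * ((w : ℤ) ^ 2 - a₂ ^ 2) := by
      rw [hτ, Int.natCast_natAbs, ← abs_of_pos hwa, ← abs_mul, ← hT, abs_mul,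
        abs_of_nonneg (Int.natCast_nonneg m₂)]
    have h2 : (m₂ : ℝ) * τ = |(l : ℝ)| * ((w : ℝ) ^ 2 - a₂ ^ 2) := by exact_mod_cast h1
    rw [h2]
    have h3 : (0 : ℝ) ≤ (a₂ : ℝ) ^ 2 := by positivity
    have h4 : (0 : ℝ) ≤ (w : ℝ) ^ 2 := by positivity
    nlinarith
  set b : ℝ := ((a₁ * w : ℕ) : ℝ) with hb
  have hb1 : 1 ≤ b := by
    rw [hb]; exact_mod_cast Nat.one_le_iff_ne_zero.2 (by positivity)
  have hwb : (w : ℝ) ≤ b := by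
    rw [hb]; exact_mod_cast Nat.le_mul_of_pos_left w ha₁
  have ha₂b : (a₂ : ℝ) ≤ b := by
    have : (a₂ : ℝ) ≤ w := by exact_mod_cast haw.le
    linarith
  have hτb : (τ : ℝ) ≤ L * b ^ 2 := by
    have h1 : (1 : ℝ) ≤ m₂ := by exact_mod_cast hm₂
    have h2 : (0 : ℝ) ≤ τ := by positivity
    have h3 : (w : ℝ) ^ 2 ≤ b ^ 2 := by gcongr
    nlinarith
  have hqb : (q : ℝ) ≤ L * b ^ 2 := by
    have h1 : q ≤ a₂ ^ 2 * q * m₂ := by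
      calc q = 1 * q * 1 := by ring
        _ ≤ a₂ ^ 2 * q * m₂ := by gcongr <;> first | exact hm₂ | exact Nat.one_le_pow _ _ ha₂
    have h2 : (((a₂ ^ 2 * q * m₂ : ℕ) : ℤ) : ℝ) = b ^ 2 + l := by
      rw [hB, hb]; push_cast; ring
    have h3 : (q : ℝ) ≤ (((a₂ ^ 2 * q * m₂ : ℕ) : ℤ) : ℝ) := by exact_mod_cast h1
    have h4 := le_abs_self (l : ℝ)
    have h5 : 1 ≤ b ^ 2 := one_le_pow₀ hb1
    nlinarith
  set R : ℝ := (w : ℝ) * a₂ * q * τ with hR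
  have hR0 : 0 < R := by positivity
  have hRb : R ≤ L ^ 2 * b ^ 6 := by
    calc R ≤ b * b * (L * b ^ 2) * (L * b ^ 2) := by rw [hR]; gcongr
      _ = L ^ 2 * b ^ 6 := by ring
  have hRε : R ^ ((1 : ℝ) / 24) ≤ L ^ 2 * b ^ ((1 : ℝ) / 4) := by
    have hb0 : 0 ≤ b := by linarith
    calc R ^ ((1 : ℝ) / 24) ≤ (L ^ 2 * b ^ 6) ^ ((1 : ℝ) / 24) := by gcongr
      _ = (L ^ 2) ^ ((1 : ℝ) / 24) * b ^ ((1 : ℝ) / 4) := by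
        rw [Real.mul_rpow (by positivity) (by positivity), ← Real.rpow_natCast b 6,
          ← Real.rpow_mul hb0]
        norm_num
      _ ≤ L ^ 2 * b ^ ((1 : ℝ) / 4) := by
        gcongr
        exact Real.rpow_le_self_of_one_le (one_le_pow₀ hL1) (by norm_num)
  have hYR : (Y : ℝ) ≤ C * (R * (L ^ 2 * b ^ ((1 : ℝ) / 4))) := by
    have h1 : (rad (X * Y * ((X : ℤ) - Y).natAbs) : ℝ) ≤ R := by
      rw [hR]; exact_mod_cast hrad
    calc (Y : ℝ) ≤ C * (rad (X * Y * ((X : ℤ) - Y).natAbs) : ℝ) ^ ((1 : ℝ) + 1 / 24) := key.le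
      _ ≤ C * R ^ ((1 : ℝ) + 1 / 24) := by gcongr
      _ = C * (R * R ^ ((1 : ℝ) / 24)) := by rw [Real.rpow_add hR0, Real.rpow_one]
      _ ≤ _ := by gcongr
  set S : ℝ := b ^ ((1 : ℝ) / 4) with hS
  have hS0 : 0 < S := by positivity
  have hVr : (a₂ : ℝ) ^ 4 * q = Y * g := by
    have : a₂ ^ 4 * q = Y * g := hY
    exact_mod_cast this
  have hVR : (a₂ : ℝ) ^ 4 * q ≤ C * (R * (L ^ 2 * S)) * L := by
    rw [hVr]; gcongr
  have h3 : (a₂ : ℝ) ^ 3 * m₂ ≤ L ^ 2 * C * L ^ 2 * w ^ 3 * S := by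
    have hpos : (0 : ℝ) < a₂ * q := by positivity
    refine le_of_mul_le_mul_left ?_ hpos
    calc (a₂ : ℝ) * q * ((a₂ : ℝ) ^ 3 * m₂) = (a₂ : ℝ) ^ 4 * q * m₂ := by ring
      _ ≤ C * (R * (L ^ 2 * S)) * L * m₂ := by gcongr
      _ = C * L ^ 3 * S * w * a₂ * q * (m₂ * τ) := by rw [hR]; ring
      _ ≤ C * L ^ 3 * S * w * a₂ * q * (L * (w : ℝ) ^ 2) := by gcongr
      _ = _ := by ring
  calc ((a₁ * a₂ : ℕ) : ℝ) ^ 3 * m₂ = (a₁ : ℝ) ^ 3 * ((a₂ : ℝ) ^ 3 * m₂) := by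
        push_cast; ring
    _ ≤ (a₁ : ℝ) ^ 3 * (L ^ 2 * C * L ^ 2 * w ^ 3 * S) := by gcongr
    _ = _ := by rw [hb]; push_cast; ring

/-- The case where `a` is large in terms of `l`, with no loss in the exponent. -/
lemma large_case (habc : ABCConjecture) (l : ℤ) (hl : l ≠ 0) :
    ∃ M : ℝ, 0 < M ∧ ∀ a b : ℕ, 1 ≤ a → a < b → 2 * |l| ≤ (a : ℤ) ^ 2 →
      (a : ℤ) ^ 2 * ((a : ℤ) ^ 2 + l) ∣ (b : ℤ) ^ 2 * ((b : ℤ) ^ 2 + l) →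
        (a : ℝ) ^ ((8 : ℝ) / 7) ≤ M * b := by
  obtain ⟨K, hK, hstep⟩ := abc_step habc l hl
  have hL0 : 0 < |(l : ℝ)| + 2 := by positivity
  refine ⟨(2 * K * (|(l : ℝ)| + 2)) ^ ((4 : ℝ) / 21), by positivity, ?_⟩
  intro a b ha hab hla hdvd
  have hab' : (a : ℤ) < b := by exact_mod_cast hab
  have ha' : (1 : ℤ) ≤ a := by exact_mod_cast ha
  have hnl := neg_abs_le l
  have hlp := abs_pos.2 hl
  have hA0 : 0 < (a : ℤ) ^ 2 + l := by linarith
  have hB0 : 0 < (b : ℤ) ^ 2 + l := by nlinarith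
  obtain ⟨A, hA⟩ := Int.eq_ofNat_of_zero_le hA0.le
  obtain ⟨B, hB⟩ := Int.eq_ofNat_of_zero_le hB0.le
  rw [hA, hB] at hdvd
  have hApos : 0 < A := by rw [hA] at hA0; exact_mod_cast hA0
  have hdvd' : a ^ 2 * A ∣ b ^ 2 * B := by exact_mod_cast hdvd
  obtain ⟨a₁, a₂, w, m₁, m₂, q, rfl, rfl, rfl, rfl, hw, hc, hc'⟩ :=
    exists_factorization ha hApos hdvd'
  have h1 := hstep a₁ a₂ w m₁ m₂ q ha hab hApos hA.symm hB.symm hw hc hc'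
  have h2 := mul_m_le rfl (by omega) hab hA.symm hB.symm hw hc hApos
  have h2' : ((a₁ * a₂ : ℕ) : ℝ) * m₁ ≤ (|(l : ℝ)| + 2) * ((a₁ * w : ℕ) : ℝ) ^ 2 := by
    rw [Nat.cast_mul (a₁ * a₂) m₁] at h2
    exact_mod_cast h2
  have h3 : ((a₁ * a₂ : ℕ) : ℝ) ^ 2 ≤ 2 * ((m₁ : ℝ) * m₂) := by
    have : ((a₁ * a₂ : ℕ) : ℤ) ^ 2 ≤ 2 * ((m₁ * m₂ : ℕ) : ℤ) := by
      linarith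
    rw [Nat.cast_mul m₁ m₂] at this
    exact_mod_cast this
  have hb0 : (0 : ℝ) < ((a₁ * w : ℕ) : ℝ) := by
    exact_mod_cast (by omega : 0 < a₁ * w)
  have ha0 : (0 : ℝ) ≤ ((a₁ * a₂ : ℕ) : ℝ) := Nat.cast_nonneg _
  generalize ((a₁ * a₂ : ℕ) : ℝ) = α at *
  generalize ((a₁ * w : ℕ) : ℝ) = β at *
  set L : ℝ := |(l : ℝ)| + 2 with hL
  have hβ : β ^ 5 * β ^ ((1 : ℝ) / 4) = β ^ ((21 : ℝ) / 4) := by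
    rw [← Real.rpow_natCast β 5, ← Real.rpow_add hb0]
    norm_num
  have h6 : α ^ 6 ≤ 2 * K * L * β ^ ((21 : ℝ) / 4) := by
    calc α ^ 6 = α ^ 4 * α ^ 2 := by ring
      _ ≤ α ^ 4 * (2 * ((m₁ : ℝ) * m₂)) := by gcongr
      _ = 2 * (α * m₁) * (α ^ 3 * m₂) := by ring
      _ ≤ 2 * (L * β ^ 2) * (K * β ^ 3 * β ^ ((1 : ℝ) / 4)) := by gcongr
      _ = 2 * K * L * (β ^ 5 * β ^ ((1 : ℝ) / 4)) := by ring
      _ = _ := by rw [hβ]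
  calc α ^ ((8 : ℝ) / 7) = (α ^ 6) ^ ((4 : ℝ) / 21) := by
        rw [← Real.rpow_natCast α 6, ← Real.rpow_mul ha0]
        norm_num
    _ ≤ (2 * K * L * β ^ ((21 : ℝ) / 4)) ^ ((4 : ℝ) / 21) := by gcongr
    _ = (2 * K * L) ^ ((4 : ℝ) / 21) * β := by
        rw [Real.mul_rpow (by positivity) (by positivity), ← Real.rpow_mul hb0.le]
        norm_num

/-- Theorem 4: under the abc conjecture, for a non-zero integer `l` and
`0 < ε < 2/5`, if `a²(a²+l) ∣ b²(b²+l)` with `1 ≤ a < b`, then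
`b ≥ c · a^{8/7 − ε}` for some `c = c(ε, l) > 0`. -/
theorem stmt_4 (habc : ABCConjecture) (l : ℤ) (hl : l ≠ 0) (ε : ℝ)
    (hε0 : 0 < ε) (hε : ε < 2 / 5) :
    ∃ c : ℝ, 0 < c ∧ ∀ a b : ℕ, 1 ≤ a → a < b →
      (a : ℤ) ^ 2 * ((a : ℤ) ^ 2 + l) ∣ (b : ℤ) ^ 2 * ((b : ℤ) ^ 2 + l) →
        (b : ℝ) ≥ c * (a : ℝ) ^ ((8 : ℝ) / 7 - ε) := by
  obtain ⟨M, hM, hlarge⟩ := large_case habc l hl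
  have hl1 : 0 < |(l : ℝ)| := abs_pos.2 (by exact_mod_cast hl)
  refine ⟨min M⁻¹ (2 * |(l : ℝ)|)⁻¹, by positivity, ?_⟩
  intro a b ha hab hdvd
  have ha1 : (1 : ℝ) ≤ a := by exact_mod_cast ha
  have hb1 : (1 : ℝ) ≤ b := by exact_mod_cast (by omega : 1 ≤ b)
  rcases le_or_gt (2 * |l|) ((a : ℤ) ^ 2) with hcase | hcase
  · calc min M⁻¹ (2 * |(l : ℝ)|)⁻¹ * (a : ℝ) ^ ((8 : ℝ) / 7 - ε)
        ≤ M⁻¹ * (a : ℝ) ^ ((8 : ℝ) / 7) := by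
          gcongr
          · exact min_le_left _ _
          · linarith
      _ ≤ M⁻¹ * (M * b) := by
          gcongr
          exact hlarge a b ha hab hcase hdvd
      _ = b := by field_simp
  -- For the finitely many remaining `a`, the bound `b ≥ 1` suffices.
  · have hcase' : (a : ℝ) ^ 2 ≤ 2 * |(l : ℝ)| := by exact_mod_cast hcase.le
    calc min M⁻¹ (2 * |(l : ℝ)|)⁻¹ * (a : ℝ) ^ ((8 : ℝ) / 7 - ε)
        ≤ (2 * |(l : ℝ)|)⁻¹ * (a : ℝ) ^ (2 : ℝ) := by
          gcongr
          · exact min_le_right _ _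
          · linarith
      _ ≤ (2 * |(l : ℝ)|)⁻¹ * (2 * |(l : ℝ)|) := by
          rw [Real.rpow_two]; gcongr
      _ = 1 := by field_simp
      _ ≤ b := hb1
end

section
/- There are infinitely many pairs of positive integers (a, b) with a < b satisfying b(b+1) = 2·a(a+1). -/
/-!
With `x = 2b + 1`, `y = 2a + 1` the equation becomes the negative Pell equation `x² - 2y² = -1`.
Multiplying `x + y√2` by the unit `3 + 2√2` of norm `1` sends a solution `(a, b)` to the larger
solution `(3a + 2b + 2, 4a + 3b + 3)`, so starting from `(2, 3)` there are solutions with `a`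
arbitrarily large.
-/

lemma exists_solution_gt (n : ℕ) :
    ∃ a b : ℕ, n < a ∧ a < b ∧ b * (b + 1) = 2 * (a * (a + 1)) := by
  induction n with
  | zero => exact ⟨2, 3, by norm_num⟩
  | succ n ih =>
    obtain ⟨a, b, hn, hab, h⟩ := ih
    exact ⟨3 * a + 2 * b + 2, 4 * a + 3 * b + 3, by omega, by omega, by linarith⟩

/-- There are infinitely many pairs of positive integers `(a, b)` with `a < b`
satisfying `b(b+1) = 2·a(a+1)`. -/
theorem stmt_5 :
    {p : ℕ × ℕ | 0 < p.1 ∧ p.1 < p.2 ∧ p.2 * (p.2 + 1) = 2 * (p.1 * (p.1 + 1))}.Infinite := by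
  refine Set.Infinite.of_image Prod.fst (Set.infinite_of_forall_exists_gt fun n => ?_)
  obtain ⟨a, b, hn, hab, h⟩ := exists_solution_gt n
  exact ⟨a, ⟨(a, b), ⟨by omega, hab, h⟩, rfl⟩, hn⟩
end

section
/- Let l ≥ 1 and t ≥ 2 be integers, and let a < b be positive integers with b(b+l)(b+2l) = t·a(a+l)(a+2l). Set x = a + l, y = b + l, D = gcd(x, y), u = x/D, and v = y/D. Then D²·(v³ − t·u³) = (v − t·u)·l²; in particular D² divides (v − t·u)·l². -/
/-- Initial transformation: with `x = a+l`, `y = b+l`, `D = gcd(x,y)`, `u = x/D`,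
`v = y/D`, the equation `b(b+l)(b+2l) = t·a(a+l)(a+2l)` gives
`D²(v³ − tu³) = (v − tu)l²`; in particular `D² ∣ (v − tu)l²`. -/
theorem stmt_7 (l t a b : ℤ) (hl : 1 ≤ l) (ht : 2 ≤ t) (ha : 0 < a) (hab : a < b)
    (heq : b * (b + l) * (b + 2 * l) = t * (a * (a + l) * (a + 2 * l)))
    (x y D u v : ℤ) (hx : x = a + l) (hy : y = b + l) (hD : D = Int.gcd x y)
    (hu : u = x / D) (hv : v = y / D) :
    D ^ 2 * (v ^ 3 - t * u ^ 3) = (v - t * u) * l ^ 2 ∧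
      D ^ 2 ∣ (v - t * u) * l ^ 2 := by
  have hxD : x = D * u := by
    rw [hu, Int.mul_ediv_cancel' (hD ▸ Int.gcd_dvd_left x y)]
  have hyD : y = D * v := by
    rw [hv, Int.mul_ediv_cancel' (hD ▸ Int.gcd_dvd_right x y)]
  have hD0 : D ≠ 0 := by
    rintro rfl
    rw [zero_mul] at hxD
    omega
  have key : D ^ 2 * (v ^ 3 - t * u ^ 3) = (v - t * u) * l ^ 2 := by
    -- In the centred variables the equation is `y³ - l²y = t(x³ - l²x)`; substituting
    -- `x = Du`, `y = Dv` leaves a common factor `D` to cancel.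
    apply mul_left_cancel₀ hD0
    obtain rfl : a = D * u - l := by omega
    obtain rfl : b = D * v - l := by omega
    linear_combination heq
  exact ⟨key, Dvd.intro _ key⟩
end

section
/- Let t, l be positive integers, let u and v be coprime positive integers, and let s be an integer such that v³ − t·u³ = −s and s divides (t·u − v)·l². Then s divides (t−1)·t·(t+1)·l². -/
/-!
Modulo `tu - v`, one has `s = tu³ - v³ ≡ tu³ - (tu)³ = -(t - 1)t(t + 1)u³`, so `s` divides
`u³(t - 1)t(t + 1)l²`. The factor `u³` can be cancelled because a common prime factor of `s`
and `u` would divide `v`.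
-/

/-- If `v³ − tu³ = −s` with `u, v` coprime positive integers and
`s ∣ (tu − v)l²`, then `s ∣ (t−1)t(t+1)l²`. -/
theorem stmt_8 (t l : ℤ) (ht : 0 < t) (hl : 0 < l) (u v : ℤ) (hu : 0 < u)
    (hv : 0 < v) (huv : IsCoprime u v) (s : ℤ)
    (hs : v ^ 3 - t * u ^ 3 = -s) (hdvd : s ∣ (t * u - v) * l ^ 2) :
    s ∣ (t - 1) * t * (t + 1) * l ^ 2 := by
  have hs' : s = -v ^ 3 + u * (t * u ^ 2) := by linear_combination hs
  -- `s ≡ -v³` modulo `u`, so coprimality of `u` and `v` passes to `s` and `u³`.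
  have hcop : IsCoprime s (u ^ 3) := by
    refine IsCoprime.pow_right (IsCoprime.symm ?_)
    rw [hs']
    exact (huv.pow_right (n := 3)).neg_right.add_mul_left_right _
  refine hcop.dvd_of_dvd_mul_left ?_
  -- `u³(t³ - t) = ((tu)³ - v³) - s`, and `tu - v` divides `(tu)³ - v³`.
  have key : u ^ 3 * ((t - 1) * t * (t + 1) * l ^ 2) =
      (t * u - v) * l ^ 2 * ((t * u) ^ 2 + t * u * v + v ^ 2) - s * l ^ 2 := by
    rw [hs']; ring
  rw [key]
  exact dvd_sub (hdvd.mul_right _) (dvd_mul_right _ _)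
end

section
/- Let a and b be coprime squarefree positive integers with m = a·b² > 1, and let K = ℚ(m^{1/3}) be the pure cubic field generated by the real cube root of m. Then the regulator R_K of K satisfies R_K < m·log(6m). -/
/-!
The regulator is bounded by counting elements of `𝓞 K` in two ways.

Let `ϑ` be the cube root of `m`. Through the real place `x` and a complex place `z`, `ℤ[ϑ]` is a
lattice of covolume `V = (3√3/2) m` in `ℝ × ℂ`. Cauchy–Schwarz on the quotient torus, applied to
the periodization of (indicator of an interval) × (Gaussian), shows that for `s = 3m` and every
`B > 0` the sum of `(s - |x(u)|/B)₊ exp(-B |z(u)|²)` over nonzero algebraic integers `u` is at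
least `s (π s / V - 1)` (`le_tsum_integers`). Integrate this over `log B` in an interval whose
length is the regulator `R`. A fundamental unit translates such an interval to the next one, so
the integrals over associate elements tile the line, and the left side becomes a sum, over nonzero
principal ideals, of a weight depending only on the norm (`regulator_mul_le`). Enlarging it to
all nonzero ideals gives an upper bound in terms of the number of ideals of each norm.

In a pure cubic field a prime `p ≡ 2 (mod 3)` has at most one prime of degree one above it, and
`3` does not split completely. Hence the number of ideals of norm `n` is at most the `n`-th
coefficient of `ζ(s)² L(s, χ₃)` (`ncard_norm_le`), so at most `(3/4) N (log N + 4/3)` ideals have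
norm up to `N`. Partial summation then yields
`R s (π s / V - 1) ≤ (3/4) s² (log (2s/3) + 4/3)` (`regulator_bound`), and for `s = 3m`, where
`π s / V = 2π/√3 > 3.6`, this implies `R < m log (6m)`.
-/

/-! ### The coefficients of `ζ(s)² L(s, χ₃)` -/

namespace PureCubic

/-- The nontrivial Dirichlet character modulo 3, as an integer-valued arithmetic function. -/
def chi3 : ArithmeticFunction ℤ :=
  ⟨fun n => if n % 3 = 1 then 1 else if n % 3 = 2 then -1 else 0, by simp⟩

/-- The coefficients of `ζ(s)² L(s, χ₃) = ζ(s) ζ_{ℚ(ω)}(s)`. They dominate those of `ζ_K`. -/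
def cubicCoeff : ArithmeticFunction ℤ :=
  chi3 * (ArithmeticFunction.zeta : ArithmeticFunction ℤ)
    * (ArithmeticFunction.zeta : ArithmeticFunction ℤ)

lemma chi3_apply (n : ℕ) :
    chi3 n = if n % 3 = 1 then 1 else if n % 3 = 2 then -1 else 0 := rfl

lemma chi3_mul (m n : ℕ) : chi3 (m * n) = chi3 m * chi3 n := by
  simp only [chi3_apply, Nat.mul_mod m n 3]
  have hm : m % 3 < 3 := Nat.mod_lt _ (by norm_num)
  have hn : n % 3 < 3 := Nat.mod_lt _ (by norm_num)
  interval_cases m % 3 <;> interval_cases n % 3 <;> simp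

lemma chi3_pow (n k : ℕ) : chi3 (n ^ k) = chi3 n ^ k := by
  induction k with
  | zero => simp [chi3_apply]
  | succ k ih => rw [pow_succ, chi3_mul, ih, pow_succ]

lemma cubicCoeff_isMultiplicative : cubicCoeff.IsMultiplicative := by
  have hz : (ArithmeticFunction.zeta : ArithmeticFunction ℤ).IsMultiplicative :=
    ArithmeticFunction.isMultiplicative_zeta.natCast
  have hc : chi3.IsMultiplicative := ⟨by simp [chi3_apply], fun {m n} _ => chi3_mul m n⟩
  exact (hc.mul hz).mul hz

lemma cubicCoeff_prime_pow {p : ℕ} (hp : p.Prime) (k : ℕ) :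
    cubicCoeff (p ^ k) = ∑ j ∈ Finset.range (k + 1), ∑ i ∈ Finset.range (j + 1), chi3 p ^ i := by
  rw [cubicCoeff, ArithmeticFunction.coe_mul_zeta_apply, Nat.sum_divisors_prime_pow hp]
  refine Finset.sum_congr rfl fun j _ => ?_
  rw [ArithmeticFunction.coe_mul_zeta_apply, Nat.sum_divisors_prime_pow hp]
  exact Finset.sum_congr rfl fun i _ => chi3_pow p i

lemma cubicCoeff_prime_pow_of_mod_one {p : ℕ} (hp : p.Prime) (h : p % 3 = 1) (k : ℕ) :
    cubicCoeff (p ^ k) = ∑ j ∈ Finset.range (k + 1), ((j : ℤ) + 1) := by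
  rw [cubicCoeff_prime_pow hp]
  simp [chi3_apply, h]

lemma cubicCoeff_prime_pow_of_mod_two {p : ℕ} (hp : p.Prime) (h : p % 3 = 2) (k : ℕ) :
    cubicCoeff (p ^ k) = ((k / 2 + 1 : ℕ) : ℤ) := by
  rw [cubicCoeff_prime_pow hp]
  have hc : chi3 p = -1 := by simp [chi3_apply, h]
  simp only [hc, neg_one_geom_sum]
  induction k with
  | zero => simp
  | succ k ih =>
    rw [Finset.sum_range_succ, ih]
    rcases Nat.even_or_odd k with hk | hk
    · have h1 : ¬ Even (k + 1) := by simpa [Nat.even_add_one] using hk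
      have h2 : Even (k + 1 + 1) := by simpa [Nat.even_add_one] using hk
      rw [if_pos h2]
      obtain ⟨j, rfl⟩ := hk
      push_cast; omega
    · have h2 : ¬ Even (k + 1 + 1) := by simpa [Nat.even_add_one] using hk
      rw [if_neg h2]
      obtain ⟨j, rfl⟩ := hk
      push_cast; omega

lemma cubicCoeff_three_pow (k : ℕ) : cubicCoeff (3 ^ k) = (k : ℤ) + 1 := by
  rw [cubicCoeff_prime_pow Nat.prime_three]
  have hc : chi3 3 = 0 := by simp [chi3_apply]
  simp only [hc]
  have : ∀ j, ∑ i ∈ Finset.range (j + 1), (0 : ℤ) ^ i = 1 := by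
    intro j
    rw [Finset.sum_range_succ']
    simp
  simp [this]

/-- The ideals of `ℤ[ω]` of norm at most `N` number at most `(3N + 1)/4`: group the terms of the
alternating sum `∑ χ₃(d) ⌊N/d⌋ = ⌊N/1⌋ - ⌊N/2⌋ + ⌊N/4⌋ - ⌊N/5⌋ + ⌊N/7⌋ - ⋯`. -/
lemma sum_chi3_mul_zeta_le (N : ℕ) :
    4 * ∑ n ∈ Finset.Ioc 0 N, (chi3 * (ArithmeticFunction.zeta : ArithmeticFunction ℤ)) n
      ≤ 3 * N + 1 := by
  rw [ArithmeticFunction.sum_Ioc_mul_zeta_eq_sum]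
  have hext : ∑ n ∈ Finset.Ioc 0 N, chi3 n * ((N / n : ℕ) : ℤ)
      = ∑ n ∈ Finset.range (3 * (N + 1) + 2), chi3 n * ((N / n : ℕ) : ℤ) := by
    refine Finset.sum_subset (fun n hn => ?_) (fun n _ hn' => ?_)
    · simp only [Finset.mem_Ioc, Finset.mem_range] at *
      omega
    · simp only [Finset.mem_Ioc, not_and, not_le] at hn'
      rcases Nat.eq_zero_or_pos n with rfl | h
      · simp
      · rw [Nat.div_eq_of_lt (hn' h)]; simp
  have key : ∀ J : ℕ, ∑ n ∈ Finset.range (3 * (J + 1) + 2), chi3 n * ((N / n : ℕ) : ℤ)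
      ≤ (N : ℤ) - ((N / 2 : ℕ) : ℤ) + ((N / 4 : ℕ) : ℤ) := by
    intro J
    induction J with
    | zero => simp [Finset.sum_range_succ, chi3_apply]
    | succ J ih =>
      have e : 3 * (J + 1 + 1) + 2 = 3 * (J + 1) + 2 + 1 + 1 + 1 := by ring
      rw [e, Finset.sum_range_succ, Finset.sum_range_succ, Finset.sum_range_succ]
      have c1 : chi3 (3 * (J + 1) + 2) = -1 := by
        have : (3 * (J + 1) + 2) % 3 = 2 := by omega
        simp [chi3_apply, this]
      have c2 : chi3 (3 * (J + 1) + 2 + 1) = 0 := by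
        have : (3 * (J + 1) + 2 + 1) % 3 = 0 := by omega
        simp [chi3_apply, this]
      have c3 : chi3 (3 * (J + 1) + 2 + 1 + 1) = 1 := by
        have : (3 * (J + 1) + 2 + 1 + 1) % 3 = 1 := by omega
        simp [chi3_apply, this]
      have hle : N / (3 * (J + 1) + 2 + 1 + 1) ≤ N / (3 * (J + 1) + 2) :=
        Nat.div_le_div_left (by omega) (by omega)
      rw [c1, c2, c3]
      have : ((N / (3 * (J + 1) + 2 + 1 + 1) : ℕ) : ℤ) ≤ ((N / (3 * (J + 1) + 2) : ℕ) : ℤ) := by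
        exact_mod_cast hle
      linarith
  have := key N
  rw [hext]
  omega

/-- `∑_{n ≤ N} c(n) ≤ (3/4) N (log N + 4/3)`. -/
lemma sum_cubicCoeff_le (N : ℕ) :
    ((∑ n ∈ Finset.Ioc 0 N, cubicCoeff n : ℤ) : ℝ)
      ≤ 3 / 4 * (N : ℝ) * (Real.log N + 4 / 3) := by
  have h1 : ∑ n ∈ Finset.Ioc 0 N, cubicCoeff n = ∑ k ∈ Finset.Ioc 0 N,
      ∑ n ∈ Finset.Ioc 0 (N / k),
        (chi3 * (ArithmeticFunction.zeta : ArithmeticFunction ℤ)) n := by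
    rw [cubicCoeff, mul_comm, ArithmeticFunction.sum_Ioc_mul_eq_sum_sum]
    refine Finset.sum_congr rfl fun k hk => ?_
    have : k ≠ 0 := by have := Finset.mem_Ioc.mp hk; omega
    simp [ArithmeticFunction.natCoe_apply, ArithmeticFunction.zeta_apply, this]
  rw [h1]
  push_cast
  calc ∑ k ∈ Finset.Ioc 0 N, ∑ n ∈ Finset.Ioc 0 (N / k),
        (((chi3 * (ArithmeticFunction.zeta : ArithmeticFunction ℤ)) n : ℤ) : ℝ)
      ≤ ∑ k ∈ Finset.Ioc 0 N, (3 / 4 * (N : ℝ) * (k : ℝ)⁻¹ + 1 / 4) := by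
        refine Finset.sum_le_sum fun k hk => ?_
        have h := sum_chi3_mul_zeta_le (N / k)
        have h' : 4 * ∑ n ∈ Finset.Ioc 0 (N / k),
            (((chi3 * (ArithmeticFunction.zeta : ArithmeticFunction ℤ)) n : ℤ) : ℝ)
            ≤ 3 * ((N / k : ℕ) : ℝ) + 1 := by
          have h3 := (Int.cast_le (R := ℝ)).mpr h
          simpa only [Int.cast_mul, Int.cast_sum, Int.cast_add, Int.cast_natCast, Int.cast_ofNat,
            Int.cast_one] using h3
        have h2 : ((N / k : ℕ) : ℝ) ≤ (N : ℝ) / k := Nat.cast_div_le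
        rw [div_eq_mul_inv] at h2
        linarith
    _ = 3 / 4 * (N : ℝ) * ((harmonic N : ℚ) : ℝ) + N / 4 := by
        rw [Finset.sum_add_distrib, ← Finset.mul_sum, harmonic_eq_sum_Icc]
        simp only [Finset.sum_const, Nat.card_Ioc, nsmul_eq_mul]
        push_cast
        have : Finset.Ioc 0 N = Finset.Icc 1 N := by ext; simp [Nat.succ_le_iff]
        rw [this]
        simp
        ring
    _ ≤ _ := by
        have := harmonic_le_one_add_log N
        have hN : (0 : ℝ) ≤ 3 / 4 * N := by positivity
        nlinarith [mul_le_mul_of_nonneg_left this hN]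

end PureCubic

/-! ### Counting ideals of given norm -/

namespace PureCubic
open NumberField

section IdealCount

variable {K : Type*} [Field K] [NumberField K]

/-- For coprime `m, n` an ideal `I` of norm `mn` is recovered from `I + (m)` and `I + (n)`, whose
product it is. -/
lemma ncard_norm_mul_le {m n : ℕ} (hmn : m.Coprime n) :
    {I : Ideal (𝓞 K) | I.absNorm = m * n}.ncard
      ≤ {I : Ideal (𝓞 K) | I.absNorm = m}.ncard * {I : Ideal (𝓞 K) | I.absNorm = n}.ncard := by
  have key : ∀ I : Ideal (𝓞 K), I.absNorm = m * n →
      (I ⊔ Ideal.span {(m : 𝓞 K)}) * (I ⊔ Ideal.span {(n : 𝓞 K)}) = I := by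
    intro I hI
    have hmem : (m : 𝓞 K) * n ∈ I := by
      have := Ideal.absNorm_mem I
      rw [hI] at this
      exact_mod_cast this
    apply le_antisymm
    · rw [Ideal.sup_mul, Ideal.mul_sup, Ideal.mul_sup]
      refine sup_le (sup_le Ideal.mul_le_right Ideal.mul_le_left) (sup_le Ideal.mul_le_right ?_)
      · rw [Ideal.span_singleton_mul_span_singleton, Ideal.span_singleton_le_iff_mem]
        exact hmem
    · intro x hx
      obtain ⟨u, v, huv⟩ : IsCoprime (m : 𝓞 K) (n : 𝓞 K) := by
        have := (Nat.isCoprime_iff_coprime.mpr hmn).map (Int.castRingHom (𝓞 K))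
        simpa using this
      have : x = (m : 𝓞 K) * (u * x) + (v * x) * n := by
        calc x = (u * m + v * n) * x := by rw [huv, one_mul]
          _ = _ := by ring
      rw [this]
      refine Ideal.add_mem _ (Ideal.mul_mem_mul ?_ ?_) (Ideal.mul_mem_mul ?_ ?_)
      · exact Ideal.mem_sup_right (Ideal.mem_span_singleton_self _)
      · exact Ideal.mem_sup_left (I.mul_mem_left _ hx)
      · exact Ideal.mem_sup_left (I.mul_mem_left _ hx)
      · exact Ideal.mem_sup_right (Ideal.mem_span_singleton_self _)
  have hdvd : ∀ (I : Ideal (𝓞 K)) (k : ℕ),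
      (I ⊔ Ideal.span {(k : 𝓞 K)}).absNorm ∣ k ^ Module.finrank ℤ (𝓞 K) := by
    intro I k
    rw [← Ideal.absNorm_span_natCast]
    exact Ideal.absNorm_dvd_absNorm_of_le le_sup_right
  rw [← Set.ncard_prod]
  refine Set.ncard_le_ncard_of_injOn
    (fun I => (I ⊔ Ideal.span {(m : 𝓞 K)}, I ⊔ Ideal.span {(n : 𝓞 K)})) ?_ ?_
    ((Ideal.finite_setOfPred_absNorm_eq m).prod (Ideal.finite_setOfPred_absNorm_eq n))
  · intro I hI
    have h := congrArg Ideal.absNorm (key I hI)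
    rw [map_mul, show I.absNorm = m * n from hI] at h
    set x := (I ⊔ Ideal.span {(m : 𝓞 K)}).absNorm
    set y := (I ⊔ Ideal.span {(n : 𝓞 K)}).absNorm
    have hxn : x.Coprime n :=
      Nat.Coprime.coprime_dvd_left (hdvd I m) (Nat.Coprime.pow_left _ hmn)
    have hym : y.Coprime m :=
      Nat.Coprime.coprime_dvd_left (hdvd I n) (Nat.Coprime.pow_left _ hmn.symm)
    have hx : x ∣ m := hxn.dvd_of_dvd_mul_right (h ▸ Dvd.intro _ rfl)
    have hy : y ∣ n := hym.dvd_of_dvd_mul_left (h ▸ Dvd.intro_left _ rfl)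
    have hmx : m ∣ x := hym.symm.dvd_of_dvd_mul_right (h ▸ Dvd.intro _ rfl)
    have hny : n ∣ y := hxn.symm.dvd_of_dvd_mul_left (h ▸ Dvd.intro_left _ rfl)
    exact ⟨Nat.dvd_antisymm hx hmx, Nat.dvd_antisymm hy hny⟩
  · intro I hI J hJ hIJ
    simp only [Prod.mk.injEq] at hIJ
    rw [← key I hI, ← key J hJ, hIJ.1, hIJ.2]

/-- The primes of `K` above the rational prime `p`. -/
def primesAbove (K : Type*) [Field K] [NumberField K] (p : ℕ) : Set (Ideal (𝓞 K)) :=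
  {P | P.IsPrime ∧ (p : 𝓞 K) ∈ P}

lemma primesAbove_ne_bot {p : ℕ} (hp : p.Prime) {P : Ideal (𝓞 K)} (hP : P ∈ primesAbove K p) :
    P ≠ ⊥ := by
  rintro rfl
  have := hP.2
  simp [hp.ne_zero] at this

lemma primesAbove_prime {p : ℕ} (hp : p.Prime) {P : Ideal (𝓞 K)} (hP : P ∈ primesAbove K p) :
    Prime P := Ideal.prime_of_isPrime (primesAbove_ne_bot hp hP) hP.1

lemma primesAbove_norm {p : ℕ} (hp : p.Prime) {P : Ideal (𝓞 K)} (hP : P ∈ primesAbove K p) :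
    ∃ f, 0 < f ∧ P.absNorm = p ^ f := by
  have h : P.absNorm ∣ p ^ Module.finrank ℤ (𝓞 K) := by
    rw [← Ideal.absNorm_span_natCast]
    exact Ideal.absNorm_dvd_absNorm_of_le ((Ideal.span_singleton_le_iff_mem _).mpr hP.2)
  obtain ⟨f, -, hf⟩ := (Nat.dvd_prime_pow hp).mp h
  refine ⟨f, Nat.pos_of_ne_zero ?_, hf⟩
  rintro rfl
  rw [pow_zero, Ideal.absNorm_eq_one_iff] at hf
  exact hP.1.ne_top hf

lemma primesAbove_finite {p : ℕ} (hp : p.Prime) : (primesAbove K p).Finite := by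
  refine (Ideal.finite_setOfPred_absNorm_le (S := 𝓞 K) (p ^ Module.finrank ℤ (𝓞 K))).subset ?_
  intro P hP
  refine Nat.le_of_dvd (pow_pos hp.pos _) ?_
  rw [← Ideal.absNorm_span_natCast]
  exact Ideal.absNorm_dvd_absNorm_of_le ((Ideal.span_singleton_le_iff_mem _).mpr hP.2)

lemma primesAbove_nonempty {p : ℕ} (hp : p.Prime) : (primesAbove K p).Nonempty := by
  have h : Ideal.span {(p : 𝓞 K)} ≠ ⊤ := by
    intro h
    have h2 := Ideal.absNorm_span_natCast (S := 𝓞 K) p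
    rw [h, Ideal.absNorm_top] at h2
    have h3 : 0 < Module.finrank ℤ (𝓞 K) := Module.finrank_pos
    exact absurd h2.symm (Nat.one_lt_pow h3.ne' hp.one_lt).ne'
  obtain ⟨M, hM, hle⟩ := Ideal.exists_le_maximal _ h
  exact ⟨M, hM.isPrime, (Ideal.span_singleton_le_iff_mem _).mp hle⟩

/-- An ideal of norm `p ^ k` is a product of powers of the primes above `p`. -/
lemma exists_eq_pow_mul {p : ℕ} (hp : p.Prime) {P Q R : Ideal (𝓞 K)}
    (hS : ∀ T ∈ primesAbove K p, T = P ∨ T = Q ∨ T = R) {k : ℕ} {I : Ideal (𝓞 K)}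
    (hI : I.absNorm = p ^ k) : ∃ a b c : ℕ, I = P ^ a * Q ^ b * R ^ c := by
  induction I using UniqueFactorizationMonoid.induction_on_prime generalizing k with
  | h₁ =>
    rw [Ideal.zero_eq_bot, Ideal.absNorm_bot] at hI
    exact absurd hI.symm (pow_pos hp.pos _).ne'
  | h₂ J hJ => exact ⟨0, 0, 0, by simpa using hJ⟩
  | h₃ J T hJ hT ih =>
    rw [map_mul] at hI
    obtain ⟨j, -, hj⟩ := (Nat.dvd_prime_pow hp).mp (Dvd.intro_left _ hI)
    obtain ⟨i, -, hi⟩ := (Nat.dvd_prime_pow hp).mp (Dvd.intro _ hI)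
    obtain ⟨a, b, c, rfl⟩ := ih hj
    have hTp := Ideal.isPrime_of_prime hT
    have hmem : T ∈ primesAbove K p := by
      refine ⟨hTp, ?_⟩
      have := Ideal.absNorm_mem T
      rw [hi, Nat.cast_pow] at this
      exact hTp.mem_of_pow_mem _ this
    rcases hS T hmem with rfl | rfl | rfl
    · exact ⟨a + 1, b, c, by ring⟩
    · exact ⟨a, b + 1, c, by ring⟩
    · exact ⟨a, b, c + 1, by ring⟩

lemma ncard_norm_prime_pow_two {p : ℕ} (hp : p.Prime) {P Q : Ideal (𝓞 K)}
    (hS : ∀ T ∈ primesAbove K p, T = P ∨ T = Q) {f g : ℕ} (hf : 0 < f) (hg : 0 < g)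
    (hPf : P.absNorm = p ^ f) (hQg : Q.absNorm = p ^ g) (k : ℕ) :
    {I : Ideal (𝓞 K) | I.absNorm = p ^ k}.ncard ≤ k / g + 1 := by
  have hsub : {I : Ideal (𝓞 K) | I.absNorm = p ^ k} ⊆
      (fun b => P ^ ((k - g * b) / f) * Q ^ b) '' (Finset.range (k / g + 1) : Set ℕ) := by
    intro I hI
    obtain ⟨a, b, c, rfl⟩ := exists_eq_pow_mul (P := P) (Q := Q) (R := Q) hp (fun T hT => by
      rcases hS T hT with h | h <;> simp [h]) hI
    simp only [Set.mem_ofPred_eq, map_mul, map_pow, hPf, hQg, ← pow_mul, ← pow_add] at hI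
    have h := Nat.pow_right_injective hp.two_le hI
    have h' : f * a + g * (b + c) = k := by rw [← h]; ring
    refine ⟨b + c, ?_, ?_⟩
    · simp only [Finset.coe_range, Set.mem_Iio, Nat.lt_succ_iff]
      rw [Nat.le_div_iff_mul_le hg]
      nlinarith
    · have : (k - g * (b + c)) / f = a := by
        rw [← h', Nat.add_sub_cancel, Nat.mul_div_cancel_left _ hf]
      simp only [this]
      ring
  calc _ ≤ _ := Set.ncard_le_ncard hsub ((Finset.finite_toSet _).image _)
    _ ≤ _ := Set.ncard_image_le (Finset.finite_toSet _)
    _ = _ := by rw [Set.ncard_coe_finset, Finset.card_range]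

lemma ncard_norm_prime_pow_three {p : ℕ} (hp : p.Prime) {P Q R : Ideal (𝓞 K)}
    (hS : ∀ T ∈ primesAbove K p, T = P ∨ T = Q ∨ T = R)
    (hPf : P.absNorm = p) (hQf : Q.absNorm = p) (hRf : R.absNorm = p) (k : ℕ) :
    {I : Ideal (𝓞 K) | I.absNorm = p ^ k}.ncard ≤ ∑ j ∈ Finset.range (k + 1), (j + 1) := by
  have hsub : {I : Ideal (𝓞 K) | I.absNorm = p ^ k} ⊆
      (fun x : (_ : ℕ) × ℕ => P ^ (k - x.1) * Q ^ (x.1 - x.2) * R ^ x.2) ''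
        ((Finset.range (k + 1)).sigma (fun j => Finset.range (j + 1)) : Set ((_ : ℕ) × ℕ)) := by
    intro I hI
    obtain ⟨a, b, c, rfl⟩ := exists_eq_pow_mul hp hS hI
    simp only [Set.mem_ofPred_eq, map_mul, map_pow, hPf, hQf, hRf, ← pow_add] at hI
    have h := Nat.pow_right_injective hp.two_le hI
    refine ⟨⟨b + c, c⟩, ?_, ?_⟩
    · simp only [Finset.coe_sigma, Finset.coe_range, Set.mem_sigma_iff, Set.mem_Iio]
      omega
    · have h1 : k - (b + c) = a := by omega
      simp [h1]
  calc _ ≤ _ := Set.ncard_le_ncard hsub ((Finset.finite_toSet _).image _)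
    _ ≤ _ := Set.ncard_image_le (Finset.finite_toSet _)
    _ = _ := by rw [Set.ncard_coe_finset, Finset.card_sigma]; simp

/-- In a cubic field the residue degrees of the primes above `p` sum to at most `3`, which leaves
three possible shapes. -/
lemma primesAbove_shape (hd : Module.finrank ℚ K = 3) {p : ℕ} (hp : p.Prime) :
    (∃ P Q R : Ideal (𝓞 K), P ∈ primesAbove K p ∧ Q ∈ primesAbove K p ∧ R ∈ primesAbove K p ∧
      P ≠ Q ∧ P ≠ R ∧ Q ≠ R ∧ P.absNorm = p ∧ Q.absNorm = p ∧ R.absNorm = p ∧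
      ∀ T ∈ primesAbove K p, T = P ∨ T = Q ∨ T = R) ∨
    (∃ P Q : Ideal (𝓞 K), P ∈ primesAbove K p ∧ Q ∈ primesAbove K p ∧ P ≠ Q ∧ P.absNorm = p ∧
      (Q.absNorm = p ∨ Q.absNorm = p ^ 2) ∧ ∀ T ∈ primesAbove K p, T = P ∨ T = Q) ∨
    (∃ P ∈ primesAbove K p, ∀ T ∈ primesAbove K p, T = P) := by
  classical
  set S : Finset (Ideal (𝓞 K)) := (primesAbove_finite (K := K) hp).toFinset with hSdef
  have hS : ∀ T, T ∈ S ↔ T ∈ primesAbove K p := fun T => by simp [hSdef]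
  have hprod : ∏ P ∈ S, P ∣ Ideal.span {(p : 𝓞 K)} := by
    refine Finset.prod_primes_dvd _ (fun P hP => primesAbove_prime hp ((hS P).mp hP)) ?_
    intro P hP
    exact Ideal.dvd_span_singleton.mpr ((hS P).mp hP).2
  have hrank : Module.finrank ℤ (𝓞 K) = 3 := by rw [RingOfIntegers.rank, hd]
  have hnorm : ∏ P ∈ S, P.absNorm ∣ p ^ 3 := by
    rw [← hrank, ← Ideal.absNorm_span_natCast, ← map_prod]
    exact map_dvd _ hprod
  have hex : ∀ P : Ideal (𝓞 K), ∃ f, P ∈ S → 0 < f ∧ P.absNorm = p ^ f := by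
    intro P
    by_cases h : P ∈ S
    · obtain ⟨f, h1, h2⟩ := primesAbove_norm hp ((hS P).mp h)
      exact ⟨f, fun _ => ⟨h1, h2⟩⟩
    · exact ⟨0, fun h' => absurd h' h⟩
  choose f hf using hex
  have hsum : ∑ P ∈ S, f P ≤ 3 := by
    rw [Finset.prod_congr rfl (fun P hP => (hf P hP).2), Finset.prod_pow_eq_pow_sum] at hnorm
    exact (Nat.pow_dvd_pow_iff_le_right hp.one_lt).mp hnorm
  have hcard : S.card ≤ 3 := by
    calc S.card = ∑ _P ∈ S, 1 := by simp
      _ ≤ ∑ P ∈ S, f P := Finset.sum_le_sum fun P hP => (hf P hP).1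
      _ ≤ 3 := hsum
  have hpos : 0 < S.card := by
    obtain ⟨P, hP⟩ := primesAbove_nonempty (K := K) hp
    exact Finset.card_pos.mpr ⟨P, (hS P).mpr hP⟩
  have h123 : S.card = 1 ∨ S.card = 2 ∨ S.card = 3 := by omega
  rcases h123 with h | h | h
  · obtain ⟨P, hP⟩ := Finset.card_eq_one.mp h
    refine Or.inr (Or.inr ⟨P, (hS P).mp (by simp [hP]), fun T hT => ?_⟩)
    have := (hS T).mpr hT
    simpa [hP] using this
  · obtain ⟨P, Q, hPQ, hE⟩ := Finset.card_eq_two.mp h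
    have hP : P ∈ S := by simp [hE]
    have hQ : Q ∈ S := by simp [hE]
    have hT : ∀ T ∈ primesAbove K p, T = P ∨ T = Q := fun T hT => by
      have := (hS T).mpr hT
      simpa [hE] using this
    rw [hE, Finset.sum_pair hPQ] at hsum
    have h1 := hf P hP
    have h2 := hf Q hQ
    right; left
    have hcases : (f P = 1 ∧ (f Q = 1 ∨ f Q = 2)) ∨ (f Q = 1 ∧ f P = 2) := by omega
    rcases hcases with ⟨hp1, hq⟩ | ⟨hq1, hp2⟩
    · refine ⟨P, Q, (hS P).mp hP, (hS Q).mp hQ, hPQ, by rw [h1.2, hp1, pow_one], ?_, hT⟩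
      rcases hq with hq | hq
      · left; rw [h2.2, hq, pow_one]
      · right; rw [h2.2, hq]
    · refine ⟨Q, P, (hS Q).mp hQ, (hS P).mp hP, hPQ.symm, by rw [h2.2, hq1, pow_one], ?_,
        fun T h => (hT T h).symm⟩
      right; rw [h1.2, hp2]
  · obtain ⟨P, Q, R, hPQ, hPR, hQR, hE⟩ := Finset.card_eq_three.mp h
    have hP : P ∈ S := by simp [hE]
    have hQ : Q ∈ S := by simp [hE]
    have hR : R ∈ S := by simp [hE]
    have h1 := hf P hP
    have h2 := hf Q hQ
    have h3 := hf R hR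
    rw [hE, Finset.sum_insert (by simp [hPQ, hPR]), Finset.sum_pair hQR] at hsum
    have e1 : f P = 1 := by omega
    have e2 : f Q = 1 := by omega
    have e3 : f R = 1 := by omega
    left
    refine ⟨P, Q, R, (hS P).mp hP, (hS Q).mp hQ, (hS R).mp hR, hPQ, hPR, hQR,
      by rw [h1.2, e1, pow_one], by rw [h2.2, e2, pow_one], by rw [h3.2, e3, pow_one],
      fun T hT => ?_⟩
    have := (hS T).mpr hT
    simpa [hE] using this

/-- In a cubic field where no `p ≡ 2 (mod 3)` has two primes of degree one above it and `3` does not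
split completely, the number of ideals of norm `n` is at most the coefficient of
`ζ(s) ζ_{ℚ(ω)}(s)`. -/
theorem ncard_norm_le (hd : Module.finrank ℚ K = 3)
    (h2 : ∀ p : ℕ, p.Prime → p % 3 = 2 → ∀ P ∈ primesAbove K p, ∀ Q ∈ primesAbove K p,
      P.absNorm = p → Q.absNorm = p → P = Q)
    (h3 : ∀ P ∈ primesAbove K 3, ∀ Q ∈ primesAbove K 3, ∀ R ∈ primesAbove K 3,
      P.absNorm = 3 → Q.absNorm = 3 → R.absNorm = 3 → P = Q ∨ P = R ∨ Q = R)
    (n : ℕ) (hn : n ≠ 0) :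
    ({I : Ideal (𝓞 K) | I.absNorm = n}.ncard : ℤ) ≤ cubicCoeff n := by
  induction n using Nat.recOnPosPrimePosCoprime with
  | zero => exact absurd rfl hn
  | one =>
    have : {I : Ideal (𝓞 K) | I.absNorm = 1} = {⊤} := by
      ext I; simp [Ideal.absNorm_eq_one_iff]
    rw [this, Set.ncard_singleton, cubicCoeff_isMultiplicative.map_one]
    simp
  | prime_pow p k hp hk =>
    have hmod : p = 3 ∨ p % 3 = 1 ∨ p % 3 = 2 := by
      by_cases h : p = 3
      · exact Or.inl h
      · have : ¬ 3 ∣ p := fun h' => h ((Nat.prime_dvd_prime_iff_eq Nat.prime_three hp).mp h').symm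
        omega
    -- A bound by `k + 1` suffices unless `p % 3 = 2`.
    have hk1 : ∑ j ∈ Finset.range (k + 1), ((j : ℤ) + 1) ≥ k + 1 := by
      calc ((k : ℤ) + 1) = ∑ j ∈ Finset.range (k + 1), (1 : ℤ) := by simp
        _ ≤ _ := Finset.sum_le_sum fun j _ => by omega
    rcases primesAbove_shape hd hp with ⟨P, Q, R, hP, hQ, hR, hPQ, hPR, hQR, nP, nQ, nR, hT⟩ |
      ⟨P, Q, hP, hQ, hPQ, nP, nQ, hT⟩ | ⟨P, hP, hT⟩
    · rcases hmod with rfl | h | h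
      · rcases h3 P hP Q hQ R hR nP nQ nR with h | h | h <;> contradiction
      · rw [cubicCoeff_prime_pow_of_mod_one hp h]
        have := ncard_norm_prime_pow_three hp hT nP nQ nR k
        exact_mod_cast this
      · exact absurd (h2 p hp h P hP Q hQ nP nQ) hPQ
    · have hle : {I : Ideal (𝓞 K) | I.absNorm = p ^ k}.ncard ≤ k + 1 := by
        obtain ⟨g, hg, hQg⟩ := primesAbove_norm hp hQ
        refine (ncard_norm_prime_pow_two hp hT one_pos hg (by rw [nP, pow_one]) hQg k).trans ?_
        have := Nat.div_le_self k g
        omega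
      rcases hmod with rfl | h | h
      · rw [cubicCoeff_three_pow]
        exact_mod_cast hle
      · rw [cubicCoeff_prime_pow_of_mod_one hp h]
        refine le_trans ?_ hk1
        exact_mod_cast hle
      · rw [cubicCoeff_prime_pow_of_mod_two hp h]
        rcases nQ with nQ | nQ
        · exact absurd (h2 p hp h P hP Q hQ nP nQ) hPQ
        · exact_mod_cast ncard_norm_prime_pow_two hp hT one_pos two_pos
            (by rw [nP, pow_one]) nQ k
    · obtain ⟨f, hf, hPf⟩ := primesAbove_norm hp hP
      have hle : {I : Ideal (𝓞 K) | I.absNorm = p ^ k}.ncard ≤ 1 := by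
        rw [Set.ncard_le_one (Ideal.finite_setOfPred_absNorm_eq _)]
        have hform : ∀ I : Ideal (𝓞 K), I.absNorm = p ^ k → I = P ^ (k / f) := by
          intro I hI
          obtain ⟨a, b, c, rfl⟩ := exists_eq_pow_mul (Q := P) (R := P) hp
            (fun T h => Or.inl (hT T h)) hI
          simp only [map_pow, hPf, ← pow_mul, ← pow_add] at hI
          have h' : f * (a + b + c) = k := Nat.pow_right_injective hp.two_le hI
          rw [← h', Nat.mul_div_cancel_left _ hf]
          ring
        intro I hI J hJ
        rw [hform I hI, hform J hJ]
      have h1 : ({I : Ideal (𝓞 K) | I.absNorm = p ^ k}.ncard : ℤ) ≤ 1 := by exact_mod_cast hle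
      refine h1.trans ?_
      rcases hmod with rfl | h | h
      · rw [cubicCoeff_three_pow]; omega
      · rw [cubicCoeff_prime_pow_of_mod_one hp h]; omega
      · rw [cubicCoeff_prime_pow_of_mod_two hp h]; push_cast; omega
  | coprime a b ha hb hab iha ihb =>
    rw [cubicCoeff_isMultiplicative.map_mul_of_coprime hab]
    have h := ncard_norm_mul_le (K := K) hab
    calc ({I : Ideal (𝓞 K) | I.absNorm = a * b}.ncard : ℤ)
        ≤ ({I : Ideal (𝓞 K) | I.absNorm = a}.ncard : ℤ)
          * ({I : Ideal (𝓞 K) | I.absNorm = b}.ncard : ℤ) := by exact_mod_cast h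
      _ ≤ _ := mul_le_mul (iha (by omega)) (ihb (by omega)) (by positivity)
          ((Int.natCast_nonneg _).trans (iha (by omega)))

/-- If `cubicCoeff` dominates the ideal counts, there are at most `(3/4) N (log N + 4/3)` nonzero
ideals of norm up to `N`. -/
theorem sum_ncard_norm_le
    (h : ∀ n : ℕ, n ≠ 0 → ({I : Ideal (𝓞 K) | I.absNorm = n}.ncard : ℤ) ≤ cubicCoeff n) (N : ℕ) :
    ∑ n ∈ Finset.Ioc 0 N, ({I : Ideal (𝓞 K) | I.absNorm = n}.ncard : ℝ)
      ≤ 3 / 4 * (N : ℝ) * (Real.log N + 4 / 3) := by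
  refine le_trans ?_ (sum_cubicCoeff_le N)
  push_cast
  refine Finset.sum_le_sum fun n hn => ?_
  have := h n (by have := Finset.mem_Ioc.mp hn; omega)
  exact_mod_cast (Int.cast_le (R := ℝ)).mpr this

end IdealCount
end PureCubic

/-! ### Primes of a pure cubic field -/

namespace PureCubic
open NumberField

section PrimesInPureCubic

variable {K : Type*} [Field K] [NumberField K]

lemma pow_absNorm_sub_mem {P : Ideal (𝓞 K)} (hP : P.IsPrime) (h0 : P ≠ ⊥) (x : 𝓞 K) :
    x ^ P.absNorm - x ∈ P := by
  classical
  have hmax : P.IsMaximal := hP.isMaximal h0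
  let : Field (𝓞 K ⧸ P) := Ideal.Quotient.field P
  have : Finite (𝓞 K ⧸ P) := (Ideal.absNorm_ne_zero_iff P).mp
    (fun h => h0 (Ideal.absNorm_eq_zero_iff.mp h))
  let : Fintype (𝓞 K ⧸ P) := Fintype.ofFinite _
  have hcard : P.absNorm = Fintype.card (𝓞 K ⧸ P) := by
    rw [Ideal.absNorm_apply, Submodule.cardQuot_apply, Nat.card_eq_fintype_card]
  rw [← Ideal.Quotient.eq, map_pow, hcard]
  exact FiniteField.pow_card _

lemma intCast_mem_primesAbove_iff {p : ℕ} (hp : p.Prime) {P : Ideal (𝓞 K)}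
    (hP : P ∈ primesAbove K p) (n : ℤ) : (n : 𝓞 K) ∈ P ↔ (p : ℤ) ∣ n := by
  constructor
  · intro h
    by_contra hn
    have hc : IsCoprime (p : ℤ) n :=
      (Prime.coprime_iff_not_dvd (Nat.prime_iff_prime_int.mp hp)).mpr hn
    obtain ⟨u, v, huv⟩ := hc
    have h1 : (u : 𝓞 K) * (p : 𝓞 K) + v * n = 1 := by
      have := congrArg (Int.cast : ℤ → 𝓞 K) huv
      push_cast at this
      exact this
    refine hP.1.ne_top ((Ideal.eq_top_iff_one _).mpr ?_)
    rw [← h1]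
    exact P.add_mem (P.mul_mem_left _ hP.2) (P.mul_mem_left _ h)
  · rintro ⟨c, rfl⟩
    push_cast
    exact P.mul_mem_right _ hP.2

/-- A prime dividing the cubefree integer `m = ϑ³` is totally ramified: the ramification index of
every prime above it is divisible by `3`. -/
lemma primesAbove_eq_of_dvd (hd : Module.finrank ℚ K = 3) {m : ℕ} (hm0 : m ≠ 0)
    (hfree : ∀ p : ℕ, p.Prime → ¬ p ^ 3 ∣ m) {ϑ : 𝓞 K} (hϑ : ϑ ^ 3 = (m : 𝓞 K))
    {p : ℕ} (hp : p.Prime) (hpm : p ∣ m) {P Q : Ideal (𝓞 K)} (hP : P ∈ primesAbove K p)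
    (hQ : Q ∈ primesAbove K p) : P = Q := by
  by_contra hne
  obtain ⟨j, n, hn, hmj⟩ := Nat.exists_eq_pow_mul_and_not_dvd hm0 p hp.ne_one
  have hj0 : j ≠ 0 := by
    rintro rfl
    rw [pow_zero, one_mul] at hmj
    exact hn (hmj ▸ hpm)
  have hj3 : j < 3 := by
    by_contra h
    exact hfree p hp (hmj ▸ Dvd.dvd.mul_right (pow_dvd_pow p (by omega)) n)
  have hϑ0 : ϑ ≠ 0 := by
    rintro rfl
    rw [zero_pow (by norm_num)] at hϑ
    exact hm0 (by exact_mod_cast hϑ.symm)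
  have hp0 : (p : 𝓞 K) ≠ 0 := by exact_mod_cast hp.ne_zero
  have hn0 : (n : 𝓞 K) ≠ 0 := by
    have : n ≠ 0 := by rintro rfl; exact hn (dvd_zero p)
    exact_mod_cast this
  have heq : Ideal.span {ϑ} ^ 3 = Ideal.span {(p : 𝓞 K)} ^ j * Ideal.span {(n : 𝓞 K)} := by
    rw [Ideal.span_singleton_pow, Ideal.span_singleton_pow,
      Ideal.span_singleton_mul_span_singleton, hϑ, hmj]
    push_cast; rfl
  have hs : ∀ {x : 𝓞 K}, x ≠ 0 → Ideal.span {x} ≠ 0 := fun {x} h => by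
    rwa [Ideal.zero_eq_bot, Ne, Ideal.span_singleton_eq_bot]
  have key : ∀ T ∈ primesAbove K p, T ^ 3 ∣ Ideal.span {(p : 𝓞 K)} := by
    intro T hT
    have hTp := primesAbove_prime hp hT
    have fin : ∀ {I : Ideal (𝓞 K)}, I ≠ 0 → FiniteMultiplicity T I :=
      fun h => FiniteMultiplicity.of_prime_left hTp h
    have h1 := congrArg (multiplicity T) heq
    rw [FiniteMultiplicity.multiplicity_pow hTp (fin (hs hϑ0)),
      multiplicity_mul hTp (fin (mul_ne_zero (pow_ne_zero _ (hs hp0)) (hs hn0))),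
      FiniteMultiplicity.multiplicity_pow hTp (fin (hs hp0))] at h1
    have hTn : multiplicity T (Ideal.span {(n : 𝓞 K)}) = 0 := by
      rw [multiplicity_eq_zero, Ideal.dvd_span_singleton]
      intro h
      have := (intCast_mem_primesAbove_iff hp hT (n : ℤ)).mp (by exact_mod_cast h)
      exact hn (by exact_mod_cast this)
    have hTe : multiplicity T (Ideal.span {(p : 𝓞 K)}) ≠ 0 := by
      rw [Ne, multiplicity_eq_zero, not_not, Ideal.dvd_span_singleton]
      exact hT.2
    rw [hTn, add_zero] at h1
    have h3 : 3 ≤ multiplicity T (Ideal.span {(p : 𝓞 K)}) := by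
      have : j = 1 ∨ j = 2 := by omega
      rcases this with rfl | rfl <;> omega
    exact (pow_dvd_pow T h3).trans (pow_multiplicity_dvd _ _)
  have hcop : IsCoprime (P ^ 3) (Q ^ 3) := by
    have : IsCoprime P Q := by
      rw [Ideal.isCoprime_iff_sup_eq]
      exact (hP.1.isMaximal (primesAbove_ne_bot hp hP)).coprime_of_ne
        (hQ.1.isMaximal (primesAbove_ne_bot hp hQ)) hne
    exact this.pow
  have hdvd := map_dvd Ideal.absNorm (hcop.mul_dvd (key P hP) (key Q hQ))
  obtain ⟨f, hf, hPf⟩ := primesAbove_norm hp hP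
  obtain ⟨g, hg, hQg⟩ := primesAbove_norm hp hQ
  rw [map_mul, map_pow, map_pow, hPf, hQg, Ideal.absNorm_span_natCast, RingOfIntegers.rank, hd,
    ← pow_mul, ← pow_mul, ← pow_add, Nat.pow_dvd_pow_iff_le_right hp.one_lt] at hdvd
  omega

/-- Elements whose cube is a rational non-cube have trace zero. -/
lemma trace_eq_zero_of_pow_three {x : K} {q : ℚ} (hx : x ^ 3 = algebraMap ℚ K q)
    (hq : ∀ y : ℚ, y ^ 3 ≠ q) : Algebra.trace ℚ K x = 0 := by
  have hmin : minpoly ℚ x = Polynomial.X ^ 3 - Polynomial.C q :=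
    (minpoly.eq_of_irreducible_of_monic (X_pow_sub_C_irreducible_of_prime Nat.prime_three hq)
      (by simp [hx]) (Polynomial.monic_X_pow_sub_C q (by norm_num))).symm
  rw [trace_eq_finrank_mul_minpoly_nextCoeff, hmin]
  simp [Polynomial.nextCoeff]

/-- The rational prime `3` does not split completely: otherwise `ϑ - m` would be divisible by `3`,
while `Tr((ϑ - m)²) = 3m²`. -/
lemma primesAbove_three (hd : Module.finrank ℚ K = 3) {m : ℕ} (hm0 : m ≠ 0)
    (hfree : ∀ p : ℕ, p.Prime → ¬ p ^ 3 ∣ m) (hcube : ∀ y : ℚ, y ^ 3 ≠ m)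
    {ϑ : 𝓞 K} (hϑ : ϑ ^ 3 = (m : 𝓞 K)) :
    ∀ P ∈ primesAbove K 3, ∀ Q ∈ primesAbove K 3, ∀ R ∈ primesAbove K 3,
      P.absNorm = 3 → Q.absNorm = 3 → R.absNorm = 3 → P = Q ∨ P = R ∨ Q = R := by
  classical
  intro P hP Q hQ R hR nP nQ nR
  by_cases h3m : 3 ∣ m
  · exact Or.inl (primesAbove_eq_of_dvd hd hm0 hfree hϑ Nat.prime_three h3m hP hQ)
  by_contra! hne
  obtain ⟨hPQ, hPR, hQR⟩ := hne
  have hmem : ∀ T ∈ primesAbove K 3, T.absNorm = 3 → ϑ - m ∈ T := by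
    intro T hT nT
    have h := pow_absNorm_sub_mem hT.1 (primesAbove_ne_bot Nat.prime_three hT) ϑ
    rw [nT, hϑ] at h
    have := T.neg_mem h
    rwa [neg_sub] at this
  have hprod : ∀ x : 𝓞 K, x ∈ P → x ∈ Q → x ∈ R → P * Q * R ∣ Ideal.span {x} := by
    intro x h1 h2 h3
    have := Finset.prod_primes_dvd (s := {P, Q, R}) (Ideal.span {x}) (by
      intro T hT
      simp only [Finset.mem_insert, Finset.mem_singleton] at hT
      rcases hT with rfl | rfl | rfl
      exacts [primesAbove_prime Nat.prime_three hP, primesAbove_prime Nat.prime_three hQ,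
        primesAbove_prime Nat.prime_three hR]) (by
      intro T hT
      simp only [Finset.mem_insert, Finset.mem_singleton] at hT
      rcases hT with rfl | rfl | rfl <;> rwa [Ideal.dvd_span_singleton])
    rwa [Finset.prod_insert (by simp [hPQ, hPR]), Finset.prod_pair hQR, ← mul_assoc] at this
  have hP3 : P * Q * R = Ideal.span {(3 : 𝓞 K)} := by
    obtain ⟨J, hJ⟩ := hprod 3 (by exact_mod_cast hP.2) (by exact_mod_cast hQ.2)
      (by exact_mod_cast hR.2)
    have hN := congrArg Ideal.absNorm hJ
    have h27 : (Ideal.span {(3 : 𝓞 K)}).absNorm = 27 := by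
      have := Ideal.absNorm_span_natCast (S := 𝓞 K) 3
      rw [RingOfIntegers.rank, hd] at this
      exact_mod_cast this
    simp only [map_mul, nP, nQ, nR, h27] at hN
    have : J.absNorm = 1 := by omega
    rw [Ideal.absNorm_eq_one_iff] at this
    rw [hJ, this, Ideal.mul_top]
  have hdiv := hprod (ϑ - m) (hmem P hP nP) (hmem Q hQ nQ) (hmem R hR nR)
  rw [hP3, Ideal.dvd_span_singleton, Ideal.mem_span_singleton] at hdiv
  obtain ⟨y, hy⟩ := hdiv
  have hyK : (ϑ : K) - m = 3 * (y : K) := by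
    have := congrArg (algebraMap (𝓞 K) K) hy
    rwa [map_sub, map_mul, map_natCast, map_ofNat] at this
  have hϑK : (ϑ : K) ^ 3 = algebraMap ℚ K m := by
    have := congrArg (fun z : 𝓞 K => (z : K)) hϑ
    simpa using this
  have hm0' : (m : ℚ) ≠ 0 := by exact_mod_cast hm0
  have t1 : Algebra.trace ℚ K (ϑ : K) = 0 := trace_eq_zero_of_pow_three hϑK hcube
  have t2 : Algebra.trace ℚ K ((ϑ : K) ^ 2) = 0 := by
    refine trace_eq_zero_of_pow_three (q := (m : ℚ) ^ 2) ?_ ?_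
    · rw [← pow_mul, mul_comm 2 3, pow_mul, hϑK, map_pow]
    · intro z hz
      have hz0 : z ≠ 0 := by
        rintro rfl
        rw [zero_pow (by norm_num)] at hz
        exact pow_ne_zero 2 hm0' hz.symm
      refine hcube (m / z) ?_
      rw [div_pow, hz]
      field_simp
  have t3 : 9 * Algebra.trace ℚ K ((y : K) ^ 2) = 3 * (m : ℚ) ^ 2 := by
    have e : (9 : ℚ) • (y : K) ^ 2 = (ϑ : K) ^ 2 - (2 * m : ℚ) • (ϑ : K)
        + algebraMap ℚ K ((m : ℚ) ^ 2) := by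
      simp only [Algebra.smul_def, map_mul, map_pow, map_natCast, map_ofNat]
      have : (ϑ : K) = m + 3 * y := by rw [← hyK]; ring
      rw [this]; ring
    have := congrArg (Algebra.trace ℚ K) e
    rw [map_add, map_sub, map_smul, map_smul, t1, t2, Algebra.trace_algebraMap, hd] at this
    simpa using this
  have hintegral : IsIntegral ℤ (Algebra.trace ℚ K ((y : K) ^ 2)) :=
    Algebra.isIntegral_trace ((RingOfIntegers.isIntegral_coe y).pow 2)
  obtain ⟨z, hz⟩ := IsIntegrallyClosed.isIntegral_iff.mp hintegral
  rw [← hz] at t3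
  have h4 : 3 * z = (m : ℤ) ^ 2 := by
    have : (3 : ℚ) * (z : ℚ) = (m : ℚ) ^ 2 := by
      simp only [algebraMap_int_eq, eq_intCast] at t3
      linarith
    exact_mod_cast this
  have h5 : (3 : ℤ) ∣ (m : ℤ) := Int.prime_three.dvd_of_dvd_pow (Dvd.intro z h4)
  exact h3m (by exact_mod_cast h5)

/-- `27 m²` times an algebraic integer lies in `ℤ[ϑ]`. -/
lemma exists_polynomial (B : PowerBasis ℚ K) {m : ℕ}
    (hB : minpoly ℚ B.gen = Polynomial.X ^ 3 - Polynomial.C (m : ℚ))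
    {ϑ : 𝓞 K} (hϑ : (ϑ : K) = B.gen) (α : 𝓞 K) :
    ∃ g : Polynomial ℤ, Polynomial.aeval ϑ g = (-(27 * (m : 𝓞 K) ^ 2)) * α := by
  have hdim : B.dim = 3 := by
    rw [← B.natDegree_minpoly, hB, Polynomial.natDegree_X_pow_sub_C]
  have hd : Module.finrank ℚ K = 3 := by rw [B.finrank, hdim]
  have hN : Algebra.norm ℚ B.gen = m := by
    rw [Algebra.PowerBasis.norm_gen_eq_coeff_zero_minpoly, hB, hdim]
    simp only [Polynomial.coeff_sub, Polynomial.coeff_X_pow, Polynomial.coeff_C_zero]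
    norm_num
  have hdisc : Algebra.discr ℚ B.basis = -(27 * (m : ℚ) ^ 2) := by
    rw [Algebra.discr_powerBasis_eq_norm, hd, hB]
    have : Polynomial.aeval B.gen (Polynomial.derivative
        (Polynomial.X ^ 3 - Polynomial.C (m : ℚ))) = algebraMap ℚ K 3 * B.gen ^ 2 := by
      simp
      left; norm_num
    rw [this, map_mul, map_pow, hN, Algebra.norm_algebraMap, hd]
    norm_num
  have hmem := Algebra.discr_mul_isIntegral_mem_adjoin ℚ (R := ℤ) (B := B)
    (hϑ ▸ RingOfIntegers.isIntegral_coe ϑ) (RingOfIntegers.isIntegral_coe α)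
  rw [hdisc, Algebra.adjoin_singleton_eq_range_aeval] at hmem
  obtain ⟨g, hg⟩ := hmem
  refine ⟨g, RingOfIntegers.coe_injective ?_⟩
  have h1 : algebraMap (𝓞 K) K (Polynomial.aeval ϑ g) = Polynomial.aeval (ϑ : K) g :=
    (Polynomial.aeval_algebraMap_apply K ϑ g).symm
  rw [hϑ] at h1
  refine (h1.trans hg).trans ?_
  rw [Algebra.smul_def, map_mul, map_neg, map_neg, map_mul, map_mul, map_pow, map_pow,
    map_natCast, map_natCast, map_ofNat, map_ofNat]

/-- For `p ≡ 2 (mod 3)` the integer `m` has only one cube root modulo `p`, so there is at most one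
prime of degree one above `p`. -/
lemma primesAbove_mod_two (B : PowerBasis ℚ K) {m : ℕ} (hm0 : m ≠ 0)
    (hB : minpoly ℚ B.gen = Polynomial.X ^ 3 - Polynomial.C (m : ℚ))
    (hd : Module.finrank ℚ K = 3)
    (hfree : ∀ p : ℕ, p.Prime → ¬ p ^ 3 ∣ m)
    {ϑ : 𝓞 K} (hϑ : (ϑ : K) = B.gen) (hϑ3 : ϑ ^ 3 = (m : 𝓞 K)) :
    ∀ p : ℕ, p.Prime → p % 3 = 2 → ∀ P ∈ primesAbove K p, ∀ Q ∈ primesAbove K p,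
      P.absNorm = p → Q.absNorm = p → P = Q := by
  intro p hp hp2 P hP Q hQ nP nQ
  by_cases hpm : p ∣ m
  · exact primesAbove_eq_of_dvd hd hm0 hfree hϑ3 hp hpm hP hQ
  have hp3 : ¬ p ∣ 3 := fun h => by
    have := (Nat.prime_dvd_prime_iff_eq hp Nat.prime_three).mp h
    subst this
    simp at hp2
  obtain ⟨q, hq⟩ : ∃ q, p = 3 * q + 2 := ⟨p / 3, by omega⟩
  -- `c` is an inverse of `m ^ q` modulo `p`, where `p = 3q + 2`; then `ϑ ≡ c`.
  have hcop : IsCoprime ((m : ℤ) ^ q) (p : ℤ) := by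
    refine IsCoprime.pow_left ?_
    rw [Nat.isCoprime_iff_coprime]
    exact ((Nat.Prime.coprime_iff_not_dvd hp).mpr hpm).symm
  obtain ⟨c, v, hcv⟩ := hcop
  have hmem : ∀ T ∈ primesAbove K p, T.absNorm = p → ϑ - (c : 𝓞 K) ∈ T := by
    intro T hT nT
    have h := pow_absNorm_sub_mem hT.1 (primesAbove_ne_bot hp hT) ϑ
    have h1 : ϑ ^ T.absNorm - ϑ = ϑ * ((m : 𝓞 K) ^ q * ϑ - 1) := by
      rw [nT, hq, pow_add, pow_mul, hϑ3]; ring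
    rw [h1] at h
    have hϑT : ϑ ∉ T := by
      intro h'
      have h2 : ϑ ^ 3 ∈ T := T.pow_mem_of_mem h' 3 (by norm_num)
      rw [hϑ3] at h2
      have := (intCast_mem_primesAbove_iff hp hT (m : ℤ)).mp (by exact_mod_cast h2)
      exact hpm (by exact_mod_cast this)
    have h3 := (hT.1.mem_or_mem h).resolve_left hϑT
    have hcv' : (c : 𝓞 K) * (m : 𝓞 K) ^ q + v * (p : 𝓞 K) = 1 := by
      have := congrArg (Int.cast : ℤ → 𝓞 K) hcv
      push_cast at this
      exact this
    have h4 : ϑ - (c : 𝓞 K) = c * ((m : 𝓞 K) ^ q * ϑ - 1) + (v * ϑ) * (p : 𝓞 K) := by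
      calc ϑ - (c : 𝓞 K) = ((c : 𝓞 K) * (m : 𝓞 K) ^ q + v * (p : 𝓞 K)) * ϑ - c := by
            rw [hcv', one_mul]
        _ = _ := by ring
    rw [h4]
    exact T.add_mem (T.mul_mem_left _ h3) (T.mul_mem_left _ hT.2)
  have hle : P ≤ Q := by
    intro α hα
    obtain ⟨g, hg⟩ := exists_polynomial B hB hϑ α
    have hsub : ∀ T ∈ primesAbove K p, T.absNorm = p →
        Polynomial.aeval ϑ g - ((g.eval c : ℤ) : 𝓞 K) ∈ T := by
      intro T hT nT
      have h1 := Polynomial.sub_dvd_eval_sub ϑ (c : 𝓞 K) (g.map (Int.castRingHom (𝓞 K)))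
      have h2 : Polynomial.eval ϑ (g.map (Int.castRingHom (𝓞 K))) = Polynomial.aeval ϑ g := by
        rw [Polynomial.aeval_def, Polynomial.eval_map]; rfl
      have h3 : Polynomial.eval (c : 𝓞 K) (g.map (Int.castRingHom (𝓞 K)))
          = ((g.eval c : ℤ) : 𝓞 K) := by
        simp
      rw [h2, h3] at h1
      exact T.mem_of_dvd h1 (hmem T hT nT)
    have h1 : Polynomial.aeval ϑ g ∈ P := by rw [hg]; exact P.mul_mem_left _ hα
    have h2 : ((g.eval c : ℤ) : 𝓞 K) ∈ P := by
      have := P.sub_mem h1 (hsub P hP nP)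
      rwa [sub_sub_cancel] at this
    have h3 : ((g.eval c : ℤ) : 𝓞 K) ∈ Q :=
      (intCast_mem_primesAbove_iff hp hQ _).mpr ((intCast_mem_primesAbove_iff hp hP _).mp h2)
    have h4 : Polynomial.aeval ϑ g ∈ Q := by
      have := Q.add_mem (hsub Q hQ nQ) h3
      rwa [sub_add_cancel] at this
    rw [hg] at h4
    refine (hQ.1.mem_or_mem h4).resolve_left ?_
    intro h5
    have h6 := (intCast_mem_primesAbove_iff hp hQ (-(27 * (m : ℤ) ^ 2))).mp
      (by push_cast; exact h5)
    rw [dvd_neg] at h6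
    have h7 : p ∣ 27 * m ^ 2 := by exact_mod_cast h6
    rcases (hp.dvd_mul).mp h7 with h8 | h8
    · exact hp3 (hp.dvd_of_dvd_pow (show p ∣ 3 ^ 3 by simpa using h8))
    · exact hpm (hp.dvd_of_dvd_pow h8)
  exact (hP.1.isMaximal (primesAbove_ne_bot hp hP)).eq_of_le hQ.1.ne_top hle

end PrimesInPureCubic
end PureCubic

/-! ### An autocorrelation inequality for lattices in `ℝ × ℂ` -/

namespace PureCubic
section Lattice
open MeasureTheory

/-- Cauchy–Schwarz for the periodization of `f` on a fundamental domain of covolume `μ F`. -/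
lemma sq_lintegral_le_autocorrelation {E : Type*} [NormedAddCommGroup E] [MeasurableSpace E]
    [BorelSpace E] [SecondCountableTopology E] (μ : Measure E) [μ.IsAddLeftInvariant]
    (L : AddSubgroup E) [Countable L] {F : Set E} (hF : IsAddFundamentalDomain L F μ)
    {f : E → ENNReal} (hf : Measurable f) :
    (∫⁻ x, f x ∂μ) ^ 2 ≤ μ F * ∑' u : L, ∫⁻ x, f x * f (u + x) ∂μ := by
  set P : E → ENNReal := fun x => ∑' v : L, f (v + x) with hP
  have hfm : ∀ v : L, Measurable fun x => f (v + x) := fun v => hf.comp (measurable_const_add _)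
  have hPm : Measurable P := Measurable.tsum hfm
  have hPinv : ∀ (v : L) (x : E), P (v + x) = P x := by
    intro v x
    simp only [hP]
    rw [← (Equiv.addRight v).tsum_eq (fun w : L => f (w + x))]
    simp [add_assoc]
  have h1 : ∫⁻ x, f x ∂μ = ∫⁻ x in F, P x ∂μ := by
    rw [hF.lintegral_eq_tsum'', lintegral_tsum fun v => (hfm v).aemeasurable]
    rfl
  have h2 : ∫⁻ x in F, P x ^ 2 ∂μ = ∑' u : L, ∫⁻ x, f x * f (u + x) ∂μ := by
    have hm1 : ∀ v : L, AEMeasurable (fun x => f x * f (v + x)) μ :=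
      fun v => (hf.mul (hfm v)).aemeasurable
    have hm2 : ∀ v : L, AEMeasurable (fun x => f (v + x) * P (v + x)) (μ.restrict F) :=
      fun v => ((hfm v).mul (hPm.comp (measurable_const_add _))).aemeasurable
    rw [← lintegral_tsum hm1]
    simp_rw [ENNReal.tsum_mul_left]
    refine Eq.trans ?_ (hF.lintegral_eq_tsum'' fun x => f x * P x).symm
    refine Eq.trans ?_ (lintegral_tsum hm2)
    refine lintegral_congr fun x => ?_
    rw [sq]
    calc P x * P x = ∑' v : L, f (v + x) * P x := by rw [ENNReal.tsum_mul_right]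
      _ = ∑' v : L, f (v + x) * P (v + x) := by simp_rw [hPinv]
  have h3 := ENNReal.lintegral_mul_le_Lp_mul_Lq (μ.restrict F) (p := 2) (q := 2)
    Real.HolderConjugate.two_two (f := P) (g := fun _ => 1) hPm.aemeasurable aemeasurable_const
  simp only [Pi.mul_apply, mul_one, lintegral_const, Measure.restrict_apply_univ,
    ENNReal.rpow_ofNat] at h3
  rw [← h2, h1]
  calc _ ≤ _ := pow_le_pow_left₀ zero_le h3 2
    _ = _ := by
      rw [mul_pow, ← ENNReal.rpow_natCast, ← ENNReal.rpow_mul, ← ENNReal.rpow_natCast,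
        ← ENNReal.rpow_mul]
      norm_num [mul_comm]

/-- The test function: an interval indicator in `ℝ` times a Gaussian in `ℂ`. -/
noncomputable def testFun (A B : ℝ) (p : ℝ × ℂ) : ENNReal :=
  (Set.Icc (-(A / 2)) (A / 2)).indicator 1 p.1 * ENNReal.ofReal (Real.exp (-(2 * B) * ‖p.2‖ ^ 2))

lemma measurable_testFun (A B : ℝ) : Measurable (testFun A B) := by
  unfold testFun
  refine Measurable.mul ?_ ?_
  · exact (measurable_one.indicator measurableSet_Icc).comp measurable_fst
  · fun_prop

lemma lintegral_gaussian {B : ℝ} (hB : 0 < B) (c : ℂ) :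
    ∫⁻ z : ℂ, ENNReal.ofReal (Real.exp (-B * ‖c + z‖ ^ 2)) = ENNReal.ofReal (Real.pi / B) := by
  rw [lintegral_add_left_eq_self (fun z : ℂ => ENNReal.ofReal (Real.exp (-B * ‖z‖ ^ 2)))]
  have h := GaussianFourier.integral_rexp_neg_mul_sq_norm (V := ℂ) hB
  rw [Complex.finrank_real_complex] at h
  norm_num at h
  have hne : ∫ z : ℂ, Real.exp (-(B * ‖z‖ ^ 2)) ≠ 0 := by rw [h]; positivity
  rw [← h, ofReal_integral_eq_lintegral_ofReal (not_imp_comm.1 integral_undef hne)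
    (ae_of_all _ fun z => (Real.exp_pos _).le)]
  simp

lemma lintegral_testFun {A B : ℝ} (hA : 0 < A) (hB : 0 < B) :
    ∫⁻ p, testFun A B p = ENNReal.ofReal (A * (Real.pi / (2 * B))) := by
  unfold testFun
  rw [Measure.volume_eq_prod, lintegral_prod_mul (f := (Set.Icc (-(A / 2)) (A / 2)).indicator 1)
    (g := fun z : ℂ => ENNReal.ofReal (Real.exp (-(2 * B) * ‖z‖ ^ 2)))
    (measurable_one.indicator measurableSet_Icc).aemeasurable (by fun_prop),
    lintegral_indicator_one measurableSet_Icc, Real.volume_Icc]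
  have := lintegral_gaussian (B := 2 * B) (by positivity) 0
  simp only [zero_add] at this
  rw [this, ENNReal.ofReal_mul hA.le]
  congr 2; ring

lemma lintegral_testFun_mul (A : ℝ) {B : ℝ} (hB : 0 < B) (u : ℝ × ℂ) :
    ∫⁻ p, testFun A B p * testFun A B (u + p) =
      ENNReal.ofReal (Real.pi / (4 * B)) *
        ENNReal.ofReal ((A - |u.1|) * Real.exp (-B * ‖u.2‖ ^ 2)) := by
  set I := Set.Icc (-(A / 2)) (A / 2) with hI
  have h1 : ∀ p : ℝ × ℂ, testFun A B p * testFun A B (u + p) =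
      (I ∩ Set.Icc (-(A / 2) - u.1) (A / 2 - u.1)).indicator 1 p.1 *
      (ENNReal.ofReal (Real.exp (-B * ‖u.2‖ ^ 2)) *
        ENNReal.ofReal (Real.exp (-(4 * B) * ‖u.2 / 2 + p.2‖ ^ 2))) := by
    intro p
    have e1 : ENNReal.ofReal (Real.exp (-(2 * B) * ‖p.2‖ ^ 2)) *
        ENNReal.ofReal (Real.exp (-(2 * B) * ‖u.2 + p.2‖ ^ 2)) =
        ENNReal.ofReal (Real.exp (-B * ‖u.2‖ ^ 2)) *
        ENNReal.ofReal (Real.exp (-(4 * B) * ‖u.2 / 2 + p.2‖ ^ 2)) := by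
      rw [← ENNReal.ofReal_mul (Real.exp_pos _).le, ← ENNReal.ofReal_mul (Real.exp_pos _).le,
        ← Real.exp_add, ← Real.exp_add]
      congr 2
      simp only [← Complex.normSq_eq_norm_sq, Complex.normSq_apply, Complex.add_re,
        Complex.add_im, Complex.div_ofNat_re, Complex.div_ofNat_im]
      ring
    have e2 : I.indicator (1 : ℝ → ENNReal) p.1 * I.indicator 1 (u.1 + p.1) =
        (I ∩ Set.Icc (-(A / 2) - u.1) (A / 2 - u.1)).indicator 1 p.1 := by
      have : I.indicator (1 : ℝ → ENNReal) (u.1 + p.1) =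
          (Set.Icc (-(A / 2) - u.1) (A / 2 - u.1)).indicator 1 p.1 := by
        simp only [Set.indicator_apply, hI, Set.mem_Icc, sub_le_iff_le_add', le_sub_iff_add_le',
          Pi.one_apply]
      rw [this, Set.inter_indicator_one]
      rfl
    rw [← e1, ← e2]
    simp only [testFun, Prod.fst_add, Prod.snd_add]
    ring
  simp_rw [h1]
  rw [Measure.volume_eq_prod, lintegral_prod_mul
    (f := (I ∩ Set.Icc (-(A / 2) - u.1) (A / 2 - u.1)).indicator 1)
    (g := fun z : ℂ => ENNReal.ofReal (Real.exp (-B * ‖u.2‖ ^ 2)) *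
        ENNReal.ofReal (Real.exp (-(4 * B) * ‖u.2 / 2 + z‖ ^ 2)))
    (measurable_one.indicator (measurableSet_Icc.inter measurableSet_Icc)).aemeasurable
    (by fun_prop), lintegral_indicator_one (measurableSet_Icc.inter measurableSet_Icc),
    Set.Icc_inter_Icc, Real.volume_Icc, lintegral_const_mul _ (by fun_prop),
    lintegral_gaussian (by positivity), ENNReal.ofReal_mul' (Real.exp_pos _).le]
  have : A / 2 ⊓ (A / 2 - u.1) - (-(A / 2)) ⊔ (-(A / 2) - u.1) = A - |u.1| := by
    rcases le_total 0 u.1 with h | h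
    · rw [abs_of_nonneg h, inf_eq_right.mpr (by linarith), sup_eq_left.mpr (by linarith)]; ring
    · rw [abs_of_nonpos h, inf_eq_left.mpr (by linarith), sup_eq_right.mpr (by linarith)]; ring
  rw [this]
  ring

/-- A lattice of covolume `V` has many nonzero points `(x, z)` with `|x| ≤ s B` and `|z|² ≲ 1 / B`,
counted with weights `(s - |x| / B)₊ exp (-B |z|²)`. -/
lemma le_tsum_lattice (b : Module.Basis (Fin 3) ℝ (ℝ × ℂ)) {V s B : ℝ} (hV : 0 < V) (hs : 0 < s)
    (hB : 0 < B) (hvol : volume (ZSpan.fundamentalDomain b) = ENNReal.ofReal V) :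
    ENNReal.ofReal (s * (Real.pi * s / V - 1)) ≤
      ∑' u : {u : Submodule.span ℤ (Set.range b) // u ≠ 0},
        ENNReal.ofReal ((s - |(u : ℝ × ℂ).1| / B) * Real.exp (-B * ‖(u : ℝ × ℂ).2‖ ^ 2)) := by
  set L := Submodule.span ℤ (Set.range b)
  set h : L → ENNReal := fun u =>
    ENNReal.ofReal ((s - |(u : ℝ × ℂ).1| / B) * Real.exp (-B * ‖(u : ℝ × ℂ).2‖ ^ 2)) with hh
  have : (volume : Measure (ℝ × ℂ)).IsAddLeftInvariant := by
    rw [Measure.volume_eq_prod]; infer_instance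
  have : Countable L.toAddSubgroup := inferInstanceAs (Countable (Submodule.span ℤ (Set.range b)))
  have hc := sq_lintegral_le_autocorrelation volume L.toAddSubgroup (F := ZSpan.fundamentalDomain b)
    (ZSpan.isAddFundamentalDomain b volume) (measurable_testFun (s * B) B)
  rw [lintegral_testFun (by positivity) hB, hvol] at hc
  have h1 : ∀ u : L, ∫⁻ p, testFun (s * B) B p * testFun (s * B) B (u + p) =
      ENNReal.ofReal (Real.pi / 4) * h u := by
    intro u
    rw [lintegral_testFun_mul _ hB, hh, ← ENNReal.ofReal_mul (by positivity),
      ← ENNReal.ofReal_mul (by positivity)]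
    congr 1
    field_simp
  have h2 : ∑' u : L, ∫⁻ p, testFun (s * B) B p * testFun (s * B) B (u + p) =
      ENNReal.ofReal (Real.pi / 4) * ∑' u, h u := by
    simp_rw [h1, ENNReal.tsum_mul_left]
  have h3 : ∑' u, h u = ENNReal.ofReal s + ∑' u : {u : L // u ≠ 0}, h u := by
    rw [ENNReal.tsum_eq_add_tsum_ite 0]
    congr 1
    · simp [hh]
    · rw [show (∑' u : {u : L // u ≠ 0}, h u) = ∑' u : ({u : L | u ≠ 0} : Set L), h u from rfl,
        tsum_subtype]
      refine tsum_congr fun u => ?_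
      by_cases hu : u = 0 <;> simp [hu]
  have h4 : ENNReal.ofReal (s * B * (Real.pi / (2 * B))) ^ 2 ≤
      ENNReal.ofReal V * (ENNReal.ofReal (Real.pi / 4) * ∑' u, h u) := h2 ▸ hc
  rw [← ENNReal.ofReal_pow (by positivity), ← mul_assoc, ← ENNReal.ofReal_mul hV.le, h3] at h4
  have h5 : ENNReal.ofReal (Real.pi * s ^ 2 / V) ≤
      ENNReal.ofReal s + ∑' u : {u : L // u ≠ 0}, h u := by
    have hpos : 0 < V * (Real.pi / 4) := by positivity
    rw [← ENNReal.mul_le_mul_iff_right (a := ENNReal.ofReal (V * (Real.pi / 4)))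
      (by simpa using hpos) ENNReal.ofReal_ne_top, ← ENNReal.ofReal_mul hpos.le]
    convert h4 using 2
    field_simp
    ring
  calc _ = ENNReal.ofReal (Real.pi * s ^ 2 / V) - ENNReal.ofReal s := by
        rw [← ENNReal.ofReal_sub _ hs.le]; congr 1; field_simp
    _ ≤ _ := tsub_le_iff_left.mpr h5

/-- The standard basis `(1, 0), (0, 1), (0, i)` of `ℝ × ℂ`. -/
noncomputable def stdBasis : Module.Basis (Fin 3) ℝ (ℝ × ℂ) :=
  ((Module.Basis.singleton (Fin 1) ℝ).prod Complex.basisOneI).reindex finSumFinEquiv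

lemma stdBasis_repr (p : ℝ × ℂ) : ⇑(stdBasis.repr p) = ![p.1, p.2.re, p.2.im] := by
  ext i
  fin_cases i
  · change ((Module.Basis.singleton (Fin 1) ℝ).prod Complex.basisOneI).repr p (Sum.inl 0) = _
    simp
  · change ((Module.Basis.singleton (Fin 1) ℝ).prod Complex.basisOneI).repr p (Sum.inr 0) = _
    simp
  · change ((Module.Basis.singleton (Fin 1) ℝ).prod Complex.basisOneI).repr p (Sum.inr 1) = _
    simp

lemma volume_stdBasis : volume (ZSpan.fundamentalDomain stdBasis) = 1 := by
  have : ZSpan.fundamentalDomain stdBasis =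
      Set.Ico 0 1 ×ˢ (Complex.measurableEquivRealProd ⁻¹' (Set.Ico 0 1 ×ˢ Set.Ico 0 1)) := by
    ext p
    simp [ZSpan.mem_fundamentalDomain, stdBasis_repr, Fin.forall_fin_succ,
      Complex.measurableEquivRealProd]
  rw [this, Measure.volume_eq_prod, Measure.prod_prod,
    Complex.volume_preserving_equiv_real_prod.measure_preimage
      (measurableSet_Ico.prod measurableSet_Ico).nullMeasurableSet, Measure.volume_eq_prod,
      Measure.prod_prod]
  simp

end Lattice
end PureCubic

/-! ### The lattice of algebraic integers -/

namespace PureCubic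
section Integers
open MeasureTheory NumberField

/-- The lattice inequality for the lattice `ℤ[ϑ]`, of covolume `(3√3/2) m` in `ℝ × ℂ`, with the sum
enlarged to all nonzero algebraic integers. -/
lemma le_tsum_integers {K : Type*} [Field K] (φ₁ : K →+* ℝ) (φ₂ : K →+* ℂ)
    {m r : ℝ} (hm : 0 < m) (hr : r ^ 3 = m)
    (ϑ : 𝓞 K) (h₁ : φ₁ ϑ = r) (h₂ : φ₂ ϑ = ⟨-1 / 2 * r, √3 / 2 * r⟩) {s B : ℝ} (hs : 0 < s)
    (hB : 0 < B) :
    ENNReal.ofReal (s * (Real.pi * s / (3 * √3 / 2 * m) - 1)) ≤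
      ∑' u : {u : 𝓞 K // u ≠ 0},
        ENNReal.ofReal ((s - |φ₁ (u : 𝓞 K)| / B) * Real.exp (-B * ‖φ₂ (u : 𝓞 K)‖ ^ 2)) := by
  have h3 : √3 ^ 2 = 3 := Real.sq_sqrt (by norm_num)
  have h3' : 0 < √3 := by positivity
  set j : 𝓞 K →ₗ[ℤ] ℝ × ℂ :=
    ((φ₁.comp (algebraMap (𝓞 K) K)).toAddMonoidHom.prod
      (φ₂.comp (algebraMap (𝓞 K) K)).toAddMonoidHom).toIntLinearMap with hj
  have hjapp : ∀ u, j u = (φ₁ u, φ₂ u) := fun u => rfl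
  set v : Fin 3 → ℝ × ℂ := fun i => j (ϑ ^ (i : ℕ)) with hv
  have hdet : stdBasis.det v = 3 * √3 / 2 * m := by
    rw [Module.Basis.det_apply, Matrix.det_fin_three]
    simp only [Module.Basis.toMatrix_apply, stdBasis_repr, hv, hjapp, map_pow, h₁, h₂]
    simp [pow_two, Complex.mul_re, Complex.mul_im]
    rw [← hr]
    linear_combination (1 / 8 * r ^ 3 * √3) * h3
  have hunit : IsUnit (stdBasis.det v) := by
    rw [hdet, isUnit_iff_ne_zero]; positivity
  obtain ⟨hli, hsp⟩ := (Module.Basis.is_basis_iff_det stdBasis).mpr hunit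
  set b := Module.Basis.mk hli hsp.ge with hb
  have hbv : ⇑b = v := Module.Basis.coe_mk _ _
  have : (volume : Measure (ℝ × ℂ)).IsAddHaarMeasure := by
    rw [Measure.volume_eq_prod]; infer_instance
  have hvol : volume (ZSpan.fundamentalDomain b) = ENNReal.ofReal (3 * √3 / 2 * m) := by
    rw [ZSpan.measure_fundamentalDomain b volume stdBasis, volume_stdBasis, mul_one, hbv, hdet,
      abs_of_pos (by positivity)]
  refine (le_tsum_lattice b (by positivity) hs hB hvol).trans ?_
  have hrange : ∀ u : Submodule.span ℤ (Set.range b), ∃ x : 𝓞 K, j x = u := by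
    intro u
    have : Submodule.span ℤ (Set.range b) ≤ LinearMap.range j := by
      rw [Submodule.span_le, hbv]
      rintro _ ⟨i, rfl⟩
      exact ⟨_, rfl⟩
    exact this u.2
  choose x hx using hrange
  let g : {u : Submodule.span ℤ (Set.range b) // u ≠ 0} → {u : 𝓞 K // u ≠ 0} := fun u =>
    ⟨x u, fun h => u.2 (Subtype.ext (by rw [← hx, h, map_zero]; rfl))⟩
  have hg : Function.Injective g := by
    intro u u' h
    have h' : x u = x u' := congrArg Subtype.val h
    exact Subtype.ext (Subtype.ext (by rw [← hx, ← hx, h']))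
  refine le_trans (le_of_eq ?_) (ENNReal.tsum_comp_le_tsum_of_injective hg _)
  refine tsum_congr fun u => ?_
  have : ((u : Submodule.span ℤ (Set.range b)) : ℝ × ℂ) = (φ₁ (x u), φ₂ (x u)) := by
    rw [← hx, hjapp]
  rw [this]

variable {K : Type*} [Field K] [NumberField K]

/-- A cubic field with a real and a non-real embedding has one real and one complex place; the
norm is the corresponding product, and up to sign all units are powers of a unit `ε` with
`log |φ₂ ε|²` equal to the regulator. -/
lemma places_and_units (hd : Module.finrank ℚ K = 3) (φ₁ : K →+* ℝ) (φ₂ : K →+* ℂ)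
    (h₂ : ¬ ComplexEmbedding.IsReal φ₂) :
    (∀ u : 𝓞 K, |φ₁ u| * ‖φ₂ u‖ ^ 2 = (Ideal.span {u}).absNorm) ∧
    ∃ ε : (𝓞 K)ˣ, Real.log (‖φ₂ (ε : 𝓞 K)‖ ^ 2) = Units.regulator K ∧
      ∀ u : (𝓞 K)ˣ, ∃ k : ℤ, u = ε ^ k ∨ u = -ε ^ k := by
  classical
  set ψ : K →+* ℂ := Complex.ofRealHom.comp φ₁ with hψ
  have hψr : ComplexEmbedding.IsReal ψ := by
    ext x; simp [hψ]
  set w₁ : InfinitePlace K := InfinitePlace.mk ψ with hw₁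
  set w₂ : InfinitePlace K := InfinitePlace.mk φ₂ with hw₂
  have r1 : w₁.IsReal := ⟨ψ, hψr, rfl⟩
  have c2 : w₂.IsComplex := ⟨φ₂, h₂, rfl⟩
  have hne : w₁ ≠ w₂ := by
    intro h
    exact (InfinitePlace.not_isReal_iff_isComplex.mpr c2) (h ▸ r1)
  have hcard := InfinitePlace.card_add_two_mul_card_eq_rank K
  rw [hd] at hcard
  have p1 : 0 < InfinitePlace.nrRealPlaces K := Fintype.card_pos_iff.mpr ⟨⟨w₁, r1⟩⟩
  have p2 : 0 < InfinitePlace.nrComplexPlaces K := Fintype.card_pos_iff.mpr ⟨⟨w₂, c2⟩⟩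
  have htot : Fintype.card (InfinitePlace K) = 2 := by
    rw [InfinitePlace.card_eq_nrRealPlaces_add_nrComplexPlaces]; omega
  have huniv : (Finset.univ : Finset (InfinitePlace K)) = {w₁, w₂} := by
    symm
    apply Finset.eq_univ_of_card
    rw [Finset.card_pair hne, htot]
  have a1 : ∀ x : K, w₁ x = |φ₁ x| := fun x => by
    rw [hw₁, InfinitePlace.apply]; simp [hψ]
  have a2 : ∀ x : K, w₂ x = ‖φ₂ x‖ := fun x => InfinitePlace.apply _ _
  have hnorm : ∀ x : K, |φ₁ x| * ‖φ₂ x‖ ^ 2 = |(Algebra.norm ℚ x : ℝ)| := by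
    intro x
    have h := InfinitePlace.prod_eq_abs_norm x
    rw [huniv, Finset.prod_pair hne, InfinitePlace.mult_isReal ⟨w₁, r1⟩,
      InfinitePlace.mult_isComplex ⟨w₂, c2⟩, pow_one, a1, a2] at h
    rw [h]; push_cast; rfl
  have hnorm' : ∀ u : 𝓞 K, |φ₁ u| * ‖φ₂ u‖ ^ 2 = (Ideal.span {u}).absNorm := by
    intro u
    rw [hnorm, Ideal.absNorm_span_singleton, ← Algebra.coe_norm_int]
    simp [Nat.cast_natAbs]
  refine ⟨hnorm', ?_⟩
  have hrank : Units.rank K = 1 := by rw [Units.rank, htot]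
  have hN1 : ∀ u : (𝓞 K)ˣ, |φ₁ (u : 𝓞 K)| * ‖φ₂ (u : 𝓞 K)‖ ^ 2 = 1 := by
    intro u
    rw [hnorm', Ideal.span_singleton_eq_top.mpr u.isUnit, Ideal.absNorm_top, Nat.cast_one]
  set η : (𝓞 K)ˣ := Units.fundSystem K ⟨0, by rw [hrank]; norm_num⟩ with hη
  have hgen : ∀ u : (𝓞 K)ˣ, ∃ k : ℤ, u = η ^ k ∨ u = -η ^ k := by
    intro u
    obtain ⟨⟨ζ, e⟩, h, -⟩ := Units.exist_unique_eq_mul_prod K u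
    have hp : ∏ i, Units.fundSystem K i ^ e i = η ^ e ⟨0, by rw [hrank]; norm_num⟩ := by
      apply Fintype.prod_eq_single
      intro i hi
      exfalso
      apply hi
      apply Fin.ext
      have := i.2
      simp only [hrank] at this
      simp; omega
    refine ⟨e ⟨0, by rw [hrank]; norm_num⟩, ?_⟩
    simp only [] at h
    rw [hp] at h
    have hodd : Odd (Module.finrank ℚ K) := by rw [hd]; decide
    rcases Units.torsion_eq_one_or_neg_one_of_odd_finrank hodd ζ with hz | hz
    · left; rw [h, hz]; simp
    · right; rw [h, hz]; simp
  let huniq : Unique {w : InfinitePlace K // w ≠ w₂} :=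
    { default := ⟨w₁, hne⟩
      uniq := by
        rintro ⟨w, hw⟩
        have : w ∈ (Finset.univ : Finset (InfinitePlace K)) := Finset.mem_univ _
        rw [huniv, Finset.mem_insert, Finset.mem_singleton] at this
        exact Subtype.ext (this.resolve_right hw) }
  have hreg : Units.regulator K = |Real.log ‖φ₂ (η : 𝓞 K)‖ * 2| := by
    have e : {w : InfinitePlace K // w ≠ w₂} ≃ Fin (Units.rank K) :=
      Fintype.equivFinOfCardEq (by rw [Fintype.card_unique, hrank])
    rw [Units.regulator_eq_det K w₂ e, Matrix.det_unique]
    have he : Units.fundSystem K (e default) = η := by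
      rw [hη]; congr 1; apply Fin.ext
      have := (e default).2
      simp only [] at this ⊢
      omega
    simp only [Matrix.of_apply, he]
    have hdef : ((default : {w : InfinitePlace K // w ≠ w₂}) : InfinitePlace K) = w₁ := rfl
    rw [hdef, InfinitePlace.mult_isReal ⟨w₁, r1⟩, a1]
    have hpos : 0 < ‖φ₂ (η : 𝓞 K)‖ := by
      rw [norm_pos_iff, map_ne_zero]
      exact Units.coe_ne_zero η
    have : |φ₁ (η : 𝓞 K)| = (‖φ₂ (η : 𝓞 K)‖ ^ 2)⁻¹ := eq_inv_of_mul_eq_one_left (hN1 η)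
    rw [show |φ₁ ((η : (𝓞 K)ˣ) : K)| = _ from this, Real.log_inv, Real.log_pow]
    simp [mul_comm]
  rcases le_total 0 (Real.log ‖φ₂ (η : 𝓞 K)‖) with h0 | h0
  · refine ⟨η, ?_, hgen⟩
    rw [hreg, Real.log_pow, abs_of_nonneg (by positivity)]
    push_cast; ring
  · refine ⟨η⁻¹, ?_, ?_⟩
    · have : φ₂ ((η⁻¹ : (𝓞 K)ˣ) : 𝓞 K) = (φ₂ (η : 𝓞 K))⁻¹ := by
        rw [← map_inv₀]
        congr 1
        simp
      rw [this, norm_inv, inv_pow, Real.log_inv, Real.log_pow, hreg,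
        abs_of_nonpos (by linarith)]
      push_cast; ring
    · intro u
      obtain ⟨k, hk⟩ := hgen u
      exact ⟨-k, by simpa using hk⟩

end Integers
end PureCubic

/-! ### Unfolding over the units -/

namespace PureCubic
section Unfolding
open MeasureTheory NumberField

/-- The weight `(s - |x| / B)₊ exp (-B |z|²)` of a point with `|x| |z|² = n`, as a function of
`τ = log (B |z|²)`. -/
noncomputable def weight (s n τ : ℝ) : ENNReal :=
  ENNReal.ofReal ((s - n * Real.exp (-τ)) * Real.exp (-Real.exp τ))

lemma measurable_weight (s n : ℝ) : Measurable (weight s n) := by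
  unfold weight; fun_prop

lemma weight_eq {s x z t : ℝ} (hz : 0 < z) :
    ENNReal.ofReal ((s - x / Real.exp t) * Real.exp (-Real.exp t * z ^ 2)) =
      weight s (x * z ^ 2) (t + Real.log (z ^ 2)) := by
  unfold weight
  rw [neg_add, Real.exp_add, Real.exp_add, Real.exp_neg (Real.log _), Real.exp_log (by positivity),
    Real.exp_neg t, neg_mul]
  congr 3
  field_simp

/-- Translates of `(0, R]` by multiples of `R` tile the line. -/
lemma tsum_lintegral_translate_le (R c : ℝ) {f : ℝ → ENNReal} :
    ∑' k : ℤ, ∫⁻ t in Set.Ioc 0 R, f (t + (c + k * R)) ≤ ∫⁻ t, f t := by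
  have h1 : ∀ k : ℤ, ∫⁻ t in Set.Ioc 0 R, f (t + (c + k * R)) =
      ∫⁻ t in Set.Ioc (c + k • R) (c + (k + 1) • R), f t := by
    intro k
    have := (measurePreserving_add_right (volume : Measure ℝ) (c + k * R)).setLIntegral_comp_emb
      (measurableEmbedding_addRight (c + k * R)) f (Set.Ioc 0 R)
    rw [this, Set.image_add_const_Ioc]
    congr 3
    · simp
    · simp only [zsmul_eq_mul]; push_cast; ring
  simp_rw [h1]
  rw [← lintegral_iUnion (fun _ => measurableSet_Ioc) (Set.pairwise_disjoint_Ioc_add_zsmul c R)]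
  exact setLIntegral_le_lintegral _ _

variable {K : Type*} [Field K] [NumberField K]

/-- Integrating the lattice inequality over `log B ∈ (0, R_K]` and collecting the associates
`± ε ^ k u` of each integer `u` turns the sum over integers into a sum over ideals. -/
lemma regulator_mul_le (hd : Module.finrank ℚ K = 3) (φ₁ : K →+* ℝ) (φ₂ : K →+* ℂ)
    (h₂ : ¬ ComplexEmbedding.IsReal φ₂) {s q : ℝ}
    (h : ∀ B : ℝ, 0 < B → ENNReal.ofReal q ≤ ∑' u : {u : 𝓞 K // u ≠ 0},
        ENNReal.ofReal ((s - |φ₁ (u : 𝓞 K)| / B) * Real.exp (-B * ‖φ₂ (u : 𝓞 K)‖ ^ 2))) :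
    ENNReal.ofReal (Units.regulator K) * ENNReal.ofReal q ≤
      ∑' I : {I : Ideal (𝓞 K) // I ≠ ⊥}, 2 * ∫⁻ τ, weight s (I : Ideal (𝓞 K)).absNorm τ := by
  obtain ⟨hN, ε, hε, hunit⟩ := places_and_units hd φ₁ φ₂ h₂
  set R := Units.regulator K with hR
  have hpos : ∀ u : 𝓞 K, u ≠ 0 → 0 < ‖φ₂ u‖ := fun u hu => by
    rw [norm_pos_iff, map_ne_zero]
    exact RingOfIntegers.coe_ne_zero_iff.mpr hu
  set F : 𝓞 K → ENNReal := fun u =>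
    ∫⁻ t in Set.Ioc 0 R, weight s (Ideal.span {u}).absNorm (t + Real.log (‖φ₂ u‖ ^ 2)) with hF
  have h1 : ENNReal.ofReal R * ENNReal.ofReal q ≤ ∑' u : {u : 𝓞 K // u ≠ 0}, F u := by
    calc ENNReal.ofReal R * ENNReal.ofReal q = ∫⁻ t in Set.Ioc 0 R, ENNReal.ofReal q := by
          rw [lintegral_const, Measure.restrict_apply_univ, Real.volume_Ioc, sub_zero, mul_comm]
      _ ≤ ∫⁻ t in Set.Ioc 0 R, ∑' u : {u : 𝓞 K // u ≠ 0},
          weight s (Ideal.span {(u : 𝓞 K)}).absNorm (t + Real.log (‖φ₂ (u : 𝓞 K)‖ ^ 2)) := by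
          refine lintegral_mono fun t => (h _ (Real.exp_pos t)).trans (le_of_eq ?_)
          refine tsum_congr fun u => ?_
          rw [weight_eq (hpos u u.2), hN]
      _ = _ := by
          have : Countable {u : 𝓞 K // u ≠ 0} := by
            have : Countable (𝓞 K) := (RingOfIntegers.basis K).equivFun.injective.countable
            infer_instance
          rw [lintegral_tsum]
          intro u
          exact ((measurable_weight _ _).comp (measurable_add_const _)).aemeasurable
  refine h1.trans ?_
  let toIdeal : {u : 𝓞 K // u ≠ 0} → {I : Ideal (𝓞 K) // I ≠ ⊥} := fun u =>
    ⟨Ideal.span {(u : 𝓞 K)}, by rw [Ne, Ideal.span_singleton_eq_bot]; exact u.2⟩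
  rw [← (Equiv.sigmaFiberEquiv toIdeal).tsum_eq, ENNReal.tsum_sigma']
  refine ENNReal.tsum_le_tsum fun I => ?_
  rcases isEmpty_or_nonempty {u // toIdeal u = I} with hemp | ⟨⟨g, hg⟩⟩
  · simp
  let e : Bool × ℤ → {u // toIdeal u = I} := fun x =>
    ⟨⟨(bif x.1 then 1 else -1) * ((ε ^ x.2 : (𝓞 K)ˣ) : 𝓞 K) * g, by
      refine mul_ne_zero (mul_ne_zero ?_ (Units.ne_zero _)) g.2
      cases x.1 <;> simp⟩, by
      rw [← hg]
      apply Subtype.ext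
      simp only [toIdeal]
      rw [Ideal.span_singleton_eq_span_singleton]
      refine associated_unit_mul_left _ _ (IsUnit.mul ?_ (Units.isUnit _))
      cases x.1 <;> simp⟩
  have he : Function.Surjective e := by
    rintro ⟨u, hu⟩
    have h2 : Ideal.span {(g : 𝓞 K)} = Ideal.span {(u : 𝓞 K)} :=
      congrArg Subtype.val (hg.trans hu.symm)
    rw [Ideal.span_singleton_eq_span_singleton] at h2
    obtain ⟨v, hv⟩ := h2
    obtain ⟨k, rfl | rfl⟩ := hunit v
    · refine ⟨(true, k), Subtype.ext (Subtype.ext ?_)⟩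
      simp only [e]; rw [← hv, cond_true]; ring
    · refine ⟨(false, k), Subtype.ext (Subtype.ext ?_)⟩
      simp only [e]; rw [← hv, cond_false, Units.val_neg]; ring
  have hval : ∀ x : Bool × ℤ, F (e x : {u : 𝓞 K // u ≠ 0}) = ∫⁻ t in Set.Ioc 0 R,
      weight s (I : Ideal (𝓞 K)).absNorm
        (t + (Real.log (‖φ₂ (g : 𝓞 K)‖ ^ 2) + x.2 * R)) := by
    intro x
    have hI : Ideal.span {((e x : {u : 𝓞 K // u ≠ 0}) : 𝓞 K)} = I :=
      congrArg Subtype.val (e x).2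
    have hlog : Real.log (‖φ₂ ((e x : {u : 𝓞 K // u ≠ 0}) : 𝓞 K)‖ ^ 2) =
        Real.log (‖φ₂ (g : 𝓞 K)‖ ^ 2) + x.2 * R := by
      have hcoe : algebraMap (𝓞 K) K ((ε ^ x.2 : (𝓞 K)ˣ) : 𝓞 K) = ((ε : 𝓞 K) : K) ^ x.2 :=
        Units.coe_zpow _ _
      have hn : ‖φ₂ ((e x : {u : 𝓞 K // u ≠ 0}) : 𝓞 K)‖ =
          ‖φ₂ (ε : 𝓞 K)‖ ^ x.2 * ‖φ₂ (g : 𝓞 K)‖ := by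
        have hsign : ‖φ₂ ((bif x.1 then 1 else -1 : 𝓞 K) : K)‖ = 1 := by
          cases x.1 <;> simp
        change ‖φ₂ (algebraMap (𝓞 K) K
          ((bif x.1 then 1 else -1) * ((ε ^ x.2 : (𝓞 K)ˣ) : 𝓞 K) * g))‖ = _
        rw [map_mul, map_mul, map_mul, map_mul, norm_mul, norm_mul, hsign, one_mul, hcoe,
          map_zpow₀, norm_zpow]
      have hε0 := hpos _ (Units.ne_zero ε)
      have hg0 := hpos _ g.2
      rw [hn, mul_pow, Real.log_mul (by positivity) (by positivity), ← hε, Real.log_pow,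
        Real.log_zpow, Real.log_pow, Real.log_pow]
      ring
    simp only [hF]
    rw [hI, hlog]
  calc ∑' u : {u // toIdeal u = I}, F (Equiv.sigmaFiberEquiv toIdeal ⟨I, u⟩)
      = ∑' u : {u // toIdeal u = I}, F (u : {u : 𝓞 K // u ≠ 0}) := rfl
    _ ≤ ∑' x : Bool × ℤ, F (e x : {u : 𝓞 K // u ≠ 0}) :=
        ENNReal.tsum_le_tsum_comp_of_surjective he _
    _ = 2 * ∑' k : ℤ, ∫⁻ t in Set.Ioc 0 R, weight s (I : Ideal (𝓞 K)).absNorm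
        (t + (Real.log (‖φ₂ (g : 𝓞 K)‖ ^ 2) + k * R)) := by
        simp_rw [hval]
        rw [ENNReal.tsum_prod', tsum_fintype, Fintype.sum_bool, two_mul]
    _ ≤ _ := by
        gcongr
        exact tsum_lintegral_translate_le _ _

end Unfolding
end PureCubic

/-! ### Evaluation of the sum over ideals -/

namespace PureCubic
section Evaluation
open MeasureTheory NumberField

lemma lintegral_exp_substitution {p q : ℝ} (hp : 0 ≤ p) (hq : 0 ≤ q) :
    ∫⁻ τ, ENNReal.ofReal (Real.exp τ * ((p + q * Real.exp τ) * Real.exp (-Real.exp τ))) =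
      ENNReal.ofReal (p + q) := by
  have h1 := lintegral_image_eq_lintegral_abs_deriv_mul (s := Set.univ) MeasurableSet.univ
    (fun τ _ => (Real.hasDerivAt_exp τ).hasDerivWithinAt) Real.exp_injective.injOn
    (fun x => ENNReal.ofReal ((p + q * x) * Real.exp (-x)))
  rw [Set.image_univ, Real.range_exp, Measure.restrict_univ] at h1
  have h2 : ∀ τ : ℝ, ENNReal.ofReal |Real.exp τ| *
      ENNReal.ofReal ((p + q * Real.exp τ) * Real.exp (-Real.exp τ)) =
      ENNReal.ofReal (Real.exp τ * ((p + q * Real.exp τ) * Real.exp (-Real.exp τ))) := by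
    intro τ
    rw [abs_of_pos (Real.exp_pos τ), ENNReal.ofReal_mul (Real.exp_pos τ).le]
  simp_rw [h2] at h1
  rw [← h1]
  have i1 : IntegrableOn (fun x : ℝ => Real.exp (-x)) (Set.Ioi 0) := integrableOn_exp_neg_Ioi 0
  have i2 : IntegrableOn (fun x : ℝ => x * Real.exp (-x)) (Set.Ioi 0) := by
    have := Real.GammaIntegral_convergent (s := 2) (by norm_num)
    refine this.congr_fun (fun x hx => ?_) measurableSet_Ioi
    norm_num; ring
  have v1 : ∫ x in Set.Ioi (0 : ℝ), Real.exp (-x) = 1 := integral_exp_neg_Ioi_zero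
  have v2 : ∫ x in Set.Ioi (0 : ℝ), x * Real.exp (-x) = 1 := by
    have := Real.Gamma_eq_integral (s := 2) (by norm_num)
    rw [Real.Gamma_two] at this
    rw [this]
    refine setIntegral_congr_fun measurableSet_Ioi fun x hx => ?_
    norm_num; ring
  have e : (fun x : ℝ => (p + q * x) * Real.exp (-x)) =
      fun x => p * Real.exp (-x) + q * (x * Real.exp (-x)) := by
    ext x; ring
  have i3 : IntegrableOn (fun x : ℝ => (p + q * x) * Real.exp (-x)) (Set.Ioi 0) := by
    rw [e]; exact (i1.const_mul p).add (i2.const_mul q)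
  have v3 : ∫ x in Set.Ioi (0 : ℝ), (p + q * x) * Real.exp (-x) = p + q := by
    rw [e, integral_add (i1.const_mul p) (i2.const_mul q), integral_const_mul, integral_const_mul,
      v1, v2, mul_one, mul_one]
  rw [← v3, ofReal_integral_eq_lintegral_ofReal i3]
  filter_upwards [ae_restrict_mem measurableSet_Ioi] with x hx
  have : (0 : ℝ) < x := hx
  simp only [Pi.zero_apply]; positivity

/-- Partial summation: `∑ c n (y - n)₊ = ∫₀^y ∑_{n ≤ x} c n dx`, combined with
`log x ≤ log Y + x / Y - 1`. -/
lemma tsum_mul_sub_le {c : ℕ → ℝ} (hc : ∀ n, 0 ≤ c n) (hc0 : c 0 = 0)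
    (hsum : ∀ N : ℕ, ∑ n ∈ Finset.Ioc 0 N, c n ≤ 3 / 4 * N * (Real.log N + 4 / 3))
    {Y y : ℝ} (hY : 1 ≤ Y) (hy : 0 < y) :
    ∑' n : ℕ, ENNReal.ofReal (c n) * ENNReal.ofReal (y - n) ≤
      ENNReal.ofReal (3 / 8 * y ^ 2 * (Real.log Y + 1 / 3) + y ^ 3 / (4 * Y)) := by
  have hY0 : 0 < Y := by linarith
  have hlY : 0 ≤ Real.log Y := Real.log_nonneg hY
  have h1 : ∀ n : ℕ, ENNReal.ofReal (y - n) ≤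
      ∫⁻ x in Set.Ioc 0 y, (Set.Ici (n : ℝ)).indicator 1 x := by
    intro n
    rw [lintegral_indicator_one measurableSet_Ici, Measure.restrict_apply measurableSet_Ici,
      ← Real.volume_Ioc]
    refine measure_mono fun x hx => ⟨hx.1.le, ?_, hx.2⟩
    exact lt_of_le_of_lt (Nat.cast_nonneg n) hx.1
  have h2 : ∀ x ∈ Set.Ioc 0 y, ∑' n : ℕ, ENNReal.ofReal (c n) *
      (Set.Ici (n : ℝ)).indicator 1 x ≤
      ENNReal.ofReal (3 / 4 * (Real.log Y + 1 / 3) * x + 3 / (4 * Y) * x ^ 2) := by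
    intro x hx
    have hx0 : 0 < x := hx.1
    rw [tsum_eq_sum (s := Finset.Ioc 0 ⌊x⌋₊)]
    · have : ∀ n ∈ Finset.Ioc 0 ⌊x⌋₊, ENNReal.ofReal (c n) * (Set.Ici (n : ℝ)).indicator 1 x =
          ENNReal.ofReal (c n) := by
        intro n hn
        have : (n : ℝ) ≤ x := (Nat.le_floor_iff hx0.le).mp (Finset.mem_Ioc.mp hn).2
        rw [Set.indicator_of_mem (Set.mem_Ici.mpr this), Pi.one_apply, mul_one]
      rw [Finset.sum_congr rfl this, ← ENNReal.ofReal_sum_of_nonneg fun n _ => hc n]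
      refine ENNReal.ofReal_le_ofReal ((hsum _).trans ?_)
      set N := ⌊x⌋₊ with hN
      rcases Nat.eq_zero_or_pos N with h0 | h0
      · rw [h0]; norm_num; positivity
      have hN1 : (1 : ℝ) ≤ N := by exact_mod_cast h0
      have hNx : (N : ℝ) ≤ x := Nat.floor_le hx0.le
      have hlog : Real.log N ≤ Real.log Y + x / Y - 1 := by
        have := Real.log_le_sub_one_of_pos (x := x / Y) (by positivity)
        rw [Real.log_div hx0.ne' hY0.ne'] at this
        have := Real.log_le_log (by linarith) hNx
        linarith
      have hlN : 0 ≤ Real.log N := Real.log_nonneg hN1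
      calc 3 / 4 * (N : ℝ) * (Real.log N + 4 / 3)
          ≤ 3 / 4 * x * (Real.log Y + x / Y - 1 + 4 / 3) := by gcongr
        _ = _ := by field_simp; ring
    · intro n hn
      rw [Finset.mem_Ioc, not_and_or, not_lt, not_le] at hn
      rcases hn with hn | hn
      · rw [Nat.le_zero.mp hn, hc0]; simp
      · rw [Set.indicator_of_notMem, mul_zero]
        rw [Set.mem_Ici, not_le]
        exact Nat.lt_of_floor_lt hn
  calc _ ≤ ∑' n : ℕ, ENNReal.ofReal (c n) *
        ∫⁻ x in Set.Ioc 0 y, (Set.Ici (n : ℝ)).indicator 1 x :=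
        ENNReal.tsum_le_tsum fun n => by gcongr; exact h1 n
    _ = ∫⁻ x in Set.Ioc 0 y, ∑' n : ℕ, ENNReal.ofReal (c n) *
        (Set.Ici (n : ℝ)).indicator 1 x := by
        rw [lintegral_tsum fun n =>
          ((measurable_one.indicator measurableSet_Ici).const_mul _).aemeasurable]
        refine tsum_congr fun n => ?_
        rw [lintegral_const_mul _ (measurable_one.indicator measurableSet_Ici)]
    _ ≤ ∫⁻ x in Set.Ioc 0 y,
        ENNReal.ofReal (3 / 4 * (Real.log Y + 1 / 3) * x + 3 / (4 * Y) * x ^ 2) :=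
        setLIntegral_mono' measurableSet_Ioc h2
    _ = _ := by
        have hcont : Continuous fun x : ℝ =>
            3 / 4 * (Real.log Y + 1 / 3) * x + 3 / (4 * Y) * x ^ 2 := by fun_prop
        rw [← ofReal_integral_eq_lintegral_ofReal (hcont.integrableOn_Ioc),
          ← intervalIntegral.integral_of_le hy.le, intervalIntegral.integral_add,
          intervalIntegral.integral_const_mul, intervalIntegral.integral_const_mul, integral_id,
          integral_pow]
        · congr 1; push_cast; field_simp; ring
        · exact Continuous.intervalIntegrable (by fun_prop) _ _
        · exact Continuous.intervalIntegrable (by fun_prop) _ _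
        · filter_upwards [ae_restrict_mem measurableSet_Ioc] with x hx
          have : (0 : ℝ) < x := hx.1
          simp only [Pi.zero_apply]; positivity

lemma tsum_lintegral_weight_le {c : ℕ → ℝ} (hc : ∀ n, 0 ≤ c n) (hc0 : c 0 = 0)
    (hsum : ∀ N : ℕ, ∑ n ∈ Finset.Ioc 0 N, c n ≤ 3 / 4 * N * (Real.log N + 4 / 3))
    {Y s : ℝ} (hY : 1 ≤ Y) (hs : 0 < s) :
    ∑' n : ℕ, ENNReal.ofReal (c n) * ∫⁻ τ, weight s n τ ≤
      ENNReal.ofReal (3 / 8 * s ^ 2 * (Real.log Y + 1 / 3) + s ^ 3 / (4 * Y)) := by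
  have hY0 : 0 < Y := by linarith
  have hlY : 0 ≤ Real.log Y := Real.log_nonneg hY
  rw [← lintegral_exp_substitution (by positivity) (by positivity)]
  calc ∑' n : ℕ, ENNReal.ofReal (c n) * ∫⁻ τ, weight s n τ
      = ∫⁻ τ, ∑' n : ℕ, ENNReal.ofReal (c n) * weight s n τ := by
        rw [lintegral_tsum fun n : ℕ => ((measurable_weight s n).const_mul _).aemeasurable]
        refine tsum_congr fun n => ?_
        rw [lintegral_const_mul _ (measurable_weight s n)]
    _ ≤ _ := lintegral_mono fun τ => ?_
  have h1 : ∀ n : ℕ, weight s n τ = ENNReal.ofReal (Real.exp (-τ) * Real.exp (-Real.exp τ)) *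
      ENNReal.ofReal (s * Real.exp τ - n) := by
    intro n
    unfold weight
    rw [← ENNReal.ofReal_mul (by positivity)]
    congr 1
    rw [Real.exp_neg τ]
    field_simp
  simp_rw [h1, mul_left_comm (ENNReal.ofReal (c _)), ENNReal.tsum_mul_left]
  calc _ ≤ ENNReal.ofReal (Real.exp (-τ) * Real.exp (-Real.exp τ)) *
        ENNReal.ofReal (3 / 8 * (s * Real.exp τ) ^ 2 * (Real.log Y + 1 / 3) +
          (s * Real.exp τ) ^ 3 / (4 * Y)) := by
        gcongr
        exact tsum_mul_sub_le hc hc0 hsum hY (by positivity)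
    _ = _ := by
        rw [← ENNReal.ofReal_mul (by positivity)]
        congr 1
        rw [Real.exp_neg τ]
        field_simp

variable {K : Type*} [Field K] [NumberField K]

lemma tsum_ideals_le (f : ℕ → ENNReal) :
    ∑' I : {I : Ideal (𝓞 K) // I ≠ ⊥}, f (I : Ideal (𝓞 K)).absNorm ≤
      ∑' n : ℕ, ENNReal.ofReal (if n = 0 then 0 else
        ({I : Ideal (𝓞 K) | I.absNorm = n}.ncard : ℝ)) * f n := by
  rw [← (Equiv.sigmaFiberEquiv
    fun I : {I : Ideal (𝓞 K) // I ≠ ⊥} => (I : Ideal (𝓞 K)).absNorm).tsum_eq, ENNReal.tsum_sigma']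
  refine ENNReal.tsum_le_tsum fun n => ?_
  have h1 : ∑' I : {I : {I : Ideal (𝓞 K) // I ≠ ⊥} // (I : Ideal (𝓞 K)).absNorm = n},
      f ((I : {I : Ideal (𝓞 K) // I ≠ ⊥}) : Ideal (𝓞 K)).absNorm =
      ENat.card {I : {I : Ideal (𝓞 K) // I ≠ ⊥} // (I : Ideal (𝓞 K)).absNorm = n} * f n := by
    rw [← ENNReal.tsum_const]
    exact tsum_congr fun I => by rw [I.2]
  refine h1.le.trans ?_
  gcongr
  split_ifs with hn
  · have : IsEmpty {I : {I : Ideal (𝓞 K) // I ≠ ⊥} // (I : Ideal (𝓞 K)).absNorm = n} := by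
      refine ⟨fun I => I.1.2 ?_⟩
      rw [← Ideal.absNorm_eq_zero_iff, I.2, hn]
    rw [(ENat.card_eq_zero_iff_empty _).mpr this]
    simp
  · have hfin : {I : Ideal (𝓞 K) | I.absNorm = n}.Finite := Ideal.finite_setOfPred_absNorm_eq n
    rw [ENNReal.ofReal_natCast]
    have h2 : ENat.card {I : {I : Ideal (𝓞 K) // I ≠ ⊥} // (I : Ideal (𝓞 K)).absNorm = n} ≤
        ENat.card {I : Ideal (𝓞 K) | I.absNorm = n} :=
      ENat.card_le_card_of_injective (f := fun I => ⟨I.1.1, I.2⟩) fun I J h =>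
        Subtype.ext (Subtype.ext (Subtype.mk.inj h))
    rw [ENat.card_coe_set_eq, ← hfin.cast_ncard_eq] at h2
    exact_mod_cast h2

/-- The bound obtained from the ideal count; the choice `Y = 2s/3` balances the two terms. -/
lemma regulator_bound (hd : Module.finrank ℚ K = 3) (φ₁ : K →+* ℝ) (φ₂ : K →+* ℂ)
    (h₂ : ¬ ComplexEmbedding.IsReal φ₂)
    (hcount : ∀ n : ℕ, n ≠ 0 → ({I : Ideal (𝓞 K) | I.absNorm = n}.ncard : ℤ) ≤ cubicCoeff n)
    {s q : ℝ} (hs : 3 / 2 ≤ s)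
    (h : ∀ B : ℝ, 0 < B → ENNReal.ofReal q ≤ ∑' u : {u : 𝓞 K // u ≠ 0},
        ENNReal.ofReal ((s - |φ₁ (u : 𝓞 K)| / B) * Real.exp (-B * ‖φ₂ (u : 𝓞 K)‖ ^ 2))) :
    Units.regulator K * q ≤ 3 / 4 * s ^ 2 * (Real.log (2 * s / 3) + 4 / 3) := by
  have hR := Units.regulator_pos K
  have hlog : 0 ≤ Real.log (2 * s / 3) := Real.log_nonneg (by linarith)
  have h1 := regulator_mul_le hd φ₁ φ₂ h₂ h
  rw [ENNReal.tsum_mul_left] at h1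
  set c : ℕ → ℝ := fun n => if n = 0 then 0 else ({I : Ideal (𝓞 K) | I.absNorm = n}.ncard : ℝ)
    with hc
  have h2 : ∑' n : ℕ, ENNReal.ofReal (c n) * ∫⁻ τ, weight s n τ ≤
      ENNReal.ofReal (3 / 8 * s ^ 2 * (Real.log (2 * s / 3) + 1 / 3)
        + s ^ 3 / (4 * (2 * s / 3))) := by
    refine tsum_lintegral_weight_le (fun n => ?_) (by simp [hc]) (fun N => ?_) (by linarith)
      (by linarith)
    · simp only [hc]; split_ifs <;> positivity
    · refine le_trans (le_of_eq ?_) (sum_ncard_norm_le hcount N)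
      refine Finset.sum_congr rfl fun n hn => ?_
      simp only [hc]
      rw [if_neg (Finset.mem_Ioc.mp hn).1.ne']
  have h3 := h1.trans (mul_le_mul_right ((tsum_ideals_le fun n => ∫⁻ τ, weight s n τ).trans h2) 2)
  rw [← ENNReal.ofReal_mul hR.le, ← ENNReal.ofReal_ofNat, ← ENNReal.ofReal_mul (by norm_num),
    ENNReal.ofReal_le_ofReal_iff (by positivity)] at h3
  refine h3.trans (le_of_eq ?_)
  field_simp
  ring

end Evaluation
end PureCubic

/-! ### Pure cubic fields -/

namespace PureCubic
section Arithmetic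

lemma not_prime_pow_three_dvd {a b : ℕ} (ha : Squarefree a) (hb : Squarefree b)
    (hab : Nat.Coprime a b) (p : ℕ) (hp : p.Prime) : ¬ p ^ 3 ∣ a * b ^ 2 := by
  intro h
  have sq : ∀ {c : ℕ}, Squarefree c → ¬ p ^ 2 ∣ c := fun hc h' =>
    hp.one_lt.ne' (Nat.isUnit_iff.mp (hc p (by rwa [← sq])))
  by_cases hpb : p ∣ b
  · have hpa : ¬ p ∣ a := fun h' => hp.one_lt.ne' (Nat.eq_one_of_dvd_coprimes hab h' hpb)
    have h1 : p ^ 3 ∣ b ^ 2 :=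
      (((Nat.Prime.coprime_iff_not_dvd hp).mpr hpa).pow_left 3).dvd_of_dvd_mul_left h
    obtain ⟨c, rfl⟩ := hpb
    rw [mul_pow, pow_succ p 2] at h1
    have h2 : p ∣ c := hp.dvd_of_dvd_pow (Nat.dvd_of_mul_dvd_mul_left (pow_pos hp.pos 2) h1)
    exact sq hb (by rw [_root_.sq]; exact mul_dvd_mul_left p h2)
  · have h1 : p ^ 3 ∣ a :=
      (((Nat.Prime.coprime_iff_not_dvd hp).mpr hpb).pow 3 2).dvd_of_dvd_mul_right h
    exact sq ha ((pow_dvd_pow p (by norm_num)).trans h1)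

lemma rat_pow_three_ne {m : ℕ} (h1 : 1 < m) (hfree : ∀ p : ℕ, p.Prime → ¬ p ^ 3 ∣ m) (y : ℚ) :
    y ^ 3 ≠ m := by
  intro hy
  have hintegral : IsIntegral ℤ y := by
    refine IsIntegral.of_pow (n := 3) (by norm_num) ?_
    rw [hy]
    exact isIntegral_algebraMap (R := ℤ) (x := (m : ℤ))
  obtain ⟨z, hz⟩ := IsIntegrallyClosed.isIntegral_iff.mp hintegral
  rw [← hz] at hy
  have h2 : z ^ 3 = (m : ℤ) := by
    simp only [algebraMap_int_eq, eq_intCast] at hy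
    exact_mod_cast hy
  have h3 : z.natAbs ^ 3 = m := by
    rw [← Int.natAbs_pow, h2, Int.natAbs_natCast]
  obtain ⟨p, hp, hpz⟩ := Nat.exists_prime_and_dvd (n := z.natAbs) (by
    intro h; rw [h] at h3; omega)
  exact hfree p hp (h3 ▸ pow_dvd_pow_of_dvd hpz 3)

end Arithmetic

section Main
open NumberField

/-- The theorem for an abstract cubic field generated by a cube root of `m`. -/
lemma regulator_lt {K : Type*} [Field K] [NumberField K] (P : PowerBasis ℚ K) {m : ℕ} (h1 : 1 < m)
    (hP : minpoly ℚ P.gen = Polynomial.X ^ 3 - Polynomial.C (m : ℚ))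
    (hfree : ∀ p : ℕ, p.Prime → ¬ p ^ 3 ∣ m) (φ₁ : K →+* ℝ) :
    Units.regulator K < m * Real.log (6 * m) := by
  have hm0 : m ≠ 0 := by omega
  have hm2 : (2 : ℝ) ≤ m := by exact_mod_cast h1
  have hcube := rat_pow_three_ne h1 hfree
  have hd : Module.finrank ℚ K = 3 := by
    rw [P.finrank, ← P.natDegree_minpoly, hP, Polynomial.natDegree_X_pow_sub_C]
  have hgen : P.gen ^ 3 = (m : K) := by
    have := minpoly.aeval ℚ P.gen
    rw [hP] at this
    simpa [sub_eq_zero] using this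
  have hintegral : IsIntegral ℤ P.gen := by
    refine IsIntegral.of_pow (n := 3) (by norm_num) ?_
    rw [hgen]
    exact_mod_cast isIntegral_algebraMap (R := ℤ) (A := K) (x := (m : ℤ))
  obtain ⟨ϑ, hϑ⟩ : ∃ ϑ : 𝓞 K, (ϑ : K) = P.gen := ⟨⟨P.gen, hintegral⟩, rfl⟩
  have hϑ3 : ϑ ^ 3 = (m : 𝓞 K) := by
    apply RingOfIntegers.coe_injective
    rw [map_pow, map_natCast, ← hgen, ← hϑ]
  set r : ℝ := φ₁ ϑ with hr
  have hr3 : r ^ 3 = m := by rw [hr, hϑ, ← map_pow, hgen, map_natCast]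
  have hr0 : r ≠ 0 := by
    intro h
    rw [h] at hr3
    norm_num at hr3
    exact hm0 (by exact_mod_cast hr3.symm)
  have h3 : √3 ^ 2 = 3 := Real.sq_sqrt (by norm_num)
  set z : ℂ := ⟨-1 / 2 * r, √3 / 2 * r⟩ with hz
  have hz3 : z ^ 3 = m := by
    have : (m : ℂ) = ((r ^ 3 : ℝ) : ℂ) := by rw [hr3]; simp
    rw [this]
    apply Complex.ext
    · simp [pow_succ, hz, Complex.mul_re, Complex.mul_im]
      linear_combination (3 / 8 * r ^ 3) * h3
    · simp [pow_succ, hz, Complex.mul_re, Complex.mul_im]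
      linear_combination (-1 / 8 * r ^ 3 * √3) * h3
  obtain ⟨φ₂, hφ₂⟩ : ∃ φ₂ : K →+* ℂ, φ₂ ϑ = z :=
    ⟨(P.lift z (by rw [hP]; simp [hz3])).toRingHom, by rw [hϑ]; exact P.lift_gen _ _⟩
  have hnr : ¬ ComplexEmbedding.IsReal φ₂ := by
    intro h
    have h4 := RingHom.congr_fun h (ϑ : K)
    rw [ComplexEmbedding.conjugate_coe_eq, hφ₂, Complex.conj_eq_iff_im] at h4
    have : √3 / 2 * r = 0 := h4
    have h5 : √3 ≠ 0 := by positivity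
    simp [hr0] at this
  have hmain := regulator_bound hd φ₁ φ₂ hnr
    (ncard_norm_le hd (primesAbove_mod_two P hm0 hP hd hfree hϑ hϑ3)
      (primesAbove_three hd hm0 hfree hcube hϑ3))
    (s := 3 * m) (by linarith)
    (fun B hB => le_tsum_integers φ₁ φ₂ (by linarith) hr3 ϑ hr.symm hφ₂ (by linarith) hB)
  set R := Units.regulator K
  have hR : 0 < R := Units.regulator_pos K
  -- `π s / V = 2π / √3 > 3.6`
  have hq : (2.6 : ℝ) ≤ Real.pi * (3 * m) / (3 * √3 / 2 * m) - 1 := by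
    have hs3 : √3 ≤ 1.7321 := Real.sqrt_le_iff.mpr ⟨by norm_num, by norm_num⟩
    have hpi := Real.pi_gt_d2
    rw [le_sub_iff_add_le, le_div_iff₀ (by positivity)]
    nlinarith
  have e1 : 2 * (3 * (m : ℝ)) / 3 = 2 * m := by ring
  have e2 : Real.log (6 * m) = Real.log 3 + Real.log (2 * m) := by
    rw [← Real.log_mul (by norm_num) (by positivity)]; ring_nf
  have hl3 : 1.09 < Real.log 3 := by
    have := Real.log_three_gt_d9
    linarith
  have hl : 1.38 ≤ Real.log (2 * m) := by
    have h4 : Real.log 4 = 2 * Real.log 2 := by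
      rw [show (4 : ℝ) = 2 ^ 2 by norm_num, Real.log_pow]; norm_num
    have := Real.log_two_gt_d9
    have := Real.log_le_log (by norm_num : (0 : ℝ) < 4) (by linarith : (4 : ℝ) ≤ 2 * m)
    linarith
  rw [e1] at hmain
  set l := Real.log (2 * m)
  have hmain' : R * (3 * m * 2.6) ≤ 3 / 4 * (3 * m) ^ 2 * (l + 4 / 3) := by
    refine le_trans ?_ hmain
    gcongr
  have hmpos : (0 : ℝ) < m := by linarith
  have hfin : R * 2.6 ≤ 9 / 4 * m * (l + 4 / 3) := by
    have : 3 * (m : ℝ) * (R * 2.6) ≤ 3 * m * (9 / 4 * m * (l + 4 / 3)) := by linarith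
    exact le_of_mul_le_mul_left this (by positivity)
  rw [e2]
  have : 9 / 4 * m * (l + 4 / 3) < (m : ℝ) * (Real.log 3 + l) * 2.6 := by
    rw [mul_comm (9 / 4 : ℝ), mul_assoc, mul_assoc]
    exact mul_lt_mul_of_pos_left (by linarith) hmpos
  linarith

end Main
end PureCubic

open IntermediateField

/-- For coprime squarefree positive integers `a, b` with `m = a·b² > 1`, the pure
cubic field `K = ℚ(m^{1/3})` has regulator satisfying `R_K < m·log(6m)`. -/
theorem stmt_12 (a b m : ℕ) (ha : Squarefree a) (hb : Squarefree b)
    (hab : Nat.Coprime a b) (hm : m = a * b ^ 2) (h1 : 1 < m)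
    (K : IntermediateField ℚ ℝ) (hK : K = ℚ⟮((m : ℝ) ^ ((1 : ℝ) / 3) : ℝ)⟯)
    [NumberField K] :
    NumberField.Units.regulator K < (m : ℝ) * Real.log (6 * m) := by
  have hfree : ∀ p : ℕ, p.Prime → ¬ p ^ 3 ∣ m := by
    rw [hm]; exact PureCubic.not_prime_pow_three_dvd ha hb hab
  subst hK
  set r : ℝ := (m : ℝ) ^ ((1 : ℝ) / 3) with hr
  have hr3 : r ^ 3 = m := by
    rw [hr, ← Real.rpow_natCast, ← Real.rpow_mul (Nat.cast_nonneg m)]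
    norm_num
  have hmin : minpoly ℚ r = Polynomial.X ^ 3 - Polynomial.C (m : ℚ) :=
    (minpoly.eq_of_irreducible_of_monic
      (X_pow_sub_C_irreducible_of_prime Nat.prime_three (PureCubic.rat_pow_three_ne h1 hfree))
      (by simp [hr3]) (Polynomial.monic_X_pow_sub_C _ (by norm_num))).symm
  have hintegral : IsIntegral ℚ r := by
    by_contra h
    rw [minpoly.eq_zero h] at hmin
    exact (Polynomial.monic_X_pow_sub_C (m : ℚ) (by norm_num : 3 ≠ 0)).ne_zero hmin.symm
  refine PureCubic.regulator_lt (adjoin.powerBasis hintegral) h1 ?_ hfree (algebraMap ℚ⟮r⟯ ℝ)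
  rw [adjoin.powerBasis_gen]
  exact (minpoly_gen ℚ r).trans hmin
end

section
/- Let m ≥ 2 be an integer such that the real fourth root m^{1/4} has degree 4 over ℚ, and let K = ℚ(m^{1/4}). Then the regulator R_K of K satisfies R_K < 15·m^{3/2}·(log(8m))³. -/
open IntermediateField

/-!
The regulator `R_K` is the covolume of the unit lattice in the logarithmic space, which is a plane
because `K = ℚ(m^{1/4})` has two real places and one complex place (`signature_eq`). The covolume is
bounded by covering the plane, modulo the unit lattice, with triangles.

Let `X` be such that every box of the Minkowski space whose sides have product `X` (sides at the
complex place counted twice) contains a nonzero integer. A point of the logarithmic plane is the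
same thing as such a box, and an integer `α` lies in the box exactly when the point lies in a certain
triangle attached to `α` (`coverSet`), of area `(log (X / N))² / 2` with `N` the norm of `α`, and empty
if `N ≥ X`. Multiplying `α` by a unit translates its triangle by the corresponding lattice vector, so one
generator for each principal ideal of norm at most `X` suffices, and `R_K` is at most the sum of
`(log (X / N I))² / 2` over the nonzero ideals `I` of norm at most `X` (`regulator_le_sum`).

At most four primes lie over each rational prime, so the ideals of norm `n` inject into the
factorizations `n = abcd` (`sum_ideals_le`). Four successive comparisons of sums with integrals bound the
resulting fourfold sum by `X (L² / 2 + L³ / 6)`, where `L = log X` (`sum_weight_four`).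

The discriminant of `K` is at most that of `x⁴ - m`, namely `256 m³` in absolute value
(`abs_discr_le`), and Minkowski's theorem then allows `X = 11 m^{3/2}` (`minkowskiBound_lt`).
Here `L ≤ (3/2) log (8m)`, and `log (8m) ≥ log 16` absorbs the quadratic term.
-/

open Finset NumberField MeasureTheory UniqueFactorizationMonoid
open NumberField.InfinitePlace NumberField.Units NumberField.mixedEmbedding
open NumberField.Units.dirichletUnitTheorem
open scoped NNReal ENNReal Pointwise

/-! ### Fourfold divisor sums -/

/-- The function that is `h` on `[1, ∞)` and zero elsewhere. -/
noncomputable def cutoff (h : ℝ → ℝ) (y : ℝ) : ℝ := if 1 ≤ y then h y else 0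

lemma cutoff_nonneg {h : ℝ → ℝ} (hh : ∀ y, 1 ≤ y → 0 ≤ h y) (y : ℝ) : 0 ≤ cutoff h y := by
  unfold cutoff
  split_ifs with hy
  exacts [hh y hy, le_rfl]

/-- Comparison of a sum with an integral. The hypotheses `y D'(y) - D(y) = h(y)` and `D(1) = 0` say
that `D(X) = ∫₁^X h(X/t) dt`: the function `t ↦ -t D(X/t)` is a primitive of `t ↦ h(X/t)` that
vanishes at `t = X`. -/
lemma sum_div_le {h D D' : ℝ → ℝ} (hmono : MonotoneOn h (Set.Ici 1))
    (hnn : ∀ y, 1 ≤ y → 0 ≤ h y) (hD : ∀ y, 1 ≤ y → HasDerivAt D (D' y) y)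
    (hode : ∀ y, 1 ≤ y → y * D' y - D y = h y) (hD1 : D 1 = 0) {X : ℝ} (hX : 1 ≤ X)
    (M : ℕ) (hM1 : 1 ≤ M) (hM : (M : ℝ) ≤ X) :
    ∑ n ∈ Icc 1 M, h (X / n) ≤ h X + D X := by
  set Φ : ℝ → ℝ := fun t => -(t * D (X / t)) with hΦ
  have hder : ∀ t : ℝ, 1 ≤ t → t ≤ X → HasDerivAt Φ (h (X / t)) t := by
    intro t ht htX
    have ht0 : t ≠ 0 := by positivity
    have h1 : 1 ≤ X / t := by rw [le_div_iff₀ (by positivity)]; linarith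
    have hq : HasDerivAt (fun t : ℝ => X / t) (-X / t ^ 2) t := by
      have := (hasDerivAt_inv ht0).const_mul X
      simp only [← div_eq_mul_inv] at this
      exact this.congr_deriv (by ring)
    have hc := (hD _ h1).comp t hq
    have := ((hasDerivAt_id t).mul hc).neg
    refine this.congr_deriv ?_
    rw [← hode _ h1]
    simp only [Function.comp, id]
    field_simp
    ring
  have hcont : ∀ a b : ℝ, 1 ≤ a → b ≤ X → ContinuousOn Φ (Set.Icc a b) := fun a b ha hb t ht =>
    (hder t (ha.trans ht.1) (ht.2.trans hb)).continuousAt.continuousWithinAt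
  have hstep : ∀ a b : ℝ, 1 ≤ a → a < b → b ≤ X → h (X / b) * (b - a) ≤ Φ b - Φ a := by
    intro a b ha hab hb
    obtain ⟨c, hc, hc'⟩ := exists_hasDerivAt_eq_slope Φ (fun t => h (X / t)) hab (hcont a b ha hb)
      (fun x hx => hder x (ha.trans hx.1.le) (hx.2.le.trans hb))
    have hba : 0 < b - a := by linarith
    have hb1 : 1 ≤ X / b := by rw [le_div_iff₀ (by linarith)]; linarith
    have hcpos : 0 < c := by linarith [hc.1]
    have hbc : X / b ≤ X / c := div_le_div_of_nonneg_left (by linarith) hcpos hc.2.le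
    have hle : h (X / b) ≤ h (X / c) := hmono hb1 (hb1.trans hbc) hbc
    rw [eq_div_iff hba.ne'] at hc'
    rw [← hc']
    exact mul_le_mul_of_nonneg_right hle hba.le
  have hΦ1 : Φ 1 = - D X := by simp [hΦ]
  have key : ∀ M : ℕ, 1 ≤ M → (M : ℝ) ≤ X →
      ∑ n ∈ Icc 1 M, h (X / n) ≤ h X + D X + Φ M := by
    intro M hM1
    induction M, hM1 using Nat.le_induction with
    | base => intro _; simp [hΦ1]
    | succ M hM1 ih =>
      intro hM
      rw [sum_Icc_succ_top (by omega)]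
      push_cast at hM ⊢
      have h1 := ih (by linarith)
      have h2 := hstep M (M + 1) (by exact_mod_cast hM1) (by linarith) hM
      linarith
  have hΦX : Φ X = 0 := by
    simp [hΦ, div_self (by positivity : X ≠ 0), hD1]
  have hΦM : Φ M ≤ 0 := by
    rcases hM.eq_or_lt with h | h
    · rw [h, hΦX]
    · have h2 := hstep M X (by exact_mod_cast hM1) h le_rfl
      have := mul_nonneg (hnn (X / X) (by rw [div_self (by positivity)])) (sub_nonneg.2 hM)
      linarith
  linarith [key M hM1 hM]

/-- The form of `sum_div_le` that can be iterated: since `h` is cut off below `1`, the range of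
summation is arbitrary, and `H = h + D` is the weight for the next summation. -/
lemma sum_cutoff_le {h D D' H : ℝ → ℝ} (hmono : MonotoneOn h (Set.Ici 1))
    (hnn : ∀ y, 1 ≤ y → 0 ≤ h y) (hD : ∀ y, 1 ≤ y → HasDerivAt D (D' y) y)
    (hode : ∀ y, 1 ≤ y → y * D' y - D y = h y) (hD1 : D 1 = 0)
    (hH : ∀ y, 1 ≤ y → h y + D y = H y) {X : ℝ} (hX : 0 ≤ X) (N : ℕ) :
    ∑ n ∈ Icc 1 N, cutoff h (X / n) ≤ cutoff H X := by
  have hzero : ∀ n : ℕ, 1 ≤ n → X < n → cutoff h (X / n) = 0 := by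
    intro n hn hlt
    have hn' : (0 : ℝ) < n := by exact_mod_cast hn
    rw [cutoff, if_neg (by rw [not_le, div_lt_one hn']; exact hlt)]
  rcases lt_or_ge X 1 with hX1 | hX1
  · rw [sum_eq_zero, cutoff, if_neg (by linarith)]
    intro n hn
    rw [mem_Icc] at hn
    exact hzero n hn.1 (hX1.trans_le (by exact_mod_cast hn.1))
  · rw [cutoff, if_pos hX1, ← hH X hX1]
    have hfl : 1 ≤ ⌊X⌋₊ := Nat.le_floor (by exact_mod_cast hX1)
    refine le_trans ?_ (sum_div_le hmono hnn hD hode hD1 hX1 ⌊X⌋₊ hfl (Nat.floor_le hX))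
    have hcongr : ∑ n ∈ Icc 1 ⌊X⌋₊, h (X / n) = ∑ n ∈ Icc 1 ⌊X⌋₊, cutoff h (X / n) := by
      refine sum_congr rfl fun n hn => ?_
      rw [mem_Icc] at hn
      have hn' : (0 : ℝ) < n := by exact_mod_cast hn.1
      rw [cutoff, if_pos]
      rw [le_div_iff₀ hn', one_mul]
      exact (Nat.le_floor_iff hX).1 hn.2
    rw [hcongr]
    rw [← sum_filter_add_sum_filter_not (Icc 1 N) (fun n => n ≤ ⌊X⌋₊)]
    have h2 : ∑ n ∈ (Icc 1 N).filter (fun n => ¬ n ≤ ⌊X⌋₊), cutoff h (X / n) = 0 := by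
      refine sum_eq_zero fun n hn => ?_
      rw [mem_filter, mem_Icc, not_le] at hn
      exact hzero n hn.1.1 ((Nat.floor_lt hX).1 hn.2)
    rw [h2, add_zero]
    refine sum_le_sum_of_subset_of_nonneg ?_ fun n _ _ => cutoff_nonneg hnn _
    intro n hn
    simp only [mem_filter, mem_Icc] at hn ⊢
    exact ⟨hn.1.1, hn.2⟩

/-- The area of the triangle attached to an ideal of norm `n` is `weight0 (X / n)`. -/
noncomputable def weight0 (y : ℝ) : ℝ := Real.log y ^ 2 / 2

/-- A bound, at `X`, for the sum of `weight0 (X / n)` over `n ≤ X`. -/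
noncomputable def weight1 (y : ℝ) : ℝ := y - 1 - Real.log y

/-- A bound, at `X`, for the sum of `weight1 (X / n)` over `n ≤ X`. -/
noncomputable def weight2 (y : ℝ) : ℝ := y * Real.log y - y + 1

/-- A bound, at `X`, for the sum of `weight2 (X / n)` over `n ≤ X`. -/
noncomputable def weight3 (y : ℝ) : ℝ := y * Real.log y ^ 2 / 2

/-- A bound, at `X`, for the sum of `weight3 (X / n)` over `n ≤ X`, hence
for the sum of `weight0 (X / (abcd))` over all positive integers `a, b, c, d` with `abcd ≤ X`. -/
noncomputable def weight4 (y : ℝ) : ℝ := y * (Real.log y ^ 2 / 2 + Real.log y ^ 3 / 6)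

lemma monotoneOn_Ici_one {h h' : ℝ → ℝ} (hd : ∀ y, 1 ≤ y → HasDerivAt h (h' y) y)
    (hn : ∀ y, 1 ≤ y → 0 ≤ h' y) : MonotoneOn h (Set.Ici 1) := by
  refine monotoneOn_of_hasDerivWithinAt_nonneg (f' := h') (convex_Ici 1)
    (fun y hy => (hd y hy).continuousAt.continuousWithinAt) (fun y hy => ?_) (fun y hy => ?_)
  · exact (hd y (interior_subset hy)).hasDerivWithinAt
  · exact hn y (interior_subset hy)

lemma nonneg_of_monotoneOn {h : ℝ → ℝ} (hm : MonotoneOn h (Set.Ici 1)) (h1 : h 1 = 0) :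
    ∀ y, 1 ≤ y → 0 ≤ h y := fun _ hy => h1 ▸ hm (Set.mem_Ici.2 le_rfl) hy hy

lemma sum_weight0 {X : ℝ} (hX : 0 ≤ X) (N : ℕ) :
    ∑ n ∈ Icc 1 N, cutoff weight0 (X / n) ≤ cutoff weight1 X := by
  have hm : MonotoneOn weight0 (Set.Ici 1) := by
    refine monotoneOn_Ici_one (h' := fun y => Real.log y / y) (fun y _ => ?_)
      (fun y hy => div_nonneg (Real.log_nonneg hy) (by linarith))
    refine HasDerivAt.congr_deriv
      (((Real.hasDerivAt_log (x := y) (by positivity)).pow 2).div_const 2) ?_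
    simp; ring
  refine sum_cutoff_le (D := fun y => y - 1 - Real.log y - Real.log y ^ 2 / 2)
    (D' := fun y => 1 - y⁻¹ - Real.log y / y) hm (nonneg_of_monotoneOn hm (by simp [weight0]))
    (fun y hy => ?_) (fun y hy => ?_) (by simp) (fun y hy => ?_) hX N
  · have hl := Real.hasDerivAt_log (x := y) (by positivity)
    refine HasDerivAt.congr_deriv
      ((((hasDerivAt_id y).sub_const 1).sub hl).sub ((hl.pow 2).div_const 2)) ?_
    simp; ring
  · simp only [weight0]; field_simp; ring
  · simp only [weight0, weight1]; ring

lemma sum_weight1 {X : ℝ} (hX : 0 ≤ X) (N : ℕ) :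
    ∑ n ∈ Icc 1 N, cutoff weight1 (X / n) ≤ cutoff weight2 X := by
  have hm : MonotoneOn weight1 (Set.Ici 1) := by
    refine monotoneOn_Ici_one (h' := fun y => 1 - y⁻¹) (fun y hy => ?_)
      (fun y hy => sub_nonneg.2 (inv_le_one_of_one_le₀ hy))
    exact ((hasDerivAt_id y).sub_const 1).sub (Real.hasDerivAt_log (x := y) (by positivity))
  refine sum_cutoff_le (D := fun y => y * Real.log y - 2 * y + 2 + Real.log y)
    (D' := fun y => Real.log y - 1 + y⁻¹) hm (nonneg_of_monotoneOn hm (by simp [weight1]))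
    (fun y hy => ?_) (fun y hy => ?_) (by simp) (fun y hy => ?_) hX N
  · have hl := Real.hasDerivAt_log (x := y) (by positivity)
    refine HasDerivAt.congr_deriv
      (((((hasDerivAt_id y).mul hl).sub ((hasDerivAt_id y).const_mul 2)).add_const 2).add hl) ?_
    simp; field_simp; ring
  · simp only [weight1]; field_simp; ring
  · simp only [weight1, weight2]; ring

lemma sum_weight2 {X : ℝ} (hX : 0 ≤ X) (N : ℕ) :
    ∑ n ∈ Icc 1 N, cutoff weight2 (X / n) ≤ cutoff weight3 X := by
  have hm : MonotoneOn weight2 (Set.Ici 1) := by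
    refine monotoneOn_Ici_one (h' := fun y => Real.log y) (fun y hy => ?_)
      (fun y hy => Real.log_nonneg hy)
    have hl := Real.hasDerivAt_log (x := y) (by positivity)
    refine HasDerivAt.congr_deriv
      ((((hasDerivAt_id y).mul hl).sub (hasDerivAt_id y)).add_const 1) ?_
    simp; field_simp; ring
  refine sum_cutoff_le (D := fun y => y * Real.log y ^ 2 / 2 - y * Real.log y + y - 1)
    (D' := fun y => Real.log y ^ 2 / 2) hm (nonneg_of_monotoneOn hm (by simp [weight2]))
    (fun y hy => ?_) (fun y hy => ?_) (by simp) (fun y hy => ?_) hX N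
  · have hl := Real.hasDerivAt_log (x := y) (by positivity)
    refine HasDerivAt.congr_deriv
      ((((((hasDerivAt_id y).mul (hl.pow 2)).div_const 2).sub ((hasDerivAt_id y).mul hl)).add
      (hasDerivAt_id y)).sub_const 1) ?_
    simp; field_simp; ring
  · simp only [weight2]; ring
  · simp only [weight2, weight3]; ring

lemma sum_weight3 {X : ℝ} (hX : 0 ≤ X) (N : ℕ) :
    ∑ n ∈ Icc 1 N, cutoff weight3 (X / n) ≤ cutoff weight4 X := by
  have hm : MonotoneOn weight3 (Set.Ici 1) := by
    refine monotoneOn_Ici_one (h' := fun y => Real.log y ^ 2 / 2 + Real.log y) (fun y hy => ?_)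
      (fun y hy => add_nonneg (by positivity) (Real.log_nonneg hy))
    have hl := Real.hasDerivAt_log (x := y) (by positivity)
    refine HasDerivAt.congr_deriv
      ((((hasDerivAt_id y).mul (hl.pow 2)).div_const 2)) ?_
    simp; field_simp
  refine sum_cutoff_le (D := fun y => y * Real.log y ^ 3 / 6)
    (D' := fun y => Real.log y ^ 3 / 6 + Real.log y ^ 2 / 2) hm
    (nonneg_of_monotoneOn hm (by simp [weight3]))
    (fun y hy => ?_) (fun y hy => ?_) (by simp) (fun y hy => ?_) hX N
  · have hl := Real.hasDerivAt_log (x := y) (by positivity)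
    refine HasDerivAt.congr_deriv
      ((((hasDerivAt_id y).mul (hl.pow 3)).div_const 6)) ?_
    simp; field_simp; ring
  · simp only [weight3]; ring
  · simp only [weight3, weight4]; ring

lemma sum_weight_four {X : ℝ} (hX : 0 ≤ X) (N : ℕ) :
    ∑ a ∈ Icc 1 N, ∑ b ∈ Icc 1 N, ∑ c ∈ Icc 1 N, ∑ d ∈ Icc 1 N,
      cutoff weight0 (X / a / b / c / d) ≤ cutoff weight4 X := by
  refine le_trans (sum_le_sum fun a _ => ?_) (sum_weight3 hX N)
  refine le_trans (sum_le_sum fun b _ => ?_) (sum_weight2 (X := X / a) (by positivity) N)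
  refine le_trans (sum_le_sum fun c _ => ?_) (sum_weight1 (X := X / a / b) (by positivity) N)
  exact sum_weight0 (by positivity) N

/-! ### Counting ideals by four-term factorizations of the norm -/

/-- At most four primes lie over each rational prime, so the primes of `𝓞 K` can be labelled by
`Fin 4` in such a way that a prime is determined by its label and the rational prime below it. -/
lemma exists_primes_label (K : Type*) [Field K] [NumberField K] (hdim : Module.finrank ℚ K = 4) :
    ∃ l : Ideal (𝓞 K) → Fin 4, ∀ P Q : Ideal (𝓞 K), P.IsPrime → Q.IsPrime → P ≠ ⊥ →
      P.under ℤ = Q.under ℤ → l P = l Q → P = Q := by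
  classical
  have hcard : ∀ p : Ideal ℤ, p.IsPrime → p ≠ ⊥ →
      ∃ l : Ideal (𝓞 K) → Fin 4, Set.InjOn l (p.primesOver (𝓞 K)) := by
    intro p hp hp0
    have hmax : p.IsMaximal := hp.isMaximal hp0
    have hfin := IsDedekindDomain.primesOver_finite p (𝓞 K)
    have : Fintype (p.primesOver (𝓞 K)) := hfin.fintype
    have hsum := Ideal.sum_ramification_inertia_eq_finrank p (𝓞 K)
    rw [RingOfIntegers.rank, hdim] at hsum
    have hle : Fintype.card (p.primesOver (𝓞 K)) ≤ 4 := by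
      rw [← hsum, Fintype.card_eq_sum_ones]
      refine sum_le_sum fun q _ => ?_
      have : q.1.IsPrime := q.2.1
      exact Nat.mul_pos (q.1.ramificationIdx_pos ℤ) (q.1.inertiaDeg_pos ℤ)
    obtain ⟨e⟩ := Function.Embedding.nonempty_of_card_le (α := p.primesOver (𝓞 K)) (β := Fin 4)
      (by rwa [Fintype.card_fin])
    refine ⟨fun P => if h : P ∈ p.primesOver (𝓞 K) then e ⟨P, h⟩ else 0, fun P hP Q hQ h => ?_⟩
    simp only [dif_pos hP, dif_pos hQ] at h
    exact congrArg Subtype.val (e.injective h)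
  choose! l hl using hcard
  refine ⟨fun P => l (P.under ℤ) P, fun P Q hP hQ hP0 hunder h => ?_⟩
  have hu : P.under ℤ ≠ ⊥ := fun h0 => hP0 (Ideal.eq_bot_of_comap_eq_bot h0)
  refine hl (P.under ℤ) inferInstance hu ⟨hP, ⟨rfl⟩⟩ ⟨hQ, ⟨hunder⟩⟩ ?_
  simpa [hunder] using h

/-- The rational prime `p` below `P` generates `P ∩ ℤ` and is the only prime dividing the norm. -/
lemma exists_prime_below (K : Type*) [Field K] [NumberField K] (P : Ideal (𝓞 K)) (hP : P.IsPrime)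
    (hP0 : P ≠ ⊥) : ∃ p : ℕ, p.Prime ∧ p ∣ Ideal.absNorm P ∧ P.under ℤ = Ideal.span {(p : ℤ)} ∧
      ∀ q : ℕ, q.Prime → q ∣ Ideal.absNorm P → q = p := by
  have hu : P.under ℤ ≠ ⊥ := fun h0 => hP0 (Ideal.eq_bot_of_comap_eq_bot h0)
  obtain ⟨z, hz⟩ := (IsPrincipalIdealRing.principal (P.under ℤ)).principal
  have hz' : P.under ℤ = Ideal.span {z} := hz
  have hspan : P.under ℤ = Ideal.span {(z.natAbs : ℤ)} := by
    rw [hz', Int.span_natAbs]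
  have hprime : z.natAbs.Prime := by
    have h1 : (P.under ℤ).IsPrime := inferInstance
    rw [hz', Ideal.span_singleton_prime (by rintro rfl; simp at hz'; exact hu hz')] at h1
    exact Int.prime_iff_natAbs_prime.1 h1
  have hl : P.LiesOver (Ideal.span {(z.natAbs : ℤ)}) := ⟨hspan.symm⟩
  have hN := Ideal.absNorm_eq_pow_inertiaDeg' P hprime
  refine ⟨z.natAbs, hprime, ?_, hspan, fun q hq hdvd => ?_⟩
  · rw [hN]
    refine dvd_pow_self _ fun h0 => ?_
    rw [h0, pow_zero, Ideal.absNorm_eq_one_iff] at hN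
    exact hP.ne_top hN
  · rw [hN] at hdvd
    exact (Nat.prime_dvd_prime_iff_eq hq hprime).1 (hq.dvd_of_dvd_pow hdvd)

section

variable {K : Type*} [Field K] [NumberField K]

open Classical in
/-- The norm of the product of those ideals in the multiset `s` that carry the label `j`. It is used
with `s` the multiset of prime factors of an ideal. -/
noncomputable def labelNorm (l : Ideal (𝓞 K) → Fin 4) (s : Multiset (Ideal (𝓞 K))) (j : Fin 4) :
    ℕ := Ideal.absNorm (s.filter (fun P => l P = j)).prod

lemma prod_labelNorm (l : Ideal (𝓞 K) → Fin 4) (s : Multiset (Ideal (𝓞 K))) :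
    ∏ j, labelNorm l s j = Ideal.absNorm s.prod := by
  classical
  induction s using Multiset.induction_on with
  | empty => simp [labelNorm]
  | cons P s ih =>
    have : ∀ j, labelNorm l (P ::ₘ s) j =
        (if l P = j then Ideal.absNorm P else 1) * labelNorm l s j := by
      intro j
      unfold labelNorm
      rw [Multiset.filter_cons]
      split_ifs <;> simp
    simp_rw [this, prod_mul_distrib, ih]
    simp

/-- Among the ideals of `s` labelled `l P`, only `P` itself lies over `p`; so the multiplicity of `P`
in `s` can be read off from the `p`-adic valuation of the labelled norm. -/
lemma labelNorm_factorization {l : Ideal (𝓞 K) → Fin 4}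
    (hl : ∀ P Q : Ideal (𝓞 K), P.IsPrime → Q.IsPrime → P ≠ ⊥ →
      P.under ℤ = Q.under ℤ → l P = l Q → P = Q) (P : Ideal (𝓞 K)) (hP : P.IsPrime) (hP0 : P ≠ ⊥)
    {p : ℕ} (hp : p.Prime) (hpP : P.under ℤ = Ideal.span {(p : ℤ)})
    (s : Multiset (Ideal (𝓞 K))) [DecidableEq (Ideal (𝓞 K))]
    (hs : ∀ Q ∈ s, Q.IsPrime ∧ Q ≠ ⊥) :
    (labelNorm l s (l P)).factorization p = s.count P * (Ideal.absNorm P).factorization p := by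
  classical
  induction s using Multiset.induction_on with
  | empty => simp [labelNorm]
  | cons Q s ih =>
    have ih := ih fun R hR => hs R (Multiset.mem_cons_of_mem hR)
    obtain ⟨hQ, hQ0⟩ := hs Q (Multiset.mem_cons_self Q s)
    by_cases hlab : l Q = l P
    · have h1 : labelNorm l (Q ::ₘ s) (l P) = Ideal.absNorm Q * labelNorm l s (l P) := by
        unfold labelNorm
        rw [Multiset.filter_cons_of_pos (p := fun R => l R = l P) s hlab, Multiset.prod_cons, map_mul]
      have hne : labelNorm l s (l P) ≠ 0 := by
        unfold labelNorm
        rw [Ne, Ideal.absNorm_eq_zero_iff, ← Submodule.zero_eq_bot, Multiset.prod_eq_zero_iff]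
        intro h0
        exact (hs 0 (Multiset.mem_cons_of_mem (Multiset.mem_of_mem_filter h0))).2 rfl
      have hQne : Ideal.absNorm Q ≠ 0 := by rwa [Ne, Ideal.absNorm_eq_zero_iff]
      rw [h1, Nat.factorization_mul hQne hne, Finsupp.add_apply, ih]
      by_cases hQP : P = Q
      · subst hQP
        rw [Multiset.count_cons_self]; ring
      · rw [Multiset.count_cons_of_ne hQP]
        have : (Ideal.absNorm Q).factorization p = 0 := by
          refine Nat.factorization_eq_zero_of_not_dvd fun hdvd => hQP ?_
          obtain ⟨q, hq, -, hqQ, huniq⟩ := exists_prime_below K Q hQ hQ0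
          rw [huniq p hp hdvd] at hpP
          exact hl P Q hP hQ hP0 (hpP.trans hqQ.symm) hlab.symm
        rw [this, zero_add]
    · have h1 : labelNorm l (Q ::ₘ s) (l P) = labelNorm l s (l P) := by
        unfold labelNorm
        rw [Multiset.filter_cons_of_neg (p := fun R => l R = l P) s hlab]
      rw [h1, ih, Multiset.count_cons_of_ne (fun h => hlab (by rw [h]))]

lemma isPrime_of_mem_normalizedFactors {I P : Ideal (𝓞 K)} (h : P ∈ normalizedFactors I) :
    P.IsPrime ∧ P ≠ ⊥ := by
  have := prime_of_normalized_factor P h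
  exact ⟨Ideal.isPrime_of_prime this, this.ne_zero⟩

/-- The labelled norms of an ideal determine it. -/
lemma labelNorm_injOn {l : Ideal (𝓞 K) → Fin 4}
    (hl : ∀ P Q : Ideal (𝓞 K), P.IsPrime → Q.IsPrime → P ≠ ⊥ →
      P.under ℤ = Q.under ℤ → l P = l Q → P = Q) {I J : Ideal (𝓞 K)} (hI : I ≠ ⊥) (hJ : J ≠ ⊥)
    (h : ∀ j, labelNorm l (normalizedFactors I) j = labelNorm l (normalizedFactors J) j) :
    I = J := by
  classical
  have hcount : ∀ P : Ideal (𝓞 K), P.IsPrime → P ≠ ⊥ →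
      (normalizedFactors I).count P = (normalizedFactors J).count P := by
    intro P hP hP0
    obtain ⟨p, hp, hdvd, hpP, -⟩ := exists_prime_below K P hP hP0
    have h1 := labelNorm_factorization hl P hP hP0 hp hpP (normalizedFactors I)
      fun Q hQ => isPrime_of_mem_normalizedFactors hQ
    have h2 := labelNorm_factorization hl P hP hP0 hp hpP (normalizedFactors J)
      fun Q hQ => isPrime_of_mem_normalizedFactors hQ
    rw [h, h2] at h1
    have hpos : 0 < (Ideal.absNorm P).factorization p :=
      hp.factorization_pos_of_dvd (by rwa [Ne, Ideal.absNorm_eq_zero_iff]) hdvd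
    exact (Nat.eq_of_mul_eq_mul_right hpos h1).symm
  have heq : normalizedFactors I = normalizedFactors J := by
    ext P
    by_cases hP : P.IsPrime ∧ P ≠ ⊥
    · exact hcount P hP.1 hP.2
    · rw [Multiset.count_eq_zero_of_notMem fun hm => hP (isPrime_of_mem_normalizedFactors hm),
        Multiset.count_eq_zero_of_notMem fun hm => hP (isPrime_of_mem_normalizedFactors hm)]
  rw [← Ideal.prod_normalizedFactors_eq_self hI, heq, Ideal.prod_normalizedFactors_eq_self hJ]

/-- The number of ideals of norm `n` is at most the number of factorizations `n = abcd` into four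
positive integers, in the form of an inequality of weighted sums. -/
lemma sum_ideals_le (hdim : Module.finrank ℚ K = 4) (s : Finset (Ideal (𝓞 K))) (N : ℕ)
    (hs : ∀ I ∈ s, I ≠ ⊥ ∧ Ideal.absNorm I ≤ N) (g : ℕ → ℝ) (hg : ∀ n, 0 ≤ g n) :
    ∑ I ∈ s, g (Ideal.absNorm I) ≤
      ∑ a ∈ Icc 1 N, ∑ b ∈ Icc 1 N, ∑ c ∈ Icc 1 N, ∑ d ∈ Icc 1 N, g (a * b * c * d) := by
  classical
  obtain ⟨l, hl⟩ := exists_primes_label K hdim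
  let φ : Ideal (𝓞 K) → ℕ × ℕ × ℕ × ℕ := fun I =>
    (labelNorm l (normalizedFactors I) 0, labelNorm l (normalizedFactors I) 1,
      labelNorm l (normalizedFactors I) 2, labelNorm l (normalizedFactors I) 3)
  have hprod : ∀ I : Ideal (𝓞 K), I ≠ ⊥ →
      ∏ j, labelNorm l (normalizedFactors I) j = Ideal.absNorm I := fun I hI => by
    rw [prod_labelNorm, Ideal.prod_normalizedFactors_eq_self hI]
  have hmem : ∀ I ∈ s, ∀ j, labelNorm l (normalizedFactors I) j ∈ Icc 1 N := by
    intro I hI j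
    have hpos : 0 < Ideal.absNorm I := Nat.pos_of_ne_zero (by
      rw [Ne, Ideal.absNorm_eq_zero_iff]; exact (hs I hI).1)
    have hdvd : labelNorm l (normalizedFactors I) j ∣ Ideal.absNorm I := by
      rw [← hprod I (hs I hI).1]
      exact dvd_prod_of_mem _ (mem_univ j)
    rw [mem_Icc]
    exact ⟨Nat.pos_of_dvd_of_pos hdvd hpos, (Nat.le_of_dvd hpos hdvd).trans (hs I hI).2⟩
  have hinj : Set.InjOn φ s := by
    intro I hI J hJ h
    simp only [φ, Prod.mk.injEq] at h
    refine labelNorm_injOn hl (hs I hI).1 (hs J hJ).1 fun j => ?_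
    fin_cases j
    exacts [h.1, h.2.1, h.2.2.1, h.2.2.2]
  simp_rw [← sum_product']
  calc ∑ I ∈ s, g (Ideal.absNorm I)
      = ∑ I ∈ s, (fun x : ℕ × ℕ × ℕ × ℕ => g (x.1 * x.2.1 * x.2.2.1 * x.2.2.2)) (φ I) := by
        refine sum_congr rfl fun I hI => ?_
        rw [← hprod I (hs I hI).1, Fin.prod_univ_four]
    _ = ∑ x ∈ s.image φ, g (x.1 * x.2.1 * x.2.2.1 * x.2.2.2) := by
        rw [sum_image hinj]
    _ ≤ _ := by
        refine sum_le_sum_of_subset_of_nonneg ?_ fun _ _ _ => hg _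
        intro x hx
        obtain ⟨I, hI, rfl⟩ := mem_image.1 hx
        simp only [mem_product]
        exact ⟨hmem I hI 0, hmem I hI 1, hmem I hI 2, hmem I hI 3⟩

end

/-! ### Areas of triangles -/

lemma volume_triangle_prod (a b c : ℝ) (h : 0 ≤ c - (a + b)) :
    volume {p : ℝ × ℝ | a < p.1 ∧ b < p.2 ∧ p.1 + p.2 < c} =
      ENNReal.ofReal ((c - (a + b)) ^ 2 / 2) := by
  have hset : {p : ℝ × ℝ | a < p.1 ∧ b < p.2 ∧ p.1 + p.2 < c} =
      regionBetween (fun _ => b) (fun x => c - x) (Set.Ioc a (c - b)) := by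
    ext p
    simp only [regionBetween, Set.mem_ofPred_eq, Set.mem_Ioc, Set.mem_Ioo]
    constructor
    · rintro ⟨h1, h2, h3⟩
      exact ⟨⟨h1, by linarith⟩, h2, by linarith⟩
    · rintro ⟨⟨h1, h2⟩, h3, h4⟩
      exact ⟨h1, h3, by linarith⟩
  rw [hset, Measure.volume_eq_prod, volume_regionBetween_eq_integral
    (integrableOn_const (by simp)) ?_ measurableSet_Ioc]
  · rw [← intervalIntegral.integral_of_le (by linarith)]
    congr 1
    have : ∀ x, HasDerivAt (fun x : ℝ => (c - b) * x - x ^ 2 / 2)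
        (((fun x : ℝ => c - x) - fun _ : ℝ => b) x) x := by
      intro x
      refine HasDerivAt.congr_deriv
        (((hasDerivAt_id x).const_mul (c - b)).sub (((hasDerivAt_id x).pow 2).div_const 2)) ?_
      simp only [Pi.sub_apply, id]
      ring
    rw [intervalIntegral.integral_eq_sub_of_hasDerivAt (fun x _ => this x)
      (by apply Continuous.intervalIntegrable; fun_prop)]
    ring
  · intro x hx
    have := hx.2
    change b ≤ c - x
    linarith
  · exact (Continuous.integrableOn_Ioc (by fun_prop))

lemma volume_triangle {ι : Type*} [Fintype ι] (hι : Fintype.card ι = 2) (a : ι → ℝ) (c : ℝ)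
    (h : 0 ≤ c - ∑ i, a i) :
    volume {y : ι → ℝ | (∀ i, a i < y i) ∧ ∑ i, y i < c} =
      ENNReal.ofReal ((c - ∑ i, a i) ^ 2 / 2) := by
  classical
  let e : Fin 2 ≃ ι := (Fintype.equivFinOfCardEq hι).symm
  have hsum : ∀ y : ι → ℝ, ∑ i, y i = y (e 0) + y (e 1) := fun y => by
    rw [← e.sum_comp, Fin.sum_univ_two]
  have hp := (volume_preserving_finTwoArrow ℝ).symm.trans
    (volume_measurePreserving_piCongrLeft (fun _ : ι => ℝ) e)
  rw [hsum] at h ⊢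
  rw [← volume_triangle_prod _ _ _ h, ← hp.measure_preimage_equiv]
  congr 1
  ext p
  set q := ((MeasurableEquiv.finTwoArrow (α := ℝ)).symm.trans
    (MeasurableEquiv.piCongrLeft (fun _ : ι => ℝ) e)) p with hq
  have happly : ∀ i, q (e i) = ![p.1, p.2] i := by
    intro i
    have : q (e i) = (MeasurableEquiv.finTwoArrow (α := ℝ)).symm p i :=
      Equiv.piCongrLeft_apply_apply (P := fun _ : ι => ℝ) e _ i
    rw [this]
    fin_cases i <;> simp [MeasurableEquiv.finTwoArrow]
  have h0 : q (e 0) = p.1 := happly 0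
  have h1 : q (e 1) = p.2 := happly 1
  have hall : (∀ i, a i < q i) ↔ a (e 0) < q (e 0) ∧ a (e 1) < q (e 1) := by
    rw [← e.forall_congr_right, Fin.forall_fin_two]
  simp only [Set.mem_preimage, Set.mem_ofPred_eq]
  rw [← hq, hall, hsum, h0, h1, and_assoc]

/-! ### Covering the logarithmic space by triangles -/

section Cover

variable {K : Type*} [Field K] [NumberField K]

open scoped Classical in
/-- For three infinite places, an open triangle in the logarithmic space: the points `y` such that,
on completing `y` by the coordinate at the distinguished place `w₀` that makes the total sum equal
to `log X`, every coordinate at a place `w` exceeds `mult w * log (w α)`. -/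
def coverSet (X : ℝ) (α : 𝓞 K) : Set (logSpace K) :=
  {y : logSpace K | (∀ w : {w : InfinitePlace K // w ≠ w₀}, mult w.1 * Real.log (w.1 α) < y w) ∧
    ∑ w, y w < Real.log X - mult (w₀ : InfinitePlace K) * Real.log (w₀ (α : K))}

/-- Minkowski's convex body theorem: a point `y`, completed to a point with coordinate sum `log X`,
prescribes a box whose volume exceeds the Minkowski bound, and a nonzero integer `α` of the box is one
with `y ∈ coverSet X α`. -/
lemma exists_mem_coverSet {X : ℝ} (hX : 0 < X)
    (hmink : minkowskiBound K 1 < convexBodyLTFactor K * ENNReal.ofReal X) (y : logSpace K) :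
    ∃ α : 𝓞 K, α ≠ 0 ∧ y ∈ coverSet X α := by
  classical
  let z : InfinitePlace K → ℝ := fun w =>
    if h : w ≠ w₀ then y ⟨w, h⟩ else Real.log X - ∑ w, y w
  let f : InfinitePlace K → ℝ≥0 := fun w =>
    ⟨Real.exp (z w / mult w), (Real.exp_pos _).le⟩
  have hz : ∑ w, z w = Real.log X := by
    rw [Fintype.sum_eq_add_sum_subtype_ne _ w₀]
    have : ∀ w : {w : InfinitePlace K // w ≠ w₀}, z w.1 = y w := fun w => by
      simp only [z, dif_pos w.2, Subtype.coe_eta]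
    simp_rw [this]
    simp [z]
  have hm : ∀ w : InfinitePlace K, (mult w : ℝ) ≠ 0 := fun w => mult_coe_ne_zero
  have hprod : ((∏ w, f w ^ mult w : ℝ≥0) : ℝ) = X := by
    rw [NNReal.coe_prod]
    have : ∀ w, ((f w ^ mult w : ℝ≥0) : ℝ) = Real.exp (z w) := fun w => by
      rw [NNReal.coe_pow]
      change Real.exp (z w / mult w) ^ mult w = _
      rw [← Real.exp_nat_mul, mul_div_cancel₀ _ (hm w)]
    simp_rw [this]
    rw [← Real.exp_sum, hz, Real.exp_log hX]
  have hvol : minkowskiBound K ↑1 < volume (convexBodyLT K f) := by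
    rw [convexBodyLT_volume]
    convert hmink using 2
    rw [ENNReal.ofReal, ← hprod, Real.toNNReal_coe]
  obtain ⟨α, hα, hlt⟩ := exists_ne_zero_mem_ringOfIntegers_lt K hvol
  have hlog : ∀ w : InfinitePlace K, mult w * Real.log (w (α : K)) < z w := by
    intro w
    have hpos : 0 < w (α : K) := pos_iff.2 (RingOfIntegers.coe_ne_zero_iff.2 hα)
    have h1 : Real.log (w (α : K)) < z w / mult w := by
      rw [Real.log_lt_iff_lt_exp hpos]
      exact hlt w
    rwa [lt_div_iff₀' (by positivity [hm w])] at h1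
  refine ⟨α, hα, fun w => ?_, ?_⟩
  · have := hlog w.1
    simpa only [z, dif_pos w.2] using this
  · have := hlog w₀
    simp only [z, ne_eq, not_true_eq_false, dite_false] at this
    linarith

/-- Multiplying `α` by a unit translates the set `coverSet X α` by the logarithmic embedding of the
unit. -/
lemma mem_coverSet_unit_mul {X : ℝ} {α : 𝓞 K} (hα : α ≠ 0) (u : (𝓞 K)ˣ) {y : logSpace K}
    (hy : y ∈ coverSet X (α * (u : 𝓞 K))) :
    -logEmbedding K (Additive.ofMul u) + y ∈ coverSet X α := by
  classical
  have hlog : ∀ w : InfinitePlace K,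
      Real.log (w ((α * (u : 𝓞 K) : 𝓞 K) : K)) = Real.log (w (α : K)) + Real.log (w (u : K)) := by
    intro w
    have hpos : 0 < w (α : K) := pos_iff.2 (RingOfIntegers.coe_ne_zero_iff.2 hα)
    rw [show ((α * (u : 𝓞 K) : 𝓞 K) : K) = (α : K) * (u : K) from map_mul _ _ _, map_mul,
      Real.log_mul hpos.ne' (pos_at_place u w).ne']
  obtain ⟨h1, h2⟩ := hy
  refine ⟨fun w => ?_, ?_⟩
  · have := h1 w
    rw [hlog, mul_add] at this
    rw [Pi.add_apply, Pi.neg_apply, logEmbedding_component]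
    linarith
  · rw [hlog, mul_add] at h2
    have := sum_logEmbedding_component u
    simp only [Pi.add_apply, Pi.neg_apply, sum_add_distrib, sum_neg_distrib]
    rw [this]
    linarith

lemma sum_mult_log (α : 𝓞 K) (hα : α ≠ 0) :
    ∑ w : InfinitePlace K, mult w * Real.log (w (α : K)) =
      Real.log (Ideal.absNorm (Ideal.span {α})) := by
  have h := prod_eq_abs_norm (α : K)
  have hpos : ∀ w : InfinitePlace K, w (α : K) ≠ 0 := fun w =>
    (pos_iff.2 (RingOfIntegers.coe_ne_zero_iff.2 hα)).ne'
  have h2 := congrArg Real.log h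
  rw [Real.log_prod (fun w _ => pow_ne_zero _ (hpos w))] at h2
  simp_rw [Real.log_pow] at h2
  rw [h2, Ideal.absNorm_span_singleton, ← Algebra.coe_norm_int]
  simp [Nat.cast_natAbs]

open scoped Classical in
lemma volume_coverSet_le (hr : Fintype.card (InfinitePlace K) = 3) {X : ℝ} (hX : 0 < X) {α : 𝓞 K}
    (hα : α ≠ 0) : volume (coverSet X α) ≤
      ENNReal.ofReal (cutoff weight0 (X / Ideal.absNorm (Ideal.span {α}))) := by
  classical
  have hcard : Fintype.card {w : InfinitePlace K // w ≠ w₀} = 2 := by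
    rw [Fintype.card_subtype_compl, hr, Fintype.card_subtype_eq]
  have hNpos : 0 < Ideal.absNorm (Ideal.span {α}) := Nat.pos_of_ne_zero (by simpa using hα)
  have hNpos' : (0 : ℝ) < Ideal.absNorm (Ideal.span {α}) := by exact_mod_cast hNpos
  have hsum := sum_mult_log α hα
  rw [Fintype.sum_eq_add_sum_subtype_ne _ w₀] at hsum
  have hd : Real.log X - mult (w₀ : InfinitePlace K) * Real.log (w₀ (α : K)) -
      ∑ w : {w : InfinitePlace K // w ≠ w₀}, mult w.1 * Real.log (w.1 (α : K)) =
      Real.log (X / Ideal.absNorm (Ideal.span {α})) := by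
    rw [Real.log_div hX.ne' hNpos'.ne', ← hsum]
    ring
  rcases lt_or_ge (X / Ideal.absNorm (Ideal.span {α})) 1 with h1 | h1
  · have : coverSet X α = ∅ := by
      refine Set.eq_empty_of_forall_notMem fun y hy => ?_
      have h2 := Real.log_neg (div_pos hX hNpos') h1
      have h3 : ∑ w : {w : InfinitePlace K // w ≠ w₀}, mult w.1 * Real.log (w.1 (α : K)) ≤
          ∑ w, y w := sum_le_sum fun w _ => (hy.1 w).le
      have h4 := hy.2
      linarith
    rw [this, measure_empty]
    exact zero_le
  · have hv := volume_triangle hcard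
      (fun w : {w : InfinitePlace K // w ≠ w₀} => mult w.1 * Real.log (w.1 (α : K)))
      (Real.log X - mult (w₀ : InfinitePlace K) * Real.log (w₀ (α : K)))
      (by rw [hd]; exact Real.log_nonneg h1)
    rw [hd] at hv
    rw [cutoff, if_pos h1, weight0, ← hv]
    rfl

/-- The sets `coverSet X γ`, with `γ` running over one generator of each nonzero principal ideal of
norm at most `X`, cover a fundamental domain of the unit lattice up to translation, so the sum of
their areas bounds the regulator. -/
lemma regulator_le_sum (hr : Fintype.card (InfinitePlace K) = 3) {X : ℝ} (hX : 0 < X)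
    (hmink : minkowskiBound K 1 < convexBodyLTFactor K * ENNReal.ofReal X)
    (s : Finset (Ideal (𝓞 K)))
    (hs : ∀ I : Ideal (𝓞 K), I ≠ ⊥ → (Ideal.absNorm I : ℝ) ≤ X → I ∈ s) :
    regulator K ≤ ∑ I ∈ s, cutoff weight0 (X / Ideal.absNorm I) := by
  classical
  have hw : ∀ y : ℝ, 0 ≤ cutoff weight0 y :=
    cutoff_nonneg fun y _ => by unfold weight0; positivity
  let b := Module.Free.chooseBasis ℤ (unitLattice K)
  have hF := ZLattice.isAddFundamentalDomain b volume
  set F := ZSpan.fundamentalDomain (b.ofZLatticeBasis ℝ)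
  -- `γ I` generates `I` whenever `I` is principal
  have hgen : ∀ I : Ideal (𝓞 K), ∃ α : 𝓞 K, ∀ β : 𝓞 K,
      I = Ideal.span {β} → I = Ideal.span {α} := by
    intro I
    by_cases h : ∃ β : 𝓞 K, I = Ideal.span {β}
    · exact ⟨h.choose, fun _ _ => h.choose_spec⟩
    · exact ⟨0, fun β hβ => (h ⟨β, hβ⟩).elim⟩
  choose γ hγ using hgen
  let P := s.filter fun I => I ≠ ⊥ ∧ I = Ideal.span {γ I}
  let S : Set (logSpace K) := ⋃ I ∈ P, coverSet X (γ I)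
  have hγ0 : ∀ I ∈ P, γ I ≠ 0 := by
    intro I hI h0
    have := (mem_filter.1 hI).2
    rw [h0, Ideal.span_singleton_zero] at this
    exact this.1 this.2
  have hcover : ∀ y : logSpace K, ∃ g : unitLattice K, y ∈ g +ᵥ S := by
    intro y
    obtain ⟨α, hα, hy⟩ := exists_mem_coverSet hX hmink y
    have hI : Ideal.span {α} = Ideal.span {γ (Ideal.span {α})} := hγ _ α rfl
    obtain ⟨u, hu⟩ := Ideal.span_singleton_eq_span_singleton.1 hI.symm
    have hne : (Ideal.span {α} : Ideal (𝓞 K)) ≠ ⊥ := by simpa using hα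
    have hNle : (Ideal.absNorm (Ideal.span {α}) : ℝ) ≤ X := by
      by_contra hlt
      push Not at hlt
      have h3 : ∑ w : {w : InfinitePlace K // w ≠ w₀}, mult w.1 * Real.log (w.1 (α : K)) ≤
          ∑ w, y w := sum_le_sum fun w _ => (hy.1 w).le
      have h4 := hy.2
      have hsum := sum_mult_log α hα
      rw [Fintype.sum_eq_add_sum_subtype_ne _ w₀] at hsum
      have := Real.log_lt_log hX hlt
      linarith
    have hP : Ideal.span {α} ∈ P := mem_filter.2 ⟨hs _ hne hNle, hne, hI⟩
    refine ⟨⟨logEmbedding K (Additive.ofMul u),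
      Submodule.mem_map.2 ⟨Additive.ofMul u, trivial, rfl⟩⟩, ?_⟩
    rw [Set.mem_vadd_set_iff_neg_vadd_mem]
    refine Set.mem_biUnion hP ?_
    exact mem_coverSet_unit_mul (hγ0 _ hP) u (hu.symm ▸ hy)
  have : Countable (unitLattice K) := inferInstance
  have : VAddInvariantMeasure (unitLattice K) (logSpace K) volume :=
    ⟨fun g t _ => measure_preimage_add volume (g : logSpace K) t⟩
  have hvol : volume F ≤ volume S := by
    have hSF : volume S = ∑' g : unitLattice K, volume ((g +ᵥ S) ∩ F) := hF.measure_eq_tsum S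
    rw [hSF]
    calc volume F ≤ volume (⋃ g : unitLattice K, (g +ᵥ S) ∩ F) := by
          refine measure_mono fun y hy => ?_
          obtain ⟨g, hg⟩ := hcover y
          exact Set.mem_iUnion.2 ⟨g, hg, hy⟩
      _ ≤ _ := measure_iUnion_le _
  have hS : volume S ≤ ENNReal.ofReal (∑ I ∈ P, cutoff weight0 (X / Ideal.absNorm I)) := by
    rw [ENNReal.ofReal_sum_of_nonneg fun I _ => hw _]
    refine (measure_biUnion_finset_le _ _).trans (sum_le_sum fun I hI => ?_)
    have hI' := (mem_filter.1 hI).2.2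
    conv_rhs => rw [hI']
    exact volume_coverSet_le hr hX (hγ0 I hI)
  have hreg : regulator K = volume.real F := by
    rw [← ZLattice.covolume_eq_measure_fundamentalDomain (unitLattice K) volume hF]
    rfl
  rw [hreg]
  refine le_trans ?_ (sum_le_sum_of_subset_of_nonneg (show P ⊆ s from filter_subset _ s) fun _ _ _ => hw _)
  exact ENNReal.toReal_le_of_le_ofReal (sum_nonneg fun _ _ => hw _) (hvol.trans hS)

end Cover

/-! ### Discriminant and signature of a pure quartic field -/

section PureQuartic

variable {K : Type*} [Field K] [NumberField K]

/-- The discriminant of any `ℚ`-basis of algebraic integers is `discr K` times the square of a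
nonzero integer, hence at least as large in absolute value. -/
lemma abs_discr_le_of_isIntegral {ι : Type*} [Fintype ι] [DecidableEq ι] (b : Module.Basis ι ℚ K)
    (hb : ∀ i, IsIntegral ℤ (b i)) : |(discr K : ℚ)| ≤ |Algebra.discr ℚ b| := by
  classical
  let e : ι ≃ Module.Free.ChooseBasisIndex ℤ (𝓞 K) := b.indexEquiv (integralBasis K)
  let c := b.reindex e
  have hc : Algebra.discr ℚ c = Algebra.discr ℚ b := by
    rw [← Algebra.discr_reindex ℚ b e]
    congr 1
    ext i
    simp [c]
  have hcint : ∀ j, IsIntegral ℤ (c j) := fun j => by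
    rw [Module.Basis.reindex_apply]
    exact hb _
  let Q : Matrix (Module.Free.ChooseBasisIndex ℤ (𝓞 K)) (Module.Free.ChooseBasisIndex ℤ (𝓞 K)) ℤ :=
    fun i j => (RingOfIntegers.basis K).repr ⟨c j, hcint j⟩ i
  have hQ : (integralBasis K).toMatrix c = Q.map (Int.castRingHom ℚ) := by
    ext i j
    have := integralBasis_repr_apply K (⟨c j, hcint j⟩ : 𝓞 K) i
    exact this
  have hdet : ((integralBasis K).toMatrix c).det = (Q.det : ℚ) := by
    rw [hQ]
    exact ((Int.castRingHom ℚ).map_det Q).symm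
  have h := Algebra.discr_of_matrix_vecMul (integralBasis K) ((integralBasis K).toMatrix c)
  rw [Module.Basis.toMatrix_map_vecMul, hdet, ← coe_discr] at h
  have hne : Q.det ≠ 0 := by
    intro h0
    rw [h0] at h
    exact Algebra.discr_not_zero_of_basis ℚ c (by simpa using h)
  have h1 : (1 : ℚ) ≤ (Q.det : ℚ) ^ 2 := by
    have : 0 < Q.det ^ 2 := by positivity
    exact_mod_cast this
  rw [← hc, h, abs_mul, abs_of_nonneg (sq_nonneg (Q.det : ℚ))]
  exact le_mul_of_one_le_left (abs_nonneg _) h1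

open Polynomial in
lemma minpoly_gen_eq {m : ℕ} (pb : PowerBasis ℚ K) (hdim : pb.dim = 4)
    (hgen : pb.gen ^ 4 = (m : K)) : minpoly ℚ pb.gen = X ^ 4 - C (m : ℚ) := by
  have hdeg : (minpoly ℚ pb.gen).natDegree = 4 := by rw [pb.natDegree_minpoly, hdim]
  have hdvd : minpoly ℚ pb.gen ∣ X ^ 4 - C (m : ℚ) := minpoly.dvd _ _ (by simp [hgen])
  refine (eq_of_monic_of_dvd_of_natDegree_le (minpoly.monic pb.isIntegral_gen)
    (monic_X_pow_sub_C _ four_ne_zero) hdvd ?_).symm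
  rw [hdeg, natDegree_X_pow_sub_C]

/-- The power basis has discriminant `±N(4θ³) = ±256 m³`, where `θ` is the generator. -/
lemma abs_discr_le {m : ℕ} (pb : PowerBasis ℚ K) (hdim : pb.dim = 4)
    (hgen : pb.gen ^ 4 = (m : K)) : |(discr K : ℝ)| ≤ 256 * (m : ℝ) ^ 3 := by
  have hgint : IsIntegral ℤ pb.gen :=
    IsIntegral.of_pow (n := 4) (by norm_num) (by
      rw [hgen]
      exact_mod_cast isIntegral_algebraMap (R := ℤ) (A := K) (x := (m : ℤ)))
  have h1 := abs_discr_le_of_isIntegral pb.basis fun i =>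
    (pb.basis_eq_pow i).symm ▸ hgint.pow (i : ℕ)
  have hmin := minpoly_gen_eq pb hdim hgen
  have hfr : Module.finrank ℚ K = 4 := by rw [pb.finrank, hdim]
  have hN : Algebra.norm ℚ pb.gen = -(m : ℚ) := by
    rw [Algebra.PowerBasis.norm_gen_eq_coeff_zero_minpoly, hdim, hmin]
    norm_num
  have hder : Polynomial.aeval pb.gen (minpoly ℚ pb.gen).derivative =
      algebraMap ℚ K 4 * pb.gen ^ 3 := by
    rw [hmin]
    norm_num
  rw [Algebra.discr_powerBasis_eq_norm, hder, map_mul, map_pow, Algebra.norm_algebraMap, hfr, hN,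
    abs_mul, abs_pow, abs_neg, abs_one, one_pow, one_mul] at h1
  have h2 : |(4 : ℚ) ^ 4 * (-(m : ℚ)) ^ 3| = 256 * (m : ℚ) ^ 3 := by
    rw [abs_mul, abs_pow (-(m : ℚ)), abs_neg, Nat.abs_cast]
    norm_num
  rw [h2] at h1
  exact_mod_cast h1

/-- The four embeddings send the generator to `±r` and `±ir`, where `r` is the positive real
fourth root of `m`; so there are two real places and one complex one. -/
lemma signature_eq {m : ℕ} (hm : 0 < m) (pb : PowerBasis ℚ K) (hdim : pb.dim = 4)
    (hgen : pb.gen ^ 4 = (m : K)) : nrRealPlaces K = 2 ∧ nrComplexPlaces K = 1 := by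
  classical
  have hmin := minpoly_gen_eq pb hdim hgen
  have hfr : Module.finrank ℚ K = 4 := by rw [pb.finrank, hdim]
  obtain ⟨r, hr0, hr⟩ : ∃ r : ℝ, 0 < r ∧ r ^ 4 = m :=
    ⟨(m : ℝ) ^ ((4 : ℕ) : ℝ)⁻¹, by positivity,
      Real.rpow_inv_natCast_pow (by positivity) (by norm_num)⟩
  have hroot : ∀ z : ℂ, z ^ 4 = m → ∃ φ : K →+* ℂ, φ pb.gen = z := fun z hz =>
    ⟨(pb.lift z (by rw [hmin]; simp [hz])).toRingHom, pb.lift_gen _ _⟩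
  have hrC : (r : ℂ) ^ 4 = m := by exact_mod_cast hr
  have hreal : ∀ y : ℝ, y ^ 4 = m → ∃ φ : K →+* ℂ, φ pb.gen = y ∧ ComplexEmbedding.IsReal φ := by
    intro y hy
    let ψ : K →ₐ[ℚ] ℝ := pb.lift y (by rw [hmin]; simp [hy])
    refine ⟨(algebraMap ℝ ℂ).comp ψ.toRingHom, ?_, ?_⟩
    · change ((ψ pb.gen : ℝ) : ℂ) = y
      rw [pb.lift_gen]
    · ext x
      exact Complex.conj_ofReal _
  obtain ⟨φ₁, h1, hφ₁⟩ := hreal r hr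
  obtain ⟨φ₂, h2, hφ₂⟩ := hreal (-r) (by rw [Even.neg_pow (by decide)]; exact hr)
  obtain ⟨φ₃, h3⟩ := hroot (r * Complex.I) (by rw [mul_pow, Complex.I_pow_four, mul_one, hrC])
  have hR : 1 < nrRealPlaces K := by
    rw [← card_real_embeddings, Fintype.one_lt_card_iff]
    refine ⟨⟨φ₁, hφ₁⟩, ⟨φ₂, hφ₂⟩, fun h => ?_⟩
    have h12 : φ₁ = φ₂ := congrArg Subtype.val h
    rw [h12, h2] at h1
    have : -r = r := by exact_mod_cast h1
    linarith
  have hC : 0 < nrComplexPlaces K := by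
    refine Fintype.card_pos_iff.2 ⟨⟨InfinitePlace.mk φ₃, isComplex_mk_iff.2 fun h => ?_⟩⟩
    have := RingHom.congr_fun h pb.gen
    rw [ComplexEmbedding.conjugate_coe_eq, h3] at this
    have := congrArg Complex.im this
    simp at this
    linarith
  have := card_add_two_mul_card_eq_rank K
  rw [hfr] at this
  omega

/-- With signature `(2, 1)` the condition reads `8 √|d| < 4π X`, and `√|d| ≤ 16 m^{3/2}` makes
`X = 11 m^{3/2}` sufficient. -/
lemma minkowskiBound_lt {m : ℕ} (hm : 0 < m) (pb : PowerBasis ℚ K) (hdim : pb.dim = 4)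
    (hgen : pb.gen ^ 4 = (m : K)) :
    minkowskiBound K 1 <
      convexBodyLTFactor K * ENNReal.ofReal (11 * (m : ℝ) ^ ((3 : ℝ) / 2)) := by
  obtain ⟨hR, hC⟩ := signature_eq hm pb hdim hgen
  have hfr : Module.finrank ℚ K = 4 := by rw [pb.finrank, hdim]
  have hm' : (0 : ℝ) < m := by exact_mod_cast hm
  have hd := abs_discr_le pb hdim hgen
  have hsq : √(256 * (m : ℝ) ^ 3) = 16 * (m : ℝ) ^ ((3 : ℝ) / 2) := by
    rw [Real.sqrt_eq_iff_mul_self_eq (by positivity) (by positivity)]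
    have : (m : ℝ) ^ ((3 : ℝ) / 2) * (m : ℝ) ^ ((3 : ℝ) / 2) = (m : ℝ) ^ 3 := by
      rw [← Real.rpow_add hm', ← Real.rpow_natCast]
      norm_num
    linear_combination (-256 : ℝ) * this
  have hpow : 0 < (m : ℝ) ^ ((3 : ℝ) / 2) := by positivity
  have hle : √|(discr K : ℝ)| ≤ 16 * (m : ℝ) ^ ((3 : ℝ) / 2) := hsq ▸ Real.sqrt_le_sqrt hd
  rw [minkowskiBound, volume_fundamentalDomain_fractionalIdealLatticeBasis,
    Units.val_one, FractionalIdeal.absNorm_one, Rat.cast_one,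
    ENNReal.ofReal_one, one_mul, mixedEmbedding.finrank, volume_fundamentalDomain_latticeBasis,
    hfr, convexBodyLTFactor, hR, hC, pow_one, pow_one]
  have h1 : (2⁻¹ : ℝ≥0∞) * (NNReal.sqrt ‖discr K‖₊ : ℝ≥0∞) * 2 ^ 4 =
      ENNReal.ofReal (8 * √|(discr K : ℝ)|) := by
    have e1 : ((NNReal.sqrt ‖discr K‖₊ : ℝ≥0) : ℝ≥0∞) = ENNReal.ofReal (√|(discr K : ℝ)|) := by
      rw [← ENNReal.ofReal_coe_nnreal]
      simp [Int.norm_eq_abs]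
    have e2 : (2⁻¹ : ℝ≥0∞) = ENNReal.ofReal (2⁻¹) := by
      rw [ENNReal.ofReal_inv_of_pos (by norm_num)]; simp
    have e3 : (2 : ℝ≥0∞) ^ 4 = ENNReal.ofReal (2 ^ 4) := by
      rw [ENNReal.ofReal_pow (by norm_num)]; simp
    rw [e1, e2, e3, ← ENNReal.ofReal_mul (by norm_num), ← ENNReal.ofReal_mul (by positivity)]
    congr 1
    ring
  have h2 : ((2 ^ 2 * NNReal.pi : ℝ≥0) : ℝ≥0∞) = ENNReal.ofReal (4 * Real.pi) := by
    rw [← ENNReal.ofReal_coe_nnreal]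
    congr 1
    push_cast
    norm_num
  rw [h1, h2, ← ENNReal.ofReal_mul (by positivity), ENNReal.ofReal_lt_ofReal_iff (by positivity)]
  -- `8 * 16 = 128 < 4 * 3 * 11`
  nlinarith [Real.pi_gt_three]

end PureQuartic

/-! ### The regulator bound -/

lemma regulator_le_weight4 {K : Type*} [Field K] [NumberField K] {m : ℕ} (hm : 0 < m)
    (pb : PowerBasis ℚ K) (hdim : pb.dim = 4) (hgen : pb.gen ^ 4 = (m : K)) :
    regulator K ≤ cutoff weight4 (11 * (m : ℝ) ^ ((3 : ℝ) / 2)) := by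
  classical
  obtain ⟨hR, hC⟩ := signature_eq hm pb hdim hgen
  have hcard : Fintype.card (InfinitePlace K) = 3 := by
    rw [card_eq_nrRealPlaces_add_nrComplexPlaces, hR, hC]
  have hfr : Module.finrank ℚ K = 4 := by rw [pb.finrank, hdim]
  have hm' : (0 : ℝ) < m := by exact_mod_cast hm
  have hX : 0 < 11 * (m : ℝ) ^ ((3 : ℝ) / 2) := by positivity
  have hmink := minkowskiBound_lt hm pb hdim hgen
  generalize 11 * (m : ℝ) ^ ((3 : ℝ) / 2) = X at *
  let s := (Ideal.finite_setOfPred_absNorm_le (S := 𝓞 K) ⌊X⌋₊).toFinset.filter (· ≠ ⊥)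
  have h1 := regulator_le_sum hcard hX hmink s fun I hI hIX =>
    mem_filter.2 ⟨(Set.Finite.mem_toFinset _).2 (Nat.le_floor hIX), hI⟩
  have h2 := sum_ideals_le hfr s ⌊X⌋₊ (fun I hI => by
    obtain ⟨hI1, hI2⟩ := mem_filter.1 hI
    have hI3 := (Set.Finite.mem_toFinset _).1 hI1
    exact ⟨hI2, hI3⟩) (fun n => cutoff weight0 (X / n))
    fun n => cutoff_nonneg (fun y _ => by unfold weight0; positivity) _
  refine h1.trans (h2.trans (le_trans (le_of_eq ?_) (sum_weight_four hX.le ⌊X⌋₊)))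
  simp only [Nat.cast_mul, div_div]

lemma weight4_lt {m : ℕ} (hm : 2 ≤ m) :
    cutoff weight4 (11 * (m : ℝ) ^ ((3 : ℝ) / 2)) <
      15 * (m : ℝ) ^ ((3 : ℝ) / 2) * (Real.log (8 * m)) ^ 3 := by
  have hm' : (2 : ℝ) ≤ m := by exact_mod_cast hm
  have hm0 : (0 : ℝ) < m := by linarith
  set p := (m : ℝ) ^ ((3 : ℝ) / 2) with hp
  have hp1 : 1 ≤ p := Real.one_le_rpow (by linarith) (by norm_num)
  have hl2 : 2.7 ≤ Real.log (8 * m) := by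
    have h16 : Real.log 16 ≤ Real.log (8 * m) := Real.log_le_log (by norm_num) (by linarith)
    rw [show (16 : ℝ) = 2 ^ 4 by norm_num, Real.log_pow] at h16
    have := Real.log_two_gt_d9
    push_cast at h16
    linarith
  have hL0 : 0 ≤ Real.log (11 * p) := Real.log_nonneg (by linarith)
  -- `11 ≤ 8 ^ (3 / 2)`, compared through squares
  have hL : Real.log (11 * p) ≤ 3 / 2 * Real.log (8 * m) := by
    rw [Real.log_mul (by norm_num) (by positivity), hp, Real.log_rpow hm0,
      Real.log_mul (by norm_num) hm0.ne']
    have h : Real.log (11 ^ 2) ≤ Real.log (8 ^ 3) := Real.log_le_log (by norm_num) (by norm_num)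
    rw [Real.log_pow, Real.log_pow] at h
    push_cast at h
    linarith
  rw [cutoff, if_pos (by linarith), weight4]
  generalize Real.log (11 * p) = L at *
  generalize Real.log (8 * m) = l at *
  have hsq : L ^ 2 ≤ (3 / 2 * l) ^ 2 := pow_le_pow_left₀ hL0 hL 2
  have hcu : L ^ 3 ≤ (3 / 2 * l) ^ 3 := pow_le_pow_left₀ hL0 hL 3
  have hl3 : 2.7 * l ^ 2 ≤ l ^ 3 := by nlinarith [sq_nonneg l]
  have hl0 : 0 < l ^ 3 := by positivity
  have key : 11 * (L ^ 2 / 2 + L ^ 3 / 6) < 15 * l ^ 3 := by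
    nlinarith
  nlinarith

/-- For an integer `m ≥ 2` whose real fourth root has degree `4` over `ℚ`, the
pure quartic field `K = ℚ(m^{1/4})` has regulator satisfying
`R_K < 15·m^{3/2}·(log(8m))³`. -/
theorem stmt_14 (m : ℕ) (hm : 2 ≤ m)
    (hdeg : (minpoly ℚ ((m : ℝ) ^ ((1 : ℝ) / 4))).natDegree = 4)
    (K : IntermediateField ℚ ℝ) (hK : K = ℚ⟮((m : ℝ) ^ ((1 : ℝ) / 4) : ℝ)⟯)
    [NumberField K] :
    NumberField.Units.regulator K < 15 * (m : ℝ) ^ ((3 : ℝ) / 2) * (Real.log (8 * m)) ^ 3 := by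
  subst hK
  have hr : ((m : ℝ) ^ ((1 : ℝ) / 4)) ^ 4 = m := by
    rw [← Real.rpow_natCast, ← Real.rpow_mul (by positivity)]
    norm_num
  have hgint : IsIntegral ℚ ((m : ℝ) ^ ((1 : ℝ) / 4)) := by
    by_contra h
    rw [minpoly.eq_zero h] at hdeg
    simp at hdeg
  have hgen : (adjoin.powerBasis hgint).gen ^ 4 =
      (m : ℚ⟮((m : ℝ) ^ ((1 : ℝ) / 4) : ℝ)⟯) := by
    rw [adjoin.powerBasis_gen]
    apply Subtype.ext
    push_cast
    rw [AdjoinSimple.coe_gen, hr]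
  exact (regulator_le_weight4 (by omega) (adjoin.powerBasis hgint)
    ((adjoin.powerBasis_dim hgint).trans hdeg) hgen).trans_lt (weight4_lt hm)
end

section
/- Let l be a non-zero integer, t ≥ 2 an integer, and a < b positive integers with t·a²(a²+l) = b²(b²+l). Set D = gcd(a, b), x = a/D and y = b/D. Then D²·(y⁴ − t·x⁴) = l·(t·x² − y²); moreover s := l·(t·x² − y²)/D² is a non-zero integer dividing l·t·(t−1). -/
/-!
Substituting `a = D x`, `b = D y` and cancelling `D²` gives `D² s = l (t x² - y²)` with `s = y⁴ - t x⁴`,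
so the quotient in question is the integer `s`. If `s = 0`, then `t x² = y²` and `t x⁴ = y⁴`,
whence `x = y`, contradicting `x < y`. For the divisibility, modulo `s` one has
`l y² ≡ l t x²` and `y⁴ ≡ t x⁴`, so `l t (t - 1) x⁴ ≡ 0` and likewise `l t (t - 1) y⁴ ≡ 0`;
since `x` and `y` are coprime, `s` divides `l t (t - 1)`.
-/

/-- With `D = gcd(a,b)`, `x = a/D`, `y = b/D`, the equation
`t·a²(a²+l) = b²(b²+l)` gives `D²(y⁴ − tx⁴) = l(tx² − y²)`; moreover
`s = l(tx² − y²)/D²` is a non-zero integer dividing `l·t·(t−1)`. -/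
theorem stmt_15 (l t a b : ℤ) (hl : l ≠ 0) (ht : 2 ≤ t) (ha : 0 < a) (hab : a < b)
    (heq : t * (a ^ 2 * (a ^ 2 + l)) = b ^ 2 * (b ^ 2 + l))
    (D x y : ℤ) (hD : D = Int.gcd a b) (hx : x = a / D) (hy : y = b / D) :
    D ^ 2 * (y ^ 4 - t * x ^ 4) = l * (t * x ^ 2 - y ^ 2) ∧
      D ^ 2 ∣ l * (t * x ^ 2 - y ^ 2) ∧
        l * (t * x ^ 2 - y ^ 2) / D ^ 2 ≠ 0 ∧
          l * (t * x ^ 2 - y ^ 2) / D ^ 2 ∣ l * t * (t - 1) := by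
  have hDpos : 0 < D := by
    rw [hD]; exact_mod_cast Int.gcd_pos_of_ne_zero_left b ha.ne'
  have hax : a = D * x := by
    rw [hx, Int.mul_ediv_cancel' (hD ▸ Int.gcd_dvd_left a b)]
  have hby : b = D * y := by
    rw [hy, Int.mul_ediv_cancel' (hD ▸ Int.gcd_dvd_right a b)]
  have hcop : IsCoprime x y := by
    rw [hx, hy, hD]
    exact Int.isCoprime_iff_gcd_eq_one.mpr
      (Int.gcd_div_gcd_div_gcd (Int.gcd_pos_of_ne_zero_left b ha.ne'))
  have hD2 : D ^ 2 ≠ 0 := by positivity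
  have hmain : D ^ 2 * (y ^ 4 - t * x ^ 4) = l * (t * x ^ 2 - y ^ 2) := by
    apply mul_left_cancel₀ hD2
    rw [hax, hby] at heq
    linear_combination -heq
  have hx0 : 0 < x := by
    rw [hax] at ha; exact pos_of_mul_pos_right ha hDpos.le
  have hxy : x < y := by
    rw [hax, hby] at hab; exact lt_of_mul_lt_mul_left hab hDpos.le
  have hdiv : l * (t * x ^ 2 - y ^ 2) / D ^ 2 = y ^ 4 - t * x ^ 4 := by
    rw [← hmain, Int.mul_ediv_cancel_left _ hD2]
  refine ⟨hmain, ⟨_, hmain.symm⟩, ?_, ?_⟩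
  · rw [hdiv]
    intro h0
    have h1 : t * x ^ 2 - y ^ 2 = 0 := by
      rw [h0, mul_zero] at hmain
      exact (mul_eq_zero.mp hmain.symm).resolve_left hl
    -- `t x² = y²` and `t x⁴ = y⁴` together force `y² = x²`.
    have h2 : y ^ 2 * (y ^ 2 - x ^ 2) = 0 := by linear_combination h0 + x ^ 2 * h1
    have hy2 : 0 < y ^ 2 := pow_pos (hx0.trans hxy) 2
    have h3 : 0 < y ^ 2 - x ^ 2 := by nlinarith
    exact (mul_pos hy2 h3).ne' h2
  · rw [hdiv]
    have hX : y ^ 4 - t * x ^ 4 ∣ l * t * (t - 1) * x ^ 4 :=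
      ⟨D ^ 2 * (t * x ^ 2 + y ^ 2) + l, by
        linear_combination -(t * x ^ 2 + y ^ 2) * hmain⟩
    have hY : y ^ 4 - t * x ^ 4 ∣ l * t * (t - 1) * y ^ 4 := by
      have h := dvd_add (dvd_mul_left (y ^ 4 - t * x ^ 4) (l * t * (t - 1))) (hX.mul_left t)
      have e : l * t * (t - 1) * y ^ 4 = l * t * (t - 1) * (y ^ 4 - t * x ^ 4) +
          t * (l * t * (t - 1) * x ^ 4) := by ring
      rwa [e]
    obtain ⟨u, v, huv⟩ : IsCoprime (x ^ 4) (y ^ 4) := hcop.pow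
    have h := dvd_add (hX.mul_left u) (hY.mul_left v)
    have e : l * t * (t - 1) = u * (l * t * (t - 1) * x ^ 4) + v * (l * t * (t - 1) * y ^ 4) := by
      linear_combination -(l * t * (t - 1)) * huv
    rwa [← e] at h
end
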